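/- Let t₀ ∈ ℝ, let k, p ∈ ℕ with k ≥ 2 and p ≥ 2, let R > 0 and ε > 0. Then there exist constants C, T > 0 and a functional 𝓔_k : H^k(𝕋) → ℝ of the form 𝓔_k(u) = ‖u‖²_{H^k(𝕋)} + 𝓕_k(u) such that: for every solution u ∈ C(ℝ; H^k(𝕋)) of the defocusing NLS i∂_t u + ∂_x²u − u|u|^{2p} = 0 with ‖u(t₀)‖_{H¹(𝕋)} ≤ R, one has (i) sup_{t ∈ (t₀−T, t₀+T)} |𝓕_k(u(t))| ≤ C ‖u(t₀)‖_{H^k(𝕋)}^{(2k−4)/(k−1)}, and (ii) 𝓔_k(u(t)) ≤ 𝓔_k(u(t₀)) + C ‖u(t₀)‖_{H^k(𝕋)}^{(2k−4)/(k−1)+ε} for all t ∈ (t₀−T, t₀+T). Moreover, when k is not divisible by 3, (ii) holds with ε = 0. -/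

import Mathlib

open MeasureTheory
open scoped Real BigOperators ENNReal

noncomputable section

/-- `n`-th spatial derivative. -/
def pD (n : ℕ) (f : ℝ → ℂ) : ℝ → ℂ := iteratedDeriv n f

/-- Complex conjugate of the `n`-th spatial derivative. -/
def cD (n : ℕ) (f : ℝ → ℂ) (x : ℝ) : ℂ := (starRingEnd ℂ) (iteratedDeriv n f x)

/-- Integral over one period of the torus `𝕋 = ℝ/2πℤ`. -/
def tInt (f : ℝ → ℂ) : ℂ := ∫ x in (0:ℝ)..(2 * Real.pi), f x

/-- Squared `L²(𝕋)` norm. -/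
def L2sq (f : ℝ → ℂ) : ℝ := ∫ x in (0:ℝ)..(2 * Real.pi), ‖f x‖ ^ 2

/-- Squared `Hᵏ(𝕋)` norm: `‖u‖² = ‖u‖²_{L²} + ‖∂ₓᵏu‖²_{L²}`. -/
def HkSq (k : ℕ) (f : ℝ → ℂ) : ℝ := L2sq f + L2sq (pD k f)

/-- `Hᵏ(𝕋)` norm. -/
def HkNorm (k : ℕ) (f : ℝ → ℂ) : ℝ := Real.sqrt (HkSq k f)

/-- A classical (smooth and `2π`-periodic in space, differentiable in time) solution of the
defocusing NLS `i ∂ₜ u + ∂ₓ² u - u |u|^{2p} = 0` for times in the set `I`. -/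
structure IsNLS (p : ℕ) (I : Set ℝ) (u : ℝ → ℝ → ℂ) : Prop where
  smooth : ∀ t ∈ I, ContDiff ℝ (⊤ : ℕ∞) (u t)
  periodic : ∀ t ∈ I, Function.Periodic (u t) (2 * Real.pi)
  tdiff : ∀ (x : ℝ), ∀ t ∈ I, DifferentiableAt ℝ (fun s => u s x) t
  eqn : ∀ t ∈ I, ∀ x : ℝ,
    Complex.I * deriv (fun s => u s x) t + pD 2 (u t) x
      = u t x * ((‖u t x‖ : ℂ)) ^ (2 * p)

/-! ### Fourier coefficients of smooth periodic functions -/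

/-- Smooth and `2π`-periodic. -/
structure SP (f : ℝ → ℂ) : Prop where
  smooth : ContDiff ℝ (⊤ : ℕ∞) f
  per : Function.Periodic f (2 * Real.pi)

/-- characters -/
def ee (l : ℤ) (x : ℝ) : ℂ := Complex.exp (l * x * Complex.I)

/-- Fourier coefficients -/
def cf (f : ℝ → ℂ) (l : ℤ) : ℂ :=
  (1 / (2 * Real.pi) : ℝ) * ∫ x in (0:ℝ)..(2 * Real.pi), ee (-l) x * f x

lemma ee_norm (l : ℤ) (x : ℝ) : ‖ee l x‖ = 1 := by
  have := Complex.norm_exp_ofReal_mul_I (l * x)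
  unfold ee
  push_cast at this
  exact this

lemma ee_add (l m : ℤ) (x : ℝ) : ee (l + m) x = ee l x * ee m x := by
  unfold ee
  rw [← Complex.exp_add]; congr 1; push_cast; ring

lemma ee_zero (x : ℝ) : ee 0 x = 1 := by simp [ee]

lemma ee_conj (l : ℤ) (x : ℝ) : (starRingEnd ℂ) (ee l x) = ee (-l) x := by
  unfold ee
  rw [← Complex.exp_conj]; congr 1; simp

lemma ee_contDiff (l : ℤ) : ContDiff ℝ (⊤ : ℕ∞) (ee l) := by
  unfold ee
  have : ContDiff ℝ (⊤ : ℕ∞) (fun x : ℝ => (x : ℂ)) := Complex.ofRealCLM.contDiff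
  exact ((contDiff_const.mul this).mul contDiff_const).cexp

lemma ee_cont (l : ℤ) : Continuous (ee l) := (ee_contDiff l).continuous

lemma ee_hasDeriv (l : ℤ) (x : ℝ) : HasDerivAt (ee l) (Complex.I * l * ee l x) x := by
  unfold ee
  have h : HasDerivAt (fun x : ℝ => (l : ℂ) * (x : ℂ) * Complex.I) (l * 1 * Complex.I) x :=
    ((Complex.ofRealCLM.hasDerivAt (x := x)).const_mul (l : ℂ)).mul_const Complex.I
  have h2 := h.cexp
  convert h2 using 1
  ring

lemma ee_per (l : ℤ) : ee l (2 * Real.pi) = 1 := by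
  unfold ee
  rw [Complex.exp_eq_one_iff]
  exact ⟨l, by push_cast; ring⟩

lemma ee_periodic (l : ℤ) : Function.Periodic (ee l) (2 * Real.pi) := by
  intro x
  have : ee l (x + 2 * Real.pi) = ee l x * ee l (2 * Real.pi) := by
    unfold ee
    rw [← Complex.exp_add]; congr 1; push_cast; ring
  rw [this, ee_per, mul_one]

lemma SP.ee (l : ℤ) : SP (ee l) := ⟨ee_contDiff l, ee_periodic l⟩

lemma SP.cont {f : ℝ → ℂ} (h : SP f) : Continuous f := h.smooth.continuous

lemma SP.mul {f g : ℝ → ℂ} (hf : SP f) (hg : SP g) : SP (fun x => f x * g x) :=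
  ⟨hf.smooth.mul hg.smooth, fun x => by simp [hf.per x, hg.per x]⟩

lemma SP.add {f g : ℝ → ℂ} (hf : SP f) (hg : SP g) : SP (fun x => f x + g x) :=
  ⟨hf.smooth.add hg.smooth, fun x => by simp [hf.per x, hg.per x]⟩

lemma SP.const_mul {f : ℝ → ℂ} (hf : SP f) (c : ℂ) : SP (fun x => c * f x) :=
  ⟨contDiff_const.mul hf.smooth, fun x => by simp [hf.per x]⟩

lemma SP.conj {f : ℝ → ℂ} (hf : SP f) : SP (fun x => (starRingEnd ℂ) (f x)) :=
  ⟨Complex.conjCLE.contDiff.comp hf.smooth, fun x => by simp [hf.per x]⟩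

lemma SP.one : SP (fun _ => (1:ℂ)) := ⟨contDiff_const, fun _ => rfl⟩

lemma SP.pow {f : ℝ → ℂ} (hf : SP f) (n : ℕ) : SP (fun x => f x ^ n) :=
  ⟨hf.smooth.pow n, fun x => by simp [hf.per x]⟩

lemma SP.prod {ι : Type*} (s : Finset ι) {f : ι → ℝ → ℂ} (hf : ∀ i, SP (f i)) :
    SP (fun x => ∏ i ∈ s, f i x) :=
  ⟨contDiff_prod (fun i _ => (hf i).smooth), fun x => by
    apply Finset.prod_congr rfl
    intro i _
    exact (hf i).per x⟩

lemma SP.deriv {f : ℝ → ℂ} (hf : SP f) : SP (deriv f) := by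
  refine ⟨?_, ?_⟩
  · have := hf.smooth
    exact (contDiff_infty_iff_deriv.1 this).2
  · intro x
    have : (fun y => f (y + 2 * Real.pi)) = f := funext hf.per
    have h2 := deriv_comp_add_const f (2 * Real.pi) x
    rw [← h2, this]

lemma SP.diff {f : ℝ → ℂ} (hf : SP f) (x : ℝ) : HasDerivAt f (_root_.deriv f x) x :=
  ((hf.smooth.differentiable (by simp)) x).hasDerivAt

lemma SP.iter {f : ℝ → ℂ} (hf : SP f) (n : ℕ) : SP (iteratedDeriv n f) := by
  induction n with
  | zero => simpa using hf
  | succ n ih => rw [iteratedDeriv_succ]; exact ih.deriv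

lemma cf_deriv {f : ℝ → ℂ} (hf : SP f) (l : ℤ) :
    cf (deriv f) l = Complex.I * l * cf f l := by
  unfold cf
  rw [intervalIntegral.integral_mul_deriv_eq_deriv_mul (u := ee (-l)) (v := f)
    (u' := fun x => Complex.I * (-l : ℤ) * ee (-l) x) (v' := deriv f)
    (fun x _ => ee_hasDeriv _ x) (fun x _ => hf.diff x)]
  · have h1 : f (2 * Real.pi) = f 0 := by simpa using hf.per 0
    have h2 : ee (-l) 0 = 1 := by simp [ee]
    rw [ee_per, h1, h2]
    have : ∀ x, Complex.I * ((-l : ℤ) : ℂ) * ee (-l) x * f x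
        = (Complex.I * ((-l : ℤ) : ℂ)) * (ee (-l) x * f x) := fun x => by ring
    simp_rw [this]
    rw [intervalIntegral.integral_const_mul]
    push_cast
    ring
  · exact ((continuous_const.mul (ee_cont _))).intervalIntegrable _ _
  · exact hf.deriv.cont.intervalIntegrable _ _

lemma cf_iter {f : ℝ → ℂ} (hf : SP f) (n : ℕ) (l : ℤ) :
    cf (iteratedDeriv n f) l = (Complex.I * l) ^ n * cf f l := by
  induction n with
  | zero => simp
  | succ n ih => rw [iteratedDeriv_succ, cf_deriv (hf.iter n), ih]; ring

lemma cf_add {f g : ℝ → ℂ} (hf : Continuous f) (hg : Continuous g) (l : ℤ) :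
    cf (fun x => f x + g x) l = cf f l + cf g l := by
  unfold cf
  rw [← mul_add, ← intervalIntegral.integral_add]
  · simp_rw [mul_add]
  · exact ((ee_cont _).mul hf).intervalIntegrable _ _
  · exact ((ee_cont _).mul hg).intervalIntegrable _ _

lemma cf_const_mul (f : ℝ → ℂ) (c : ℂ) (l : ℤ) :
    cf (fun x => c * f x) l = c * cf f l := by
  unfold cf
  have : ∀ x, ee (-l) x * (c * f x) = c * (ee (-l) x * f x) := fun x => by ring
  simp_rw [this]
  rw [intervalIntegral.integral_const_mul]; ring

lemma cf_conj (f : ℝ → ℂ) (l : ℤ) :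
    cf (fun x => (starRingEnd ℂ) (f x)) l = (starRingEnd ℂ) (cf f (-l)) := by
  unfold cf
  rw [map_mul, Complex.conj_ofReal, intervalIntegral.integral_of_le (by positivity),
    intervalIntegral.integral_of_le (by positivity), ← integral_conj]
  simp_rw [map_mul, ee_conj, neg_neg]

lemma cf_bound {f : ℝ → ℂ} {C : ℝ} (hC : ∀ x, ‖f x‖ ≤ C) (l : ℤ) : ‖cf f l‖ ≤ C := by
  unfold cf
  rw [norm_mul]
  have h := intervalIntegral.norm_integral_le_of_norm_le_const (a := 0) (b := 2 * Real.pi)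
    (f := fun x => ee (-l) x * f x) (C := C) (fun x _ => by
      rw [norm_mul, ee_norm, one_mul]; exact hC x)
  have hp := Real.pi_pos
  rw [sub_zero, abs_of_pos (by positivity)] at h
  rw [Complex.norm_real, Real.norm_eq_abs, abs_of_pos (by positivity)]
  calc _ ≤ 1 / (2 * Real.pi) * (C * (2 * Real.pi)) := by gcongr
    _ = C := by field_simp

lemma SP.bdd {f : ℝ → ℂ} (hf : SP f) : ∃ C, 0 ≤ C ∧ ∀ x, ‖f x‖ ≤ C := by
  obtain ⟨C, hC⟩ := (isCompact_Icc (a := (0:ℝ)) (b := 2 * Real.pi)).exists_bound_of_continuousOn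
    hf.cont.continuousOn
  have key : ∀ x, ‖f x‖ ≤ C := by
    intro x
    obtain ⟨y, hy, hxy⟩ := hf.per.exists_mem_Ico₀ (by positivity) x
    rw [hxy]
    exact hC y ⟨hy.1, hy.2.le⟩
  exact ⟨C, (norm_nonneg _).trans (key 0), key⟩

/-- Japanese bracket squared. -/
def jb (l : ℤ) : ℝ := 1 + (l:ℝ) ^ 2

lemma jb_pos (l : ℤ) : 0 < jb l := by unfold jb; positivity
lemma jb_one_le (l : ℤ) : 1 ≤ jb l := by unfold jb; nlinarith [sq_nonneg (l:ℝ)]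

lemma cf_decay {f : ℝ → ℂ} (hf : SP f) (M : ℕ) : ∃ C, 0 ≤ C ∧ ∀ l, jb l ^ M * ‖cf f l‖ ≤ C := by
  induction M generalizing f with
  | zero =>
    obtain ⟨C, h0, hC⟩ := hf.bdd
    exact ⟨C, h0, fun l => by simpa using cf_bound hC l⟩
  | succ M ih =>
    have h2 : SP (fun x => f x + (-1) * iteratedDeriv 2 f x) := hf.add ((hf.iter 2).const_mul _)
    obtain ⟨C, h0, hC⟩ := ih h2
    refine ⟨C, h0, fun l => ?_⟩
    have h3 := hC l
    rw [cf_add hf.cont ((hf.iter 2).const_mul (-1)).cont, cf_const_mul, cf_iter hf] at h3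
    have : cf f l + -1 * ((Complex.I * l) ^ 2 * cf f l) = (jb l : ℂ) * cf f l := by
      unfold jb
      rw [mul_pow, Complex.I_sq]; push_cast; ring
    rw [this, norm_mul, Complex.norm_real, Real.norm_eq_abs, abs_of_pos (jb_pos l)] at h3
    rw [pow_succ]; linarith

lemma jb_summable : Summable (fun l : ℤ => (jb l)⁻¹) := by
  have h := (Real.summable_one_div_int_pow (p := 2)).2 (by norm_num)
  have h0 : Summable (fun l : ℤ => if l = 0 then (1:ℝ) else 0) :=
    (hasSum_ite_eq 0 (1:ℝ)).summable
  refine Summable.of_nonneg_of_le (fun l => (inv_pos.2 (jb_pos l)).le) (fun l => ?_) (h0.add h)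
  unfold jb
  by_cases hl : l = 0
  · simp [hl]
  · have : (0:ℝ) < (l:ℝ) ^ 2 := by positivity
    simp only [hl, if_false, zero_add, one_div]
    gcongr
    linarith

lemma cf_summable_w {f : ℝ → ℂ} (hf : SP f) (M : ℕ) : Summable (fun l => jb l ^ M * ‖cf f l‖) := by
  obtain ⟨C, h0, hC⟩ := cf_decay hf (M + 1)
  refine Summable.of_nonneg_of_le (fun l => by have := jb_pos l; positivity) (fun l => ?_)
    (jb_summable.mul_left C)
  have h1 := hC l
  have h2 := jb_pos l
  rw [← div_eq_mul_inv, le_div_iff₀ h2]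
  rw [pow_succ] at h1
  linarith

lemma cf_summable {f : ℝ → ℂ} (hf : SP f) : Summable (fun l => ‖cf f l‖) := by
  simpa using cf_summable_w hf 0

lemma cf_hasSum {f : ℝ → ℂ} (hf : SP f) (x : ℝ) : HasSum (fun l => cf f l * ee l x) (f x) := by
  have : Fact (0 < 2 * Real.pi) := ⟨Real.two_pi_pos⟩
  let g : C(AddCircle (2 * Real.pi), ℂ) :=
    ⟨hf.per.lift, by
      have : Continuous f := hf.cont
      exact continuous_coinduced_dom.2 this⟩
  have hgc : ∀ y : ℝ, g (y : AddCircle (2 * Real.pi)) = f y := fun y => hf.per.lift_coe y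
  have hfe : ∀ (l : ℤ) (y : ℝ), fourier l (y : AddCircle (2 * Real.pi)) = ee l y := by
    intro l y
    rw [fourier_coe_apply]
    unfold ee
    congr 1
    have : (Real.pi : ℂ) ≠ 0 := by exact_mod_cast Real.pi_ne_zero
    push_cast
    field_simp
  have hco : ∀ l, fourierCoeff g l = cf f l := by
    intro l
    rw [fourierCoeff_eq_intervalIntegral g l 0]
    unfold cf
    rw [zero_add, Complex.real_smul]
    congr 1
    apply intervalIntegral.integral_congr
    intro y _
    simp only [smul_eq_mul]
    rw [hgc, hfe]
  have hs : Summable (fourierCoeff g) := by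
    have : fourierCoeff g = cf f := funext hco
    rw [this]
    exact (cf_summable hf).of_norm
  have := has_pointwise_sum_fourier_series_of_summable hs (x : AddCircle (2 * Real.pi))
  rw [hgc] at this
  simpa only [hco, hfe, smul_eq_mul] using this

lemma cf_ee_mul (g : ℝ → ℂ) (n l : ℤ) : cf (fun x => ee n x * g x) l = cf g (l - n) := by
  unfold cf
  congr 1
  apply intervalIntegral.integral_congr
  intro x _
  simp only
  rw [← mul_assoc, ← ee_add]
  congr 2
  ring

lemma cf_mul {f g : ℝ → ℂ} (hf : SP f) (hg : SP g) (l : ℤ) :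
    HasSum (fun n => cf f n * cf g (l - n)) (cf (fun x => f x * g x) l) := by
  obtain ⟨C, h0, hC⟩ := hg.bdd
  have key := intervalIntegral.hasSum_integral_of_dominated_convergence (μ := volume)
    (a := 0) (b := 2 * Real.pi)
    (F := fun (n : ℤ) x => ee (-l) x * (cf f n * ee n x * g x))
    (f := fun x => ee (-l) x * (f x * g x))
    (bound := fun n _ => ‖cf f n‖ * C) (fun n => ?_) (fun n => ?_) ?_ ?_ ?_
  · have k2 := key.mul_left (((1 / (2 * Real.pi) : ℝ) : ℂ))
    have e : (fun n => cf f n * cf g (l - n)) = fun n : ℤ => ((1 / (2 * Real.pi) : ℝ) : ℂ) *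
        ∫ x in (0:ℝ)..(2 * Real.pi), ee (-l) x * (cf f n * ee n x * g x) := by
      funext n
      rw [← cf_ee_mul, ← cf_const_mul]
      unfold cf
      simp_rw [mul_assoc]
    rw [e]
    exact k2
  · exact ((ee_cont _).mul ((continuous_const.mul (ee_cont n)).mul hg.cont)).aestronglyMeasurable
  · refine Filter.Eventually.of_forall fun x _ => ?_
    rw [norm_mul, ee_norm, norm_mul, norm_mul, ee_norm, one_mul, mul_one]
    gcongr
    exact hC x
  · exact Filter.Eventually.of_forall fun x _ => (cf_summable hf).mul_right C
  · simp
  · refine Filter.Eventually.of_forall fun x _ => ?_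
    exact ((cf_hasSum hf x).mul_right (g x)).mul_left _


lemma cf_one (l : ℤ) : cf (fun _ => (1:ℂ)) l = if l = 0 then 1 else 0 := by
  by_cases hl : l = 0
  · subst hl
    have : (Real.pi : ℂ) ≠ 0 := by exact_mod_cast Real.pi_ne_zero
    simp [cf, ee_zero]
    field_simp
  · have h := cf_deriv SP.one l
    have h0 : cf (deriv (fun _ : ℝ => (1:ℂ))) l = 0 := by simp [cf]
    rw [h0] at h
    have hl' : (l : ℂ) ≠ 0 := by exact_mod_cast hl
    have := mul_eq_zero.1 h.symm
    rcases this with h1 | h1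
    · exact absurd h1 (mul_ne_zero Complex.I_ne_zero hl')
    · simp [hl, h1]

lemma summable_pi_prod {m : ℕ} (a : Fin m → ℤ → ℝ) (h0 : ∀ i l, 0 ≤ a i l)
    (hs : ∀ i, Summable (a i)) : Summable (fun n : Fin m → ℤ => ∏ i, a i (n i)) := by
  induction m with
  | zero => exact (hasSum_unique _).summable
  | succ m ih =>
    have h := ih (fun i => a i.succ) (fun i => h0 _) (fun i => hs _)
    have h2 := (hs 0).mul_of_nonneg h (h0 0) (fun n => Finset.prod_nonneg fun i _ => h0 _ _)
    rw [← (Fin.consEquiv (fun _ => ℤ)).summable_iff]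
    refine h2.congr ?_
    rintro ⟨n, n'⟩
    simp [Fin.prod_univ_succ, Fin.consEquiv]

lemma cf_prod_fin {m : ℕ} (f : Fin m → ℝ → ℂ) (hf : ∀ i, SP (f i)) (l : ℤ) :
    HasSum (fun n : Fin m → ℤ => if ∑ i, n i = l then ∏ i, cf (f i) (n i) else 0)
      (cf (fun x => ∏ i, f i x) l) := by
  induction m generalizing l with
  | zero =>
    have := hasSum_unique (fun n : Fin 0 → ℤ =>
      if ∑ i, n i = l then ∏ i, cf (f i) (n i) else 0)
    convert this using 1
    simp [cf_one, eq_comm]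
  | succ m ih =>
    have hsum : Summable (fun n : Fin (m+1) → ℤ =>
        if ∑ i, n i = l then ∏ i, cf (f i) (n i) else 0) := by
      refine Summable.of_norm_bounded (summable_pi_prod (fun i l => ‖cf (f i) l‖)
        (fun i l => norm_nonneg _) (fun i => cf_summable (hf i))) (fun n => ?_)
      split_ifs
      · rw [norm_prod]
      · rw [norm_zero]; exact Finset.prod_nonneg fun i _ => norm_nonneg _
    have hsum2 := hsum
    rw [← (Fin.consEquiv (fun _ => ℤ)).summable_iff] at hsum2
    rw [← (Fin.consEquiv (fun _ => ℤ)).hasSum_iff]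
    have hm := cf_mul (hf 0) (SP.prod Finset.univ (f := fun i : Fin m => f i.succ)
      (fun i => hf i.succ)) l
    have e : (fun x => ∏ i, f i x) = fun x => f 0 x * ∏ i : Fin m, f i.succ x := by
      funext x; rw [Fin.prod_univ_succ]
    rw [e]
    have h3 : ∀ n0 : ℤ, HasSum (fun n' : Fin m → ℤ =>
        ((fun n : Fin (m+1) → ℤ => if ∑ i, n i = l then ∏ i, cf (f i) (n i) else 0) ∘
          (Fin.consEquiv (fun _ => ℤ))) (n0, n'))
        (cf (f 0) n0 * cf (fun x => ∏ i : Fin m, f i.succ x) (l - n0)) := by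
      intro n0
      have := (ih (fun i => f i.succ) (fun i => hf _) (l - n0)).mul_left (cf (f 0) n0)
      refine this.congr_fun fun n' => ?_
      simp only [Function.comp, Fin.consEquiv, Equiv.coe_fn_mk, Fin.sum_univ_succ,
        Fin.prod_univ_succ, Fin.cons_zero, Fin.cons_succ, mul_ite, mul_zero]
      have hiff : (n0 + ∑ i, n' i = l) ↔ (∑ i, n' i = l - n0) := by
        constructor <;> intro h <;> linarith
      simp only [hiff]
    have h4 := hsum2.hasSum
    have h5 := h4.prod_fiberwise h3
    rw [h5.unique hm] at h4
    exact h4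

lemma summable_pi_prod' {ι : Type*} [Fintype ι] (a : ι → ℤ → ℝ) (h0 : ∀ i l, 0 ≤ a i l)
    (hs : ∀ i, Summable (a i)) : Summable (fun n : ι → ℤ => ∏ i, a i (n i)) := by
  let e := Fintype.equivFin ι
  rw [← (e.symm.arrowCongr (Equiv.refl ℤ)).summable_iff]
  refine (summable_pi_prod (fun i => a (e.symm i)) (fun i => h0 _) (fun i => hs _)).congr ?_
  intro n
  simp only [Function.comp, Equiv.arrowCongr_apply, Equiv.symm_symm,
    Equiv.coe_refl, id]
  rw [← e.symm.prod_comp]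
  simp

lemma cf_prod {ι : Type*} [Fintype ι] (f : ι → ℝ → ℂ) (hf : ∀ i, SP (f i)) (l : ℤ) :
    HasSum (fun n : ι → ℤ => if ∑ i, n i = l then ∏ i, cf (f i) (n i) else 0)
      (cf (fun x => ∏ i, f i x) l) := by
  let e := Fintype.equivFin ι
  rw [← (e.symm.arrowCongr (Equiv.refl ℤ)).hasSum_iff]
  have h := cf_prod_fin (fun i => f (e.symm i)) (fun i => hf _) l
  have e1 : (fun x => ∏ i, f i x) = fun x => ∏ i, f (e.symm i) x := by
    funext x; rw [← e.symm.prod_comp]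
  rw [e1]
  convert h using 2 with n
  simp only [Function.comp, Equiv.arrowCongr_apply, Equiv.symm_symm,
    Equiv.coe_refl, id]
  rw [← e.symm.prod_comp, ← e.symm.sum_comp]
  simp

lemma parseval {f g : ℝ → ℂ} (hf : SP f) (hg : SP g) :
    HasSum (fun n => cf f n * (starRingEnd ℂ) (cf g n))
      (cf (fun x => f x * (starRingEnd ℂ) (g x)) 0) := by
  have := cf_mul hf hg.conj 0
  simpa only [cf_conj, zero_sub, neg_neg] using this

lemma cf_ofReal_zero (f : ℝ → ℝ) :
    cf (fun x => (f x : ℂ)) 0 = ((1 / (2 * Real.pi) * ∫ x in (0:ℝ)..(2 * Real.pi), f x : ℝ) : ℂ) := by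
  unfold cf
  simp only [neg_zero, ee_zero, one_mul]
  rw [intervalIntegral.integral_ofReal]
  push_cast; ring

lemma L2_hasSum {f : ℝ → ℂ} (hf : SP f) :
    HasSum (fun n => 2 * Real.pi * ‖cf f n‖ ^ 2) (L2sq f) := by
  have h := parseval hf hf
  have e : (fun x => f x * (starRingEnd ℂ) (f x)) = fun x => ((‖f x‖ ^ 2 : ℝ) : ℂ) := by
    funext x; rw [Complex.mul_conj, Complex.normSq_eq_norm_sq]
  rw [e, cf_ofReal_zero] at h
  have e2 : (fun n => cf f n * (starRingEnd ℂ) (cf f n)) = fun n => ((‖cf f n‖ ^ 2 : ℝ) : ℂ) := by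
    funext x; rw [Complex.mul_conj, Complex.normSq_eq_norm_sq]
  rw [e2] at h
  have h2 := (Complex.hasSum_ofReal.1 h).mul_left (2 * Real.pi)
  have e3 : L2sq f = 2 * Real.pi *
      (1 / (2 * Real.pi) * ∫ x in (0:ℝ)..(2 * Real.pi), ‖f x‖ ^ 2) := by
    unfold L2sq
    have := Real.pi_pos
    field_simp
  rw [e3]
  exact h2

lemma HkSq_hasSum {f : ℝ → ℂ} (hf : SP f) (k : ℕ) :
    HasSum (fun n : ℤ => 2 * Real.pi * ((1 + (n:ℝ) ^ (2 * k)) * ‖cf f n‖ ^ 2)) (HkSq k f) := by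
  have h := (L2_hasSum hf).add (L2_hasSum (hf.iter k))
  change HasSum _ (L2sq f + L2sq (iteratedDeriv k f))
  convert h using 2 with n
  rw [cf_iter hf, norm_mul, norm_pow, norm_mul, Complex.norm_I, one_mul, Complex.norm_intCast,
    mul_pow, ← pow_mul, mul_comm k 2, pow_mul |(n:ℝ)|, sq_abs, ← pow_mul]
  ring

/-! ### Weighted norms and tame estimates -/

/-- Wiener norm -/
def nA (f : ℝ → ℂ) : ℝ≥0∞ := ∑' l : ℤ, ‖cf f l‖ₑ

/-- Weighted `ℓ²` square norm -/
def nS (s : ℕ) (f : ℝ → ℂ) : ℝ≥0∞ := ∑' l : ℤ, ENNReal.ofReal (jb l ^ s) * ‖cf f l‖ₑ ^ 2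

lemma cs_tsum {α : Type*} (a b : α → ℝ≥0∞) :
    (∑' i, a i * b i) ^ 2 ≤ (∑' i, a i ^ 2) * ∑' i, b i ^ 2 := by
  let _ : MeasurableSpace α := ⊤
  have h := ENNReal.lintegral_mul_le_Lp_mul_Lq (Measure.count : Measure α)
    (Real.HolderConjugate.two_two) (f := a) (g := b)
    (measurable_from_top.aemeasurable) (measurable_from_top.aemeasurable)
  rw [lintegral_count, lintegral_count, lintegral_count] at h
  simp only [Pi.mul_apply] at h
  have h2 : ∀ x : ℝ≥0∞, x ^ (2:ℝ) = x ^ 2 := fun x => by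
    rw [← ENNReal.rpow_natCast]; norm_num
  simp only [h2] at h
  calc (∑' i, a i * b i) ^ 2 ≤ ((∑' i, a i ^ 2) ^ (1 / 2 : ℝ) * (∑' i, b i ^ 2) ^ (1 / 2 : ℝ)) ^ 2 := by
        gcongr
    _ = _ := by
        rw [mul_pow, ← h2, ← h2, ← ENNReal.rpow_mul, ← ENNReal.rpow_mul]; norm_num

lemma tsum_shift (a : ℤ → ℝ≥0∞) (l : ℤ) : ∑' n, a (l - n) = ∑' n, a n :=
  (Equiv.subLeft l).tsum_eq a

lemma tsum_shift' (a : ℤ → ℝ≥0∞) (n : ℤ) : ∑' l, a (l - n) = ∑' n, a n :=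
  (Equiv.subRight n).tsum_eq a

lemma young_tsum (a b : ℤ → ℝ≥0∞) :
    ∑' l : ℤ, (∑' n, a n * b (l - n)) ^ 2 ≤ (∑' n, b n) ^ 2 * ∑' n, a n ^ 2 := by
  have h1 : ∀ l : ℤ, (∑' n, a n * b (l - n)) ^ 2 ≤ (∑' n, b n) * ∑' n, a n ^ 2 * b (l - n) := by
    intro l
    have hs : ∀ x : ℝ≥0∞, x = (x ^ (1/2 : ℝ)) ^ 2 := fun x => by
      rw [← ENNReal.rpow_natCast, ← ENNReal.rpow_mul]; norm_num
    have := cs_tsum (fun n => a n * (b (l - n)) ^ (1/2 : ℝ)) (fun n => (b (l - n)) ^ (1/2 : ℝ))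
    simp only [mul_assoc, mul_pow, ← sq, ← hs] at this
    rw [tsum_shift b l] at this
    rwa [mul_comm]
  calc _ ≤ ∑' l : ℤ, (∑' n, b n) * ∑' n, a n ^ 2 * b (l - n) := ENNReal.tsum_le_tsum h1
    _ = (∑' n, b n) * ∑' n, ∑' l, a n ^ 2 * b (l - n) := by
        rw [ENNReal.tsum_mul_left, ENNReal.tsum_comm]
    _ = (∑' n, b n) * ∑' n, a n ^ 2 * ∑' l, b l := by
        simp_rw [ENNReal.tsum_mul_left, tsum_shift']
    _ = _ := by rw [ENNReal.tsum_mul_right]; ring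

lemma tsum_ofReal_enorm_ne_top {a : ℤ → ℝ} (h : Summable a) (h0 : ∀ l, 0 ≤ a l) :
    ∑' l, ENNReal.ofReal (a l) ≠ ⊤ := by
  rw [← ENNReal.ofReal_tsum_of_nonneg h0 h]; exact ENNReal.ofReal_ne_top

lemma nA_ne_top {f : ℝ → ℂ} (hf : SP f) : nA f ≠ ⊤ := by
  have := tsum_ofReal_enorm_ne_top (cf_summable hf) (fun _ => norm_nonneg _)
  unfold nA
  simpa only [ofReal_norm] using this

lemma nS_summable {f : ℝ → ℂ} (hf : SP f) (s : ℕ) :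
    Summable (fun l => jb l ^ s * ‖cf f l‖ ^ 2) := by
  obtain ⟨C, hC0, hC⟩ := cf_decay hf 0
  refine Summable.of_nonneg_of_le (fun l => by have := jb_pos l; positivity) (fun l => ?_)
    ((cf_summable_w hf s).mul_left C)
  have h1 := hC l
  have h2 := jb_pos l
  rw [pow_zero, one_mul] at h1
  calc _ = ‖cf f l‖ * (jb l ^ s * ‖cf f l‖) := by ring
    _ ≤ _ := by gcongr

lemma nS_term (f : ℝ → ℂ) (s : ℕ) (l : ℤ) :
    ENNReal.ofReal (jb l ^ s) * ‖cf f l‖ₑ ^ 2 = ENNReal.ofReal (jb l ^ s * ‖cf f l‖ ^ 2) := by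
  rw [ENNReal.ofReal_mul (by have := jb_pos l; positivity), ← ofReal_norm,
    ENNReal.ofReal_pow (norm_nonneg _)]

lemma nS_eq {f : ℝ → ℂ} (hf : SP f) (s : ℕ) :
    nS s f = ENNReal.ofReal (∑' l, jb l ^ s * ‖cf f l‖ ^ 2) := by
  unfold nS
  rw [ENNReal.ofReal_tsum_of_nonneg (fun l => by have := jb_pos l; positivity) (nS_summable hf s)]
  simp only [nS_term]

lemma nS_ne_top {f : ℝ → ℂ} (hf : SP f) (s : ℕ) : nS s f ≠ ⊤ := by
  rw [nS_eq hf]; exact ENNReal.ofReal_ne_top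

lemma nS_toReal {f : ℝ → ℂ} (hf : SP f) (s : ℕ) :
    (nS s f).toReal = ∑' l, jb l ^ s * ‖cf f l‖ ^ 2 := by
  rw [nS_eq hf, ENNReal.toReal_ofReal]
  exact tsum_nonneg fun l => by have := jb_pos l; positivity

lemma nS_mono {s t : ℕ} (h : s ≤ t) (f : ℝ → ℂ) : nS s f ≤ nS t f := by
  unfold nS
  gcongr with l
  exact jb_one_le l

/-- summation constant -/
def cJ : ℝ≥0∞ := ∑' l : ℤ, ENNReal.ofReal ((jb l)⁻¹)

lemma cJ_ne_top : cJ ≠ ⊤ :=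
  tsum_ofReal_enorm_ne_top jb_summable (fun l => (inv_pos.2 (jb_pos l)).le)

lemma nA_sq_le (f : ℝ → ℂ) : nA f ^ 2 ≤ cJ * nS 1 f := by
  have h := cs_tsum (fun l : ℤ => ENNReal.ofReal (Real.sqrt (jb l)⁻¹))
    (fun l => ENNReal.ofReal (Real.sqrt (jb l)) * ‖cf f l‖ₑ)
  have e1 : ∀ l : ℤ, ENNReal.ofReal (Real.sqrt (jb l)⁻¹) *
      (ENNReal.ofReal (Real.sqrt (jb l)) * ‖cf f l‖ₑ) = ‖cf f l‖ₑ := by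
    intro l
    have := jb_pos l
    rw [← mul_assoc, ← ENNReal.ofReal_mul (Real.sqrt_nonneg _), ← Real.sqrt_mul (by positivity),
      inv_mul_cancel₀ this.ne']
    simp
  have e2 : ∀ l : ℤ, ENNReal.ofReal (Real.sqrt (jb l)⁻¹) ^ 2 = ENNReal.ofReal (jb l)⁻¹ := by
    intro l
    have := jb_pos l
    rw [← ENNReal.ofReal_pow (Real.sqrt_nonneg _), Real.sq_sqrt (by positivity)]
  have e3 : ∀ l : ℤ, (ENNReal.ofReal (Real.sqrt (jb l)) * ‖cf f l‖ₑ) ^ 2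
      = ENNReal.ofReal (jb l ^ 1) * ‖cf f l‖ₑ ^ 2 := by
    intro l
    have := jb_pos l
    rw [mul_pow, ← ENNReal.ofReal_pow (Real.sqrt_nonneg _), Real.sq_sqrt (by positivity), pow_one]
  simp only [e1, e2, e3] at h
  exact h

lemma cf_mul_enorm {f g : ℝ → ℂ} (hf : SP f) (hg : SP g) (l : ℤ) :
    ‖cf (fun x => f x * g x) l‖ₑ ≤ ∑' n, ‖cf f n‖ₑ * ‖cf g (l - n)‖ₑ := by
  rw [← (cf_mul hf hg l).tsum_eq]
  refine enorm_tsum_le_tsum_enorm.trans ?_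
  simp only [enorm_mul, le_refl]

lemma nA_mul {f g : ℝ → ℂ} (hf : SP f) (hg : SP g) :
    nA (fun x => f x * g x) ≤ nA f * nA g := by
  unfold nA
  calc _ ≤ ∑' l, ∑' n, ‖cf f n‖ₑ * ‖cf g (l - n)‖ₑ :=
        ENNReal.tsum_le_tsum fun l => cf_mul_enorm hf hg l
    _ = _ := by
        rw [ENNReal.tsum_comm]
        simp_rw [ENNReal.tsum_mul_left, tsum_shift' (fun l => ‖cf g l‖ₑ)]
        rw [ENNReal.tsum_mul_right]

lemma jb_split (l n : ℤ) (s : ℕ) :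
    Real.sqrt (jb l ^ s) ≤ 2 ^ s * (Real.sqrt (jb n ^ s) + Real.sqrt (jb (l - n) ^ s)) := by
  have hn := jb_pos n
  have hl := jb_pos l
  have hln := jb_pos (l - n)
  have key : jb l ≤ 4 * max (jb n) (jb (l - n)) := by
    have h1 := le_max_left (jb n) (jb (l - n))
    have h2 := le_max_right (jb n) (jb (l - n))
    have : jb l ≤ 2 * jb n + 2 * jb (l - n) := by
      unfold jb; push_cast; nlinarith [sq_nonneg ((l:ℝ) - 2 * n)]
    linarith
  have h2 : jb l ^ s ≤ (2 ^ s) ^ 2 * (max (jb n) (jb (l - n))) ^ s := by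
    calc jb l ^ s ≤ (4 * max (jb n) (jb (l - n))) ^ s := by gcongr
      _ = _ := by rw [mul_pow, ← pow_mul, mul_comm s 2, pow_mul]; norm_num
  calc Real.sqrt (jb l ^ s) ≤ Real.sqrt ((2 ^ s) ^ 2 * (max (jb n) (jb (l - n))) ^ s) :=
        Real.sqrt_le_sqrt h2
    _ = 2 ^ s * Real.sqrt ((max (jb n) (jb (l - n))) ^ s) := by
        rw [Real.sqrt_mul (by positivity), Real.sqrt_sq (by positivity)]
    _ ≤ _ := by
        gcongr
        rcases max_choice (jb n) (jb (l - n)) with h | h <;> rw [h]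
        · linarith [Real.sqrt_nonneg (jb (l - n) ^ s)]
        · linarith [Real.sqrt_nonneg (jb n ^ s)]

lemma ennreal_add_sq (a b : ℝ≥0∞) : (a + b) ^ 2 ≤ 4 * (a ^ 2 + b ^ 2) := by
  rcases le_total a b with h | h
  · calc (a + b) ^ 2 ≤ (b + b) ^ 2 := by gcongr
      _ = 4 * (b ^ 2) := by ring
      _ ≤ _ := by gcongr; exact le_add_self
  · calc (a + b) ^ 2 ≤ (a + a) ^ 2 := by gcongr
      _ = 4 * (a ^ 2) := by ring
      _ ≤ _ := by gcongr; exact le_self_add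

lemma nS_mul (s : ℕ) {f g : ℝ → ℂ} (hf : SP f) (hg : SP g) :
    nS s (fun x => f x * g x) ≤ (4 * 4 ^ s) * (nA g ^ 2 * nS s f + nA f ^ 2 * nS s g) := by
  let v : ℤ → ℝ≥0∞ := fun l => ENNReal.ofReal (Real.sqrt (jb l ^ s))
  have hv2 : ∀ l, v l ^ 2 = ENNReal.ofReal (jb l ^ s) := by
    intro l
    have := jb_pos l
    simp only [v]
    rw [← ENNReal.ofReal_pow (Real.sqrt_nonneg _), Real.sq_sqrt (by positivity)]
  have hv : ∀ l n, v l ≤ 2 ^ s * (v n + v (l - n)) := by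
    intro l n
    simp only [v]
    rw [← ENNReal.ofReal_add (Real.sqrt_nonneg _) (Real.sqrt_nonneg _)]
    have : (2 : ℝ≥0∞) ^ s = ENNReal.ofReal (2 ^ s) := by
      rw [ENNReal.ofReal_pow (by norm_num)]; norm_num
    rw [this, ← ENNReal.ofReal_mul (by positivity)]
    exact ENNReal.ofReal_le_ofReal (jb_split l n s)
  have h1 : ∀ l, v l * ‖cf (fun x => f x * g x) l‖ₑ ≤
      2 ^ s * (∑' n, (v n * ‖cf f n‖ₑ) * ‖cf g (l - n)‖ₑ
        + ∑' n, (v n * ‖cf g n‖ₑ) * ‖cf f (l - n)‖ₑ) := by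
    intro l
    calc _ ≤ v l * ∑' n, ‖cf f n‖ₑ * ‖cf g (l - n)‖ₑ := by
          gcongr; exact cf_mul_enorm hf hg l
      _ = ∑' n, v l * (‖cf f n‖ₑ * ‖cf g (l - n)‖ₑ) := by rw [ENNReal.tsum_mul_left]
      _ ≤ ∑' n, (2 ^ s * (v n + v (l - n))) * (‖cf f n‖ₑ * ‖cf g (l - n)‖ₑ) :=
          ENNReal.tsum_le_tsum fun n => by gcongr; exact hv l n
      _ = 2 ^ s * ∑' n, ((v n * ‖cf f n‖ₑ) * ‖cf g (l - n)‖ₑ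
          + (v (l - n) * ‖cf g (l - n)‖ₑ) * ‖cf f n‖ₑ) := by
          rw [← ENNReal.tsum_mul_left]; congr 1; funext n; ring
      _ = 2 ^ s * (∑' n, (v n * ‖cf f n‖ₑ) * ‖cf g (l - n)‖ₑ
          + ∑' n, (v (l - n) * ‖cf g (l - n)‖ₑ) * ‖cf f n‖ₑ) := by rw [ENNReal.tsum_add]
      _ = _ := by
          congr 2
          rw [← tsum_shift (fun n => (v (l - n) * ‖cf g (l - n)‖ₑ) * ‖cf f n‖ₑ) l]
          simp only [sub_sub_cancel]
  unfold nS
  calc ∑' l, ENNReal.ofReal (jb l ^ s) * ‖cf (fun x => f x * g x) l‖ₑ ^ 2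
      = ∑' l, (v l * ‖cf (fun x => f x * g x) l‖ₑ) ^ 2 := by simp_rw [mul_pow, hv2]
    _ ≤ ∑' l, (2 ^ s * (∑' n, (v n * ‖cf f n‖ₑ) * ‖cf g (l - n)‖ₑ
        + ∑' n, (v n * ‖cf g n‖ₑ) * ‖cf f (l - n)‖ₑ)) ^ 2 :=
        ENNReal.tsum_le_tsum fun l => pow_le_pow_left' (h1 l) 2
    _ ≤ ∑' l, (4 * 4 ^ s) * ((∑' n, (v n * ‖cf f n‖ₑ) * ‖cf g (l - n)‖ₑ) ^ 2
        + (∑' n, (v n * ‖cf g n‖ₑ) * ‖cf f (l - n)‖ₑ) ^ 2) := by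
        refine ENNReal.tsum_le_tsum fun l => ?_
        rw [mul_pow]
        have : ((2:ℝ≥0∞) ^ s) ^ 2 = 4 ^ s := by rw [← pow_mul, mul_comm s 2, pow_mul]; norm_num
        rw [this]
        refine (mul_le_mul' le_rfl (ennreal_add_sq _ _)).trans (le_of_eq (by ring))
    _ ≤ _ := by
        rw [ENNReal.tsum_mul_left, ENNReal.tsum_add]
        gcongr
        · refine (young_tsum (fun n => v n * ‖cf f n‖ₑ) (fun n => ‖cf g n‖ₑ)).trans ?_
          simp_rw [mul_pow, hv2]; rfl
        · refine (young_tsum (fun n => v n * ‖cf g n‖ₑ) (fun n => ‖cf f n‖ₑ)).trans ?_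
          simp_rw [mul_pow, hv2]; rfl

lemma nA_conj (f : ℝ → ℂ) : nA (fun x => (starRingEnd ℂ) (f x)) = nA f := by
  unfold nA
  simp_rw [cf_conj, RCLike.enorm_conj]
  exact (Equiv.neg ℤ).tsum_eq (fun l => ‖cf f l‖ₑ)

lemma jb_neg (l : ℤ) : jb (-l) = jb l := by unfold jb; push_cast; ring

lemma nS_conj (s : ℕ) (f : ℝ → ℂ) : nS s (fun x => (starRingEnd ℂ) (f x)) = nS s f := by
  unfold nS
  simp_rw [cf_conj, RCLike.enorm_conj]
  rw [← (Equiv.neg ℤ).tsum_eq (fun l => ENNReal.ofReal (jb l ^ s) * ‖cf f l‖ₑ ^ 2)]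
  simp only [Equiv.neg_apply, jb_neg]

/-- The nonlinearity. -/
def nl (p : ℕ) (f : ℝ → ℂ) (x : ℝ) : ℂ := f x * ((‖f x‖ : ℂ)) ^ (2 * p)

lemma nl_eq (p : ℕ) (f : ℝ → ℂ) (x : ℝ) :
    nl p f x = f x * (f x * (starRingEnd ℂ) (f x)) ^ p := by
  unfold nl
  rw [Complex.mul_conj, Complex.normSq_eq_norm_sq, pow_mul]
  push_cast; rfl

lemma nl_zero (f : ℝ → ℂ) : nl 0 f = f := by funext x; simp [nl]

lemma nl_succ (p : ℕ) (f : ℝ → ℂ) :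
    nl (p + 1) f = fun x => (nl p f x * f x) * (starRingEnd ℂ) (f x) := by
  funext x; rw [nl_eq, nl_eq]; ring

lemma nl_SP {f : ℝ → ℂ} (hf : SP f) (p : ℕ) : SP (nl p f) := by
  induction p with
  | zero => rw [nl_zero]; exact hf
  | succ p ih => rw [nl_succ]; exact (ih.mul hf).mul hf.conj

lemma nl_nA {f : ℝ → ℂ} (hf : SP f) (p : ℕ) : nA (nl p f) ≤ nA f ^ (2 * p + 1) := by
  induction p with
  | zero => rw [nl_zero]; simp
  | succ p ih =>
    rw [nl_succ]
    refine (nA_mul ((nl_SP hf p).mul hf) hf.conj).trans ?_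
    rw [nA_conj]
    calc _ ≤ (nA (nl p f) * nA f) * nA f := by gcongr; exact nA_mul (nl_SP hf p) hf
      _ ≤ (nA f ^ (2 * p + 1) * nA f) * nA f := by gcongr
      _ = _ := by ring

lemma nl_nS (s p : ℕ) : ∃ C : ℝ≥0∞, C ≠ ⊤ ∧ ∀ f : ℝ → ℂ, SP f →
    nS s (nl p f) ≤ C * nA f ^ (4 * p) * nS s f := by
  induction p with
  | zero => exact ⟨1, by simp, fun f _ => by rw [nl_zero]; simp⟩
  | succ p ih =>
    obtain ⟨C, hC, h⟩ := ih
    let c : ℝ≥0∞ := 4 * 4 ^ s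
    have hc : c ≠ ⊤ := by
      simp only [c]
      exact ENNReal.mul_ne_top (by norm_num) (ENNReal.pow_ne_top (by norm_num))
    refine ⟨c * (c * (C + 1) + 1), ENNReal.mul_ne_top hc (ENNReal.add_ne_top.2
      ⟨ENNReal.mul_ne_top hc (ENNReal.add_ne_top.2 ⟨hC, by simp⟩), by simp⟩), fun f hf => ?_⟩
    rw [nl_succ]
    have h1 := nS_mul s ((nl_SP hf p).mul hf) hf.conj
    have h2 := nS_mul s (nl_SP hf p) hf
    have h3 := nA_mul (nl_SP hf p) hf
    have h4 := nl_nA hf p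
    rw [nA_conj, nS_conj] at h1
    refine h1.trans ?_
    have h5 : nS s (fun x => nl p f x * f x) ≤ c * (C + 1) * (nA f ^ (4 * p + 2) * nS s f) := by
      refine h2.trans ?_
      calc _ ≤ c * (nA f ^ 2 * (C * nA f ^ (4 * p) * nS s f) + (nA f ^ (2 * p + 1)) ^ 2 * nS s f) := by
            gcongr
            exact h f hf
        _ = _ := by ring
    have h6 : nA (fun x => nl p f x * f x) ≤ nA f ^ (2 * p + 2) := by
      refine h3.trans ?_
      calc _ ≤ nA f ^ (2 * p + 1) * nA f := by gcongr
        _ = _ := by ring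
    calc _ ≤ c * (nA f ^ 2 * (c * (C + 1) * (nA f ^ (4 * p + 2) * nS s f))
          + (nA f ^ (2 * p + 2)) ^ 2 * nS s f) := by gcongr
      _ = _ := by ring

lemma norm_le_nA {f : ℝ → ℂ} (hf : SP f) (x : ℝ) : ‖f x‖ₑ ≤ nA f := by
  rw [← (cf_hasSum hf x).tsum_eq]
  refine enorm_tsum_le_tsum_enorm.trans ?_
  have : ∀ l, ‖ee l x‖ₑ = 1 := fun l => by rw [← ofReal_norm, ee_norm]; simp
  simp only [enorm_mul, this, mul_one]
  rfl

/-! ### Time dependence -/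

/-- sup-norm bound from the weighted norm -/
def KK (Q : ℝ≥0∞) : ℝ := Real.sqrt (cJ * Q).toReal

lemma KK_nonneg (Q : ℝ≥0∞) : 0 ≤ KK Q := Real.sqrt_nonneg _

lemma real_le_sqrt_of_enorm_sq {z : ℂ} {q : ℝ≥0∞} (hq : q ≠ ⊤) (h : ‖z‖ₑ ^ 2 ≤ q) :
    ‖z‖ ≤ Real.sqrt q.toReal := by
  apply Real.le_sqrt_of_sq_le
  rw [← ofReal_norm, ← ENNReal.ofReal_pow (norm_nonneg _)] at h
  exact (ENNReal.ofReal_le_iff_le_toReal hq).1 h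

lemma bnd_sup {f : ℝ → ℂ} (hf : SP f) {Q : ℝ≥0∞} (hQ : Q ≠ ⊤) (h : nS 1 f ≤ Q) (x : ℝ) :
    ‖f x‖ ≤ KK Q := by
  refine real_le_sqrt_of_enorm_sq (ENNReal.mul_ne_top cJ_ne_top hQ) ?_
  calc ‖f x‖ₑ ^ 2 ≤ nA f ^ 2 := pow_le_pow_left' (norm_le_nA hf x) 2
    _ ≤ cJ * nS 1 f := nA_sq_le f
    _ ≤ _ := by gcongr

lemma nS_iter2 {f : ℝ → ℂ} (hf : SP f) (s : ℕ) : nS s (iteratedDeriv 2 f) ≤ nS (s + 2) f := by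
  unfold nS
  refine ENNReal.tsum_le_tsum fun l => ?_
  rw [nS_term, nS_term]
  apply ENNReal.ofReal_le_ofReal
  rw [cf_iter hf, norm_mul, norm_pow, norm_mul, Complex.norm_I, one_mul, Complex.norm_intCast]
  have h1 := jb_pos l
  have h2 : |(l:ℝ)| ^ 2 = (l:ℝ) ^ 2 := sq_abs _
  rw [h2, mul_pow]
  have h3 : ((l:ℝ) ^ 2) ^ 2 ≤ jb l ^ 2 := by
    apply pow_le_pow_left₀ (by positivity); unfold jb; linarith
  calc _ = jb l ^ s * ((l:ℝ) ^ 2) ^ 2 * ‖cf f l‖ ^ 2 := by ring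
    _ ≤ jb l ^ s * jb l ^ 2 * ‖cf f l‖ ^ 2 := by gcongr
    _ = _ := by ring

lemma bnd_xx {f : ℝ → ℂ} (hf : SP f) {Q : ℝ≥0∞} (hQ : Q ≠ ⊤) (h : nS 3 f ≤ Q) (x : ℝ) :
    ‖iteratedDeriv 2 f x‖ ≤ KK Q :=
  bnd_sup (hf.iter 2) hQ ((nS_iter2 hf 1).trans h) x

lemma bnd_cf {f : ℝ → ℂ} {Q : ℝ≥0∞} (hQ : Q ≠ ⊤) (m : ℕ) (h : nS (2 * m) f ≤ Q) (l : ℤ) :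
    jb l ^ m * ‖cf f l‖ ≤ Real.sqrt Q.toReal := by
  have h1 : ENNReal.ofReal (jb l ^ (2 * m)) * ‖cf f l‖ₑ ^ 2 ≤ Q :=
    (ENNReal.le_tsum l).trans h
  rw [nS_term] at h1
  apply Real.le_sqrt_of_sq_le
  have h2 := (ENNReal.ofReal_le_iff_le_toReal hQ).1 h1
  refine le_trans (le_of_eq ?_) h2
  ring

lemma nl_bound {f : ℝ → ℂ} {K : ℝ} {x : ℝ} (h : ‖f x‖ ≤ K) (p : ℕ) :
    ‖nl p f x‖ ≤ K ^ (2 * p + 1) := by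
  unfold nl
  rw [norm_mul, norm_pow, Complex.norm_real, norm_norm]
  calc _ = ‖f x‖ ^ (2 * p + 1) := by ring
    _ ≤ _ := by gcongr

lemma cf_contOn (w : ℝ → ℝ → ℂ) (S : Set ℝ) (K : ℝ) (hw : ∀ t, Continuous (w t))
    (hc : ∀ x, Continuous (fun t => w t x)) (hK : ∀ t ∈ S, ∀ x, ‖w t x‖ ≤ K) (l : ℤ) :
    ContinuousOn (fun t => cf (w t) l) S := by
  intro t ht
  unfold cf
  refine ContinuousWithinAt.mul continuousWithinAt_const ?_
  refine intervalIntegral.continuousWithinAt_of_dominated_interval (bound := fun _ => K) ?_ ?_ ?_ ?_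
  · exact Filter.Eventually.of_forall fun s =>
      ((ee_cont _).mul (hw s)).aestronglyMeasurable
  · filter_upwards [self_mem_nhdsWithin] with s hs
    refine Filter.Eventually.of_forall fun x _ => ?_
    rw [norm_mul, ee_norm, one_mul]; exact hK s hs x
  · exact intervalIntegrable_const
  · exact Filter.Eventually.of_forall fun x _ =>
      (continuous_const.mul (hc x)).continuousWithinAt

lemma cf_hasDerivAt (w w' : ℝ → ℝ → ℂ) (S : Set ℝ) (K : ℝ) (hw : ∀ t, Continuous (w t))
    (hw' : ∀ t, Continuous (w' t)) {t : ℝ} (hS : S ∈ nhds t)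
    (hd : ∀ s x, HasDerivAt (fun s => w s x) (w' s x) s)
    (hK : ∀ t ∈ S, ∀ x, ‖w' t x‖ ≤ K) (l : ℤ) :
    HasDerivAt (fun t => cf (w t) l) (cf (w' t) l) t := by
  unfold cf
  refine HasDerivAt.const_mul _ ?_
  refine (intervalIntegral.hasDerivAt_integral_of_dominated_loc_of_deriv_le
    (F := fun t x => ee (-l) x * w t x)
    (F' := fun t x => ee (-l) x * w' t x) (bound := fun _ => K) hS ?_ ?_ ?_ ?_ ?_ ?_).2
  · exact Filter.Eventually.of_forall fun s =>
      ((ee_cont _).mul (hw s)).aestronglyMeasurable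
  · exact ((ee_cont _).mul (hw t)).intervalIntegrable _ _
  · exact ((ee_cont _).mul (hw' t)).aestronglyMeasurable
  · refine Filter.Eventually.of_forall fun x _ s hs => ?_
    rw [norm_mul, ee_norm, one_mul]; exact hK s hs x
  · exact intervalIntegrable_const
  · exact Filter.Eventually.of_forall fun x _ s _ => (hd s x).const_mul _

/-- time derivative -/
def ut (p : ℕ) (u : ℝ → ℝ → ℂ) (t x : ℝ) : ℂ :=
  Complex.I * iteratedDeriv 2 (u t) x + (-Complex.I) * nl p (u t) x

section
variable {p : ℕ} {u : ℝ → ℝ → ℂ}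

lemma uSP (hu : IsNLS p Set.univ u) (t : ℝ) : SP (u t) :=
  ⟨hu.smooth t trivial, hu.periodic t trivial⟩

lemma u_hasDerivAt (hu : IsNLS p Set.univ u) (t x : ℝ) :
    HasDerivAt (fun s => u s x) (ut p u t x) t := by
  have h := (hu.tdiff x t trivial).hasDerivAt
  have e := hu.eqn t trivial x
  refine h.congr_deriv ?_
  unfold ut nl
  unfold pD at e
  rw [← e]
  linear_combination (deriv (fun s => u s x) t) * Complex.I_sq

lemma u_cont (hu : IsNLS p Set.univ u) (x : ℝ) : Continuous (fun t => u t x) :=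
  continuous_iff_continuousAt.2 fun t => (u_hasDerivAt hu t x).continuousAt

lemma nl_cont (hu : IsNLS p Set.univ u) (x : ℝ) : Continuous (fun t => nl p (u t) x) := by
  unfold nl
  have := u_cont hu x
  fun_prop

lemma ut_SP (hu : IsNLS p Set.univ u) (t : ℝ) : SP (ut p u t) :=
  (((uSP hu t).iter 2).const_mul _).add ((nl_SP (uSP hu t) p).const_mul _)

lemma c_contOn (hu : IsNLS p Set.univ u) {S : Set ℝ} {Q : ℝ≥0∞} (hQ : Q ≠ ⊤)
    (h : ∀ t ∈ S, nS 1 (u t) ≤ Q) (l : ℤ) : ContinuousOn (fun t => cf (u t) l) S :=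
  cf_contOn u S (KK Q) (fun t => (uSP hu t).cont) (u_cont hu)
    (fun t ht x => bnd_sup (uSP hu t) hQ (h t ht) x) l

lemma g_contOn (hu : IsNLS p Set.univ u) {S : Set ℝ} {Q : ℝ≥0∞} (hQ : Q ≠ ⊤)
    (h : ∀ t ∈ S, nS 1 (u t) ≤ Q) (l : ℤ) : ContinuousOn (fun t => cf (nl p (u t)) l) S :=
  cf_contOn (fun t => nl p (u t)) S (KK Q ^ (2 * p + 1)) (fun t => (nl_SP (uSP hu t) p).cont)
    (nl_cont hu)
    (fun t ht x => nl_bound (bnd_sup (uSP hu t) hQ (h t ht) x) p) l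

lemma ut_bound (hu : IsNLS p Set.univ u) {t : ℝ} {Q : ℝ≥0∞} (hQ : Q ≠ ⊤)
    (h : nS 3 (u t) ≤ Q) (x : ℝ) : ‖ut p u t x‖ ≤ KK Q + KK Q ^ (2 * p + 1) := by
  unfold ut
  refine (norm_add_le _ _).trans ?_
  rw [norm_mul, norm_mul, norm_neg, Complex.norm_I, one_mul, one_mul]
  exact add_le_add (bnd_xx (uSP hu t) hQ h x)
    (nl_bound (bnd_sup (uSP hu t) hQ ((nS_mono (by norm_num) _).trans h) x) p)

lemma c_hasDerivAt (hu : IsNLS p Set.univ u) {S : Set ℝ} {Q : ℝ≥0∞} (hQ : Q ≠ ⊤)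
    (h : ∀ t ∈ S, nS 3 (u t) ≤ Q) {t : ℝ} (ht : S ∈ nhds t) (l : ℤ) :
    HasDerivAt (fun t => cf (u t) l)
      (-Complex.I * ((l:ℂ) ^ 2 * cf (u t) l + cf (nl p (u t)) l)) t := by
  have := cf_hasDerivAt u (ut p u) S (KK Q + KK Q ^ (2 * p + 1)) (fun t => (uSP hu t).cont)
    (fun t => (ut_SP hu t).cont) ht (u_hasDerivAt hu) (fun s hs x => ut_bound hu hQ (h s hs) x) l
  convert this using 1
  unfold ut
  rw [cf_add (((uSP hu t).iter 2).const_mul _).cont ((nl_SP (uSP hu t) p).const_mul _).cont,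
    cf_const_mul, cf_const_mul, cf_iter (uSP hu t)]
  rw [mul_pow, Complex.I_sq]
  ring

/-- derivative of one squared coefficient -/
lemma csq_hasDerivAt (hu : IsNLS p Set.univ u) {S : Set ℝ} {Q : ℝ≥0∞} (hQ : Q ≠ ⊤)
    (h : ∀ t ∈ S, nS 3 (u t) ≤ Q) {t : ℝ} (ht : S ∈ nhds t) (l : ℤ) :
    HasDerivAt (fun t => ‖cf (u t) l‖ ^ 2)
      (2 * (cf (nl p (u t)) l * (starRingEnd ℂ) (cf (u t) l)).im) t := by
  have h1 := c_hasDerivAt hu hQ h ht l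
  have h2 := h1.mul h1.star
  have h3 := Complex.reCLM.hasFDerivAt.comp_hasDerivAt t h2
  have e : (fun t => ‖cf (u t) l‖ ^ 2) =
      (Complex.reCLM ∘ ((fun t => cf (u t) l) * fun t => star (cf (u t) l))) := by
    funext s
    simp only [Function.comp, Pi.mul_apply, Complex.reCLM_apply]
    rw [← starRingEnd_apply, Complex.mul_conj, Complex.ofReal_re, Complex.normSq_eq_norm_sq]
  rw [e]
  refine HasDerivAt.congr_deriv h3 ?_
  rw [Complex.reCLM_apply]
  have hl : ((l:ℂ) ^ 2) = ((l^2 : ℝ) : ℂ) := by push_cast; rfl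
  rw [hl]
  generalize cf (u t) l = c
  generalize cf (nl p (u t)) l = g
  simp
  ring
end

lemma mvt_abs {f f' : ℝ → ℝ} {a b D : ℝ} (hc : ContinuousOn f (Set.Icc a b))
    (hd : ∀ x ∈ Set.Ioo a b, HasDerivAt f (f' x) x) (hD : ∀ x ∈ Set.Ioo a b, |f' x| ≤ D)
    {t t' : ℝ} (ht : t ∈ Set.Icc a b) (ht' : t' ∈ Set.Icc a b) :
    |f t - f t'| ≤ D * |t - t'| := by
  wlog h : t' < t generalizing t t'
  · rcases eq_or_lt_of_le (not_lt.1 h) with h | h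
    · subst h; simp
    · rw [abs_sub_comm, abs_sub_comm t]; exact this ht' ht h
  have hsub : Set.Icc t' t ⊆ Set.Icc a b := Set.Icc_subset_Icc ht'.1 ht.2
  have hsub' : Set.Ioo t' t ⊆ Set.Ioo a b := Set.Ioo_subset_Ioo ht'.1 ht.2
  obtain ⟨c, hcm, hc'⟩ := exists_hasDerivAt_eq_slope f f' h (hc.mono hsub)
    (fun x hx => hd x (hsub' hx))
  have hpos : 0 < t - t' := sub_pos.2 h
  have e : f t - f t' = f' c * (t - t') := by rw [hc']; field_simp
  rw [e, abs_mul]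
  exact mul_le_mul_of_nonneg_right (hD c (hsub' hcm)) (abs_nonneg _)

/-- tame constant -/
def GG (s p : ℕ) (L : ℝ≥0∞) : ℝ≥0∞ := Classical.choose (nl_nS s p) * (cJ * L) ^ (2 * p)

lemma GG_ne_top (s p : ℕ) {L : ℝ≥0∞} (hL : L ≠ ⊤) : GG s p L ≠ ⊤ :=
  ENNReal.mul_ne_top (Classical.choose_spec (nl_nS s p)).1
    (ENNReal.pow_ne_top (ENNReal.mul_ne_top cJ_ne_top hL))

lemma nl_GG (s p : ℕ) {L : ℝ≥0∞} {f : ℝ → ℂ} (hf : SP f) (h : nS 1 f ≤ L) :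
    nS s (nl p f) ≤ GG s p L * nS s f := by
  refine ((Classical.choose_spec (nl_nS s p)).2 f hf).trans ?_
  unfold GG
  have h2 : nA f ^ (4 * p) ≤ (cJ * L) ^ (2 * p) := by
    calc nA f ^ (4 * p) = (nA f ^ 2) ^ (2 * p) := by rw [← pow_mul]; ring_nf
      _ ≤ (cJ * L) ^ (2 * p) := by
        refine pow_le_pow_left' ((nA_sq_le f).trans ?_) _
        gcongr
  gcongr

section
variable {p : ℕ} {u : ℝ → ℝ → ℂ}

lemma growth (hu : IsNLS p Set.univ u) {a b : ℝ} {M s : ℕ} {Q L : ℝ≥0∞} (hQ : Q ≠ ⊤)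
    (hM : 3 ≤ M) (hs : s ≤ M) (h : ∀ t ∈ Set.Icc a b, nS M (u t) ≤ Q)
    (hL : L ≠ ⊤) (h1 : ∀ t ∈ Set.Icc a b, nS 1 (u t) ≤ L)
    (hab : (GG s p L + 1) * ENNReal.ofReal (b - a) ≤ 1 / 2)
    {t t' : ℝ} (ht : t ∈ Set.Icc a b) (ht' : t' ∈ Set.Icc a b) :
    nS s (u t) ≤ 2 * nS s (u t') := by
  set W : ℝ≥0∞ := ⨆ τ ∈ Set.Icc a b, nS s (u τ) with hW
  have hle : ∀ τ ∈ Set.Icc a b, nS s (u τ) ≤ W := fun τ hτ =>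
    le_iSup₂ (f := fun τ (_ : τ ∈ Set.Icc a b) => nS s (u τ)) τ hτ
  have hWQ : W ≤ Q := iSup₂_le fun τ hτ => (nS_mono hs _).trans (h τ hτ)
  have hWt : W ≠ ⊤ := ne_top_of_le_ne_top hQ hWQ
  have hG := GG_ne_top s p hL
  have hDt : (GG s p L + 1) * W ≠ ⊤ := ENNReal.mul_ne_top (by simp [hG]) hWt
  have h3 : ∀ t ∈ Set.Icc a b, nS 3 (u t) ≤ Q := fun t ht => (nS_mono hM _).trans (h t ht)
  have h1' : ∀ t ∈ Set.Icc a b, nS 1 (u t) ≤ Q := fun t ht =>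
    (nS_mono (by omega) _).trans (h t ht)
  have key : ∀ τ ∈ Set.Icc a b, nS s (u τ) ≤ nS s (u t') + W / 2 := by
    intro τ hτ
    unfold nS
    rw [ENNReal.tsum_eq_iSup_sum]
    refine iSup_le fun F => ?_
    have hm := mvt_abs (f := fun t => ∑ l ∈ F, jb l ^ s * ‖cf (u t) l‖ ^ 2)
      (f' := fun t => ∑ l ∈ F, jb l ^ s * (2 * (cf (nl p (u t)) l *
        (starRingEnd ℂ) (cf (u t) l)).im)) (a := a) (b := b) (D := ((GG s p L + 1) * W).toReal)
      (continuousOn_finsetSum _ fun l _ => continuousOn_const.mul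
        ((c_contOn hu hQ h1' l).norm.pow 2))
      (fun x hx => by
        refine HasDerivAt.fun_sum fun l _ => HasDerivAt.const_mul _ ?_
        exact csq_hasDerivAt hu hQ h3 (Icc_mem_nhds hx.1 hx.2) l)
      (fun x hx => by
        have hx' := Set.Ioo_subset_Icc_self hx
        have b1 : |∑ l ∈ F, jb l ^ s * (2 * (cf (nl p (u x)) l *
            (starRingEnd ℂ) (cf (u x) l)).im)| ≤
            ∑ l ∈ F, (jb l ^ s * ‖cf (nl p (u x)) l‖ ^ 2 + jb l ^ s * ‖cf (u x) l‖ ^ 2) := by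
          refine (Finset.abs_sum_le_sum_abs _ _).trans (Finset.sum_le_sum fun l _ => ?_)
          have hj := jb_pos l
          rw [abs_mul, abs_mul, abs_of_pos (by positivity : 0 < jb l ^ s), ← mul_add]
          gcongr
          have := Complex.abs_im_le_norm (cf (nl p (u x)) l * (starRingEnd ℂ) (cf (u x) l))
          rw [norm_mul, RCLike.norm_conj] at this
          rw [abs_two]
          nlinarith [sq_nonneg (‖cf (nl p (u x)) l‖ - ‖cf (u x) l‖)]
        refine b1.trans ?_
        rw [← ENNReal.ofReal_le_iff_le_toReal hDt, ENNReal.ofReal_sum_of_nonneg (fun l _ => by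
          have hj := jb_pos l; positivity)]
        calc _ ≤ ∑ l ∈ F, (ENNReal.ofReal (jb l ^ s) * ‖cf (nl p (u x)) l‖ₑ ^ 2 +
              ENNReal.ofReal (jb l ^ s) * ‖cf (u x) l‖ₑ ^ 2) := by
              refine Finset.sum_le_sum fun l _ => ?_
              rw [nS_term, nS_term]
              exact ENNReal.ofReal_add_le
          _ ≤ nS s (nl p (u x)) + nS s (u x) := by
              rw [Finset.sum_add_distrib]
              exact add_le_add (ENNReal.sum_le_tsum _) (ENNReal.sum_le_tsum _)
          _ ≤ GG s p L * W + W := by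
              gcongr
              · refine (nl_GG s p (uSP hu x) (h1 x hx')).trans ?_
                gcongr
                exact hle x hx'
              · exact hle x hx'
          _ = _ := by ring)
      hτ ht'
    have e : ∀ t, ∑ l ∈ F, ENNReal.ofReal (jb l ^ s) * ‖cf (u t) l‖ₑ ^ 2 =
        ENNReal.ofReal (∑ l ∈ F, jb l ^ s * ‖cf (u t) l‖ ^ 2) := fun t => by
      rw [ENNReal.ofReal_sum_of_nonneg (fun l _ => by have hj := jb_pos l; positivity)]
      simp only [nS_term]
    have hd : |τ - t'| ≤ b - a := by
      rw [abs_le]; constructor <;> linarith [hτ.1, hτ.2, ht'.1, ht'.2]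
    have hm2 := (le_abs_self _).trans hm
    calc _ = ENNReal.ofReal (∑ l ∈ F, jb l ^ s * ‖cf (u τ) l‖ ^ 2) := e τ
      _ ≤ ENNReal.ofReal ((∑ l ∈ F, jb l ^ s * ‖cf (u t') l‖ ^ 2) +
          ((GG s p L + 1) * W).toReal * (b - a)) := by
          apply ENNReal.ofReal_le_ofReal
          have : ((GG s p L + 1) * W).toReal * |τ - t'| ≤
            ((GG s p L + 1) * W).toReal * (b - a) := by gcongr
          linarith
      _ ≤ ENNReal.ofReal (∑ l ∈ F, jb l ^ s * ‖cf (u t') l‖ ^ 2) +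
          ENNReal.ofReal (((GG s p L + 1) * W).toReal * (b - a)) := ENNReal.ofReal_add_le
      _ ≤ _ := by
          refine add_le_add ?_ ?_
          · rw [← e]; exact ENNReal.sum_le_tsum _
          · rw [ENNReal.ofReal_mul ENNReal.toReal_nonneg, ENNReal.ofReal_toReal hDt]
            calc _ = ((GG s p L + 1) * ENNReal.ofReal (b - a)) * W := by ring
              _ ≤ (1 / 2) * W := by gcongr
              _ = W / 2 := by rw [one_div, mul_comm, div_eq_mul_inv]
  have hW2 : W ≤ nS s (u t') + W / 2 := iSup₂_le key
  have hfin : nS s (u t') ≠ ⊤ := ne_top_of_le_ne_top hWt (hle t' ht')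
  have : W ≤ 2 * nS s (u t') := by
    have h2 : W / 2 + W / 2 ≤ nS s (u t') + W / 2 := by rwa [ENNReal.add_halves]
    have h3 : W / 2 ≤ nS s (u t') :=
      (ENNReal.add_le_add_iff_right (ENNReal.div_ne_top hWt (by norm_num))).1 h2
    calc W = 2 * (W / 2) := (ENNReal.mul_div_cancel (by norm_num) (by norm_num)).symm
      _ ≤ _ := by gcongr
  exact (hle t ht).trans this

/-- homogeneous energies -/
def Hs (s : ℕ) (f : ℝ → ℂ) : ℝ := ∑' l : ℤ, (l:ℝ) ^ (2 * s) * ‖cf f l‖ ^ 2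

/-- signed derivative of order `2s` -/
def Ds (s : ℕ) (f : ℝ → ℂ) (x : ℝ) : ℂ := (-1) ^ s * iteratedDeriv (2 * s) f x

lemma Ds_SP {f : ℝ → ℂ} (hf : SP f) (s : ℕ) : SP (Ds s f) := (hf.iter _).const_mul _

lemma Ds_cf {f : ℝ → ℂ} (hf : SP f) (s : ℕ) (l : ℤ) :
    cf (Ds s f) l = ((l:ℝ) ^ (2 * s) : ℝ) * cf f l := by
  unfold Ds
  rw [cf_const_mul, cf_iter hf, mul_pow, pow_mul Complex.I, Complex.I_sq, ← mul_assoc, ← mul_assoc,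
    ← mul_pow]
  push_cast
  simp

lemma lpow_le_jb (l : ℤ) (s : ℕ) : (l:ℝ) ^ (2 * s) ≤ jb l ^ s := by
  rw [pow_mul]; apply pow_le_pow_left₀ (by positivity); unfold jb; linarith

lemma lpow_nonneg (l : ℤ) (s : ℕ) : 0 ≤ (l:ℝ) ^ (2 * s) := by
  rw [pow_mul]; positivity

lemma jb_c_bound {f : ℝ → ℂ} {Q : ℝ≥0∞} (hQ : Q ≠ ⊤) {k s : ℕ} (hs : s ≤ k)
    (h : nS (2 * (k + 1)) f ≤ Q) (l : ℤ) :
    jb l ^ s * ‖cf f l‖ ≤ Real.sqrt Q.toReal * (jb l)⁻¹ := by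
  have h1 := bnd_cf hQ (k + 1) h l
  have h2 := jb_pos l
  rw [← div_eq_mul_inv, le_div_iff₀ h2]
  refine le_trans ?_ h1
  calc _ = jb l ^ (s + 1) * ‖cf f l‖ := by ring
    _ ≤ _ := by gcongr; exact jb_one_le l

lemma Hs_hasDerivAt (hu : IsNLS p Set.univ u) {a b : ℝ} {k s : ℕ} {Q : ℝ≥0∞} (hQ : Q ≠ ⊤)
    (hk : 1 ≤ k) (hs : s ≤ k) (h : ∀ t ∈ Set.Icc a b, nS (2 * (k + 1)) (u t) ≤ Q)
    {t : ℝ} (ht : t ∈ Set.Ioo a b) :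
    HasDerivAt (fun t => Hs s (u t))
      (2 * (cf (fun x => nl p (u t) x * (starRingEnd ℂ) (Ds s (u t) x)) 0).im) t := by
  have h3 : ∀ t ∈ Set.Icc a b, nS 3 (u t) ≤ Q := fun t ht => (nS_mono (by omega) _).trans (h t ht)
  have hd := hasDerivAt_tsum_of_isPreconnected (t := Set.Ioo a b)
    (g := fun (l:ℤ) t => (l:ℝ) ^ (2 * s) * ‖cf (u t) l‖ ^ 2)
    (g' := fun (l:ℤ) t => (l:ℝ) ^ (2 * s) * (2 * (cf (nl p (u t)) l *
        (starRingEnd ℂ) (cf (u t) l)).im))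
    (u := fun l => 2 * KK Q ^ (2 * p + 1) * Real.sqrt Q.toReal * (jb l)⁻¹)
    (jb_summable.mul_left _) isOpen_Ioo isPreconnected_Ioo
    (fun l y hy => (csq_hasDerivAt hu hQ h3 (Icc_mem_nhds hy.1 hy.2) l).const_mul _)
    (fun l y hy => by
      have hy' := Set.Ioo_subset_Icc_self hy
      have b1 := jb_c_bound hQ hs (h y hy') l
      have b2 : ‖cf (nl p (u y)) l‖ ≤ KK Q ^ (2 * p + 1) := cf_bound (fun x => nl_bound
        (bnd_sup (uSP hu y) hQ ((nS_mono (by norm_num) _).trans (h3 y hy')) x) p) l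
      have b3 := Complex.abs_im_le_norm (cf (nl p (u y)) l * (starRingEnd ℂ) (cf (u y) l))
      rw [norm_mul, RCLike.norm_conj] at b3
      have b4 := lpow_le_jb l s
      have b5 := lpow_nonneg l s
      have hK := KK_nonneg Q
      have hj : 0 ≤ jb l ^ s := b5.trans b4
      have hjc : 0 ≤ jb l ^ s * ‖cf (u y) l‖ := mul_nonneg hj (norm_nonneg _)
      rw [Real.norm_eq_abs, abs_mul, abs_mul, abs_of_nonneg b5, abs_two]
      calc _ ≤ jb l ^ s * (2 * (‖cf (nl p (u y)) l‖ * ‖cf (u y) l‖)) := by gcongr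
        _ = 2 * ‖cf (nl p (u y)) l‖ * (jb l ^ s * ‖cf (u y) l‖) := by ring
        _ ≤ 2 * KK Q ^ (2 * p + 1) * (Real.sqrt Q.toReal * (jb l)⁻¹) := by gcongr
        _ = _ := by ring)
    ht
    (by
      refine Summable.of_nonneg_of_le (fun l => mul_nonneg (lpow_nonneg l s) (by positivity))
        (fun l => ?_) (nS_summable (uSP hu t) s)
      exact mul_le_mul_of_nonneg_right (lpow_le_jb l s) (by positivity))
    ht
  refine hd.congr_deriv ?_
  have hp := parseval (nl_SP (uSP hu t) p) (Ds_SP (uSP hu t) s)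
  have hp2 := (Complex.hasSum_im hp).mul_left 2
  rw [← hp2.tsum_eq]
  congr 1
  funext l
  rw [Ds_cf (uSP hu t), map_mul, Complex.conj_ofReal, mul_left_comm (cf (nl p (u t)) l),
    Complex.im_ofReal_mul]
  ring

lemma Hs_contOn (hu : IsNLS p Set.univ u) {S : Set ℝ} {k s : ℕ} {Q : ℝ≥0∞} (hQ : Q ≠ ⊤)
    (hs : s ≤ k) (h : ∀ t ∈ S, nS (2 * (k + 1)) (u t) ≤ Q) :
    ContinuousOn (fun t => Hs s (u t)) S := by
  refine continuousOn_tsum (u := fun l => Real.sqrt Q.toReal * Real.sqrt Q.toReal * (jb l)⁻¹)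
    (fun l => continuousOn_const.mul ((c_contOn hu hQ (fun t ht =>
      (nS_mono (by omega) _).trans (h t ht)) l).norm.pow 2)) (jb_summable.mul_left _)
    (fun l t ht => ?_)
  have b1 := jb_c_bound hQ hs (h t ht) l
  have b0 := bnd_cf hQ 0 ((nS_mono (by omega) _).trans (h t ht)) l
  rw [pow_zero, one_mul] at b0
  have b4 := lpow_le_jb l s
  have b5 := lpow_nonneg l s
  have hj : 0 ≤ jb l ^ s := b5.trans b4
  have hjc : 0 ≤ jb l ^ s * ‖cf (u t) l‖ := mul_nonneg hj (norm_nonneg _)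
  rw [Real.norm_of_nonneg (by positivity)]
  calc _ ≤ jb l ^ s * ‖cf (u t) l‖ ^ 2 := by gcongr
    _ = ‖cf (u t) l‖ * (jb l ^ s * ‖cf (u t) l‖) := by ring
    _ ≤ Real.sqrt Q.toReal * (Real.sqrt Q.toReal * (jb l)⁻¹) := by gcongr
    _ = _ := by ring

lemma mass_cons (hu : IsNLS p Set.univ u) {a b : ℝ} {k : ℕ} {Q : ℝ≥0∞} (hQ : Q ≠ ⊤)
    (hk : 1 ≤ k) (h : ∀ t ∈ Set.Icc a b, nS (2 * (k + 1)) (u t) ≤ Q)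
    {t t' : ℝ} (ht : t ∈ Set.Icc a b) (ht' : t' ∈ Set.Icc a b) :
    Hs 0 (u t) = Hs 0 (u t') := by
  have := mvt_abs (D := 0) (Hs_contOn hu hQ (Nat.zero_le k) h)
    (fun x hx => Hs_hasDerivAt hu hQ hk (Nat.zero_le k) h hx)
    (fun x hx => by
      have e : (fun y => nl p (u x) y * (starRingEnd ℂ) (Ds 0 (u x) y)) =
          fun y => ((‖u x y‖ ^ (2 * p + 2) : ℝ) : ℂ) := by
        funext y
        rw [nl_eq]
        simp only [Ds, pow_zero, one_mul, mul_zero, iteratedDeriv_zero]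
        have : (((‖u x y‖ ^ (2 * p + 2) : ℝ) : ℂ)) = (u x y * (starRingEnd ℂ) (u x y)) ^ (p + 1) := by
          rw [Complex.mul_conj, Complex.normSq_eq_norm_sq]; push_cast; ring
        rw [this]; ring
      rw [e, cf_ofReal_zero, Complex.ofReal_im]; simp) ht ht'
  rw [zero_mul] at this
  exact sub_eq_zero.1 (abs_nonpos_iff.1 this)

/-- potential energy -/
def Pot (p : ℕ) (f : ℝ → ℂ) : ℝ := (cf (fun x => (f x * (starRingEnd ℂ) (f x)) ^ (p + 1)) 0).re

lemma Pot_integrand (p : ℕ) (f : ℝ → ℂ) (x : ℝ) :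
    (f x * (starRingEnd ℂ) (f x)) ^ (p + 1) = ((‖f x‖ ^ (2 * p + 2) : ℝ) : ℂ) := by
  rw [Complex.mul_conj, Complex.normSq_eq_norm_sq]; push_cast; ring

lemma Pot_nonneg (p : ℕ) (f : ℝ → ℂ) : 0 ≤ Pot p f := by
  unfold Pot
  simp_rw [Pot_integrand]
  rw [cf_ofReal_zero, Complex.ofReal_re]
  refine mul_nonneg (by positivity) ?_
  exact intervalIntegral.integral_nonneg (by positivity) fun x _ => by positivity

lemma Pot_le (p : ℕ) {f : ℝ → ℂ} {K : ℝ} (h : ∀ x, ‖f x‖ ≤ K) : Pot p f ≤ K ^ (2 * p + 2) := by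
  unfold Pot
  refine (Complex.re_le_norm _).trans (cf_bound (fun x => ?_) 0)
  rw [Pot_integrand, Complex.norm_real, Real.norm_of_nonneg (by positivity)]
  exact pow_le_pow_left₀ (norm_nonneg _) (h x) _

lemma Pot_contOn (hu : IsNLS p Set.univ u) {S : Set ℝ} {Q : ℝ≥0∞} (hQ : Q ≠ ⊤)
    (h : ∀ t ∈ S, nS 1 (u t) ≤ Q) : ContinuousOn (fun t => Pot p (u t)) S := by
  unfold Pot
  refine Complex.continuous_re.comp_continuousOn
    (cf_contOn (fun t x => (u t x * (starRingEnd ℂ) (u t x)) ^ (p + 1)) S (KK Q ^ (2 * p + 2))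
      (fun t => (((uSP hu t).mul (uSP hu t).conj).pow _).cont) (fun x => ?_) (fun t ht x => ?_) 0)
  · have h1 := u_cont hu x
    exact (h1.mul (Complex.continuous_conj.comp h1)).pow _
  · rw [Pot_integrand, Complex.norm_real, Real.norm_of_nonneg (by positivity)]
    exact pow_le_pow_left₀ (norm_nonneg _) (bnd_sup (uSP hu t) hQ (h t ht) x) _

lemma Pot_hasDerivAt (hu : IsNLS p Set.univ u) {S : Set ℝ} {Q : ℝ≥0∞} (hQ : Q ≠ ⊤)
    (h : ∀ t ∈ S, nS 3 (u t) ≤ Q) {t : ℝ} (ht : S ∈ nhds t) :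
    HasDerivAt (fun t => Pot p (u t))
      (-((p + 1 : ℕ) * (2 * (cf (fun x => nl p (u t) x * (starRingEnd ℂ) (Ds 1 (u t) x)) 0).im))) t := by
  set K := KK Q
  have hK : 0 ≤ K := KK_nonneg Q
  have hd := cf_hasDerivAt (fun t x => (u t x * (starRingEnd ℂ) (u t x)) ^ (p + 1))
    (fun t x => ((p + 1 : ℕ) : ℂ) * (u t x * (starRingEnd ℂ) (u t x)) ^ p *
      (ut p u t x * (starRingEnd ℂ) (u t x) + u t x * (starRingEnd ℂ) (ut p u t x)))
    S ((p + 1 : ℕ) * (K * K) ^ p * ((K + K ^ (2 * p + 1)) * K + K * (K + K ^ (2 * p + 1))))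
    (fun t => (((uSP hu t).mul (uSP hu t).conj).pow _).cont)
    (fun t => (((((uSP hu t).mul (uSP hu t).conj).pow p).const_mul _).mul
      (((ut_SP hu t).mul (uSP hu t).conj).add ((uSP hu t).mul (ut_SP hu t).conj))).cont)
    ht
    (fun s x => by
      have h1 := u_hasDerivAt hu s x
      exact (h1.mul h1.star).pow (p + 1))
    (fun s hs x => by
      have b1 := bnd_sup (uSP hu s) hQ ((nS_mono (by norm_num) _).trans (h s hs)) x
      have b2 := ut_bound hu hQ (h s hs) x
      change ‖u s x‖ ≤ K at b1
      change ‖ut p u s x‖ ≤ K + K ^ (2 * p + 1) at b2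
      rw [norm_mul, norm_mul, norm_pow, norm_mul, RCLike.norm_conj, Complex.norm_natCast]
      gcongr
      refine (norm_add_le _ _).trans ?_
      rw [norm_mul, norm_mul, RCLike.norm_conj, RCLike.norm_conj]
      gcongr)
    0
  have h3 := Complex.reCLM.hasFDerivAt.comp_hasDerivAt t hd
  refine HasDerivAt.congr_deriv h3 ?_
  rw [Complex.reCLM_apply]
  have e : (fun x => ((p + 1 : ℕ) : ℂ) * (u t x * (starRingEnd ℂ) (u t x)) ^ p *
      (ut p u t x * (starRingEnd ℂ) (u t x) + u t x * (starRingEnd ℂ) (ut p u t x))) =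
      fun x => ((p + 1 : ℕ) : ℂ) * (Complex.I * (nl p (u t) x * (starRingEnd ℂ) (Ds 1 (u t) x)) +
        (-Complex.I) * (starRingEnd ℂ) (nl p (u t) x * (starRingEnd ℂ) (Ds 1 (u t) x))) := by
    funext x
    simp only [Ds, ut, nl_eq]
    simp only [map_mul, map_add, map_neg, map_pow, Complex.conj_I, Complex.conj_conj, map_one]
    ring
  rw [e, cf_const_mul]
  have hsp := (nl_SP (uSP hu t) p).mul (Ds_SP (uSP hu t) 1).conj
  rw [cf_add (hsp.const_mul _).cont (hsp.conj.const_mul _).cont, cf_const_mul, cf_const_mul,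
    cf_conj]
  simp
  ring

lemma energy_cons (hu : IsNLS p Set.univ u) {a b : ℝ} {k : ℕ} {Q : ℝ≥0∞} (hQ : Q ≠ ⊤)
    (hk : 1 ≤ k) (h : ∀ t ∈ Set.Icc a b, nS (2 * (k + 1)) (u t) ≤ Q)
    {t t' : ℝ} (ht : t ∈ Set.Icc a b) (ht' : t' ∈ Set.Icc a b) :
    (p + 1 : ℕ) * Hs 1 (u t) + Pot p (u t) = (p + 1 : ℕ) * Hs 1 (u t') + Pot p (u t') := by
  have h3 : ∀ t ∈ Set.Icc a b, nS 3 (u t) ≤ Q := fun t ht => (nS_mono (by omega) _).trans (h t ht)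
  have := mvt_abs (D := 0) (f := fun t => (p + 1 : ℕ) * Hs 1 (u t) + Pot p (u t))
    ((continuousOn_const.mul (Hs_contOn hu hQ hk h)).add
      (Pot_contOn hu hQ (fun t ht => (nS_mono (by norm_num) _).trans (h3 t ht))))
    (fun x hx => ((Hs_hasDerivAt hu hQ hk hk h hx).const_mul _).add
      (Pot_hasDerivAt hu hQ h3 (Icc_mem_nhds hx.1 hx.2)))
    (fun x hx => by rw [add_neg_cancel, abs_zero]) ht ht'
  rw [zero_mul] at this
  exact sub_eq_zero.1 (abs_nonpos_iff.1 this)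

/-- bound on the `H¹` norm coming from the conservation laws -/
def LL (p : ℕ) (x : ℝ≥0∞) : ℝ≥0∞ := x + (cJ * x) ^ (p + 1)

lemma LL_mono (p : ℕ) {x y : ℝ≥0∞} (h : x ≤ y) : LL p x ≤ LL p y := by
  unfold LL; gcongr

lemma LL_ne_top (p : ℕ) {x : ℝ≥0∞} (h : x ≠ ⊤) : LL p x ≠ ⊤ :=
  ENNReal.add_ne_top.2 ⟨h, ENNReal.pow_ne_top (ENNReal.mul_ne_top cJ_ne_top h)⟩

lemma Hs_summable {f : ℝ → ℂ} (hf : SP f) (s : ℕ) :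
    Summable (fun l : ℤ => (l:ℝ) ^ (2 * s) * ‖cf f l‖ ^ 2) := by
  refine Summable.of_nonneg_of_le (fun l => mul_nonneg (lpow_nonneg l s) (by positivity))
    (fun l => ?_) (nS_summable hf s)
  exact mul_le_mul_of_nonneg_right (lpow_le_jb l s) (by positivity)

lemma nS_one_eq {f : ℝ → ℂ} (hf : SP f) : nS 1 f = ENNReal.ofReal (Hs 0 f + Hs 1 f) := by
  rw [nS_eq hf]
  congr 1
  unfold Hs
  rw [← (Hs_summable hf 0).tsum_add (Hs_summable hf 1)]
  congr 1
  funext l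
  unfold jb
  ring

lemma Hs_nonneg (s : ℕ) (f : ℝ → ℂ) : 0 ≤ Hs s f :=
  tsum_nonneg fun l => mul_nonneg (lpow_nonneg l s) (by positivity)

lemma H1_cons (hu : IsNLS p Set.univ u) {a b : ℝ} {k : ℕ} {Q : ℝ≥0∞} (hQ : Q ≠ ⊤)
    (hk : 1 ≤ k) (h : ∀ t ∈ Set.Icc a b, nS (2 * (k + 1)) (u t) ≤ Q)
    {t t' : ℝ} (ht : t ∈ Set.Icc a b) (ht' : t' ∈ Set.Icc a b) :
    nS 1 (u t) ≤ LL p (nS 1 (u t')) := by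
  have h0 := mass_cons hu hQ hk h ht ht'
  have h1 := energy_cons hu hQ hk h ht ht'
  have hx := nS_ne_top (uSP hu t') 1
  have h2 := Pot_nonneg p (u t)
  have h3 := Pot_le p (bnd_sup (uSP hu t') hx le_rfl)
  have hp1 : (1:ℝ) ≤ (p + 1 : ℕ) := by push_cast; linarith [(Nat.cast_nonneg p : (0:ℝ) ≤ p)]
  have h4 : Hs 1 (u t) ≤ Hs 1 (u t') + KK (nS 1 (u t')) ^ (2 * p + 2) := by
    have hK : 0 ≤ KK (nS 1 (u t')) ^ (2 * p + 2) := pow_nonneg (KK_nonneg _) _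
    by_contra hcon
    push Not at hcon
    nlinarith
  have e : ENNReal.ofReal (KK (nS 1 (u t')) ^ (2 * p + 2)) = (cJ * nS 1 (u t')) ^ (p + 1) := by
    have : KK (nS 1 (u t')) ^ (2 * p + 2) = ((cJ * nS 1 (u t')).toReal) ^ (p + 1) := by
      unfold KK
      rw [show 2 * p + 2 = 2 * (p + 1) by ring, pow_mul, Real.sq_sqrt ENNReal.toReal_nonneg]
    rw [this, ENNReal.ofReal_pow ENNReal.toReal_nonneg,
      ENNReal.ofReal_toReal (ENNReal.mul_ne_top cJ_ne_top hx)]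
  unfold LL
  rw [nS_one_eq (uSP hu t), h0]
  calc _ ≤ ENNReal.ofReal ((Hs 0 (u t') + Hs 1 (u t')) + KK (nS 1 (u t')) ^ (2 * p + 2)) :=
        ENNReal.ofReal_le_ofReal (by linarith)
    _ ≤ _ := by
        refine ENNReal.ofReal_add_le.trans ?_
        rw [e, ← nS_one_eq (uSP hu t')]
end

/-! ### Baire argument: local boundedness in time -/

lemma exists_small {G : ℝ≥0∞} (hG : G ≠ ⊤) : ∃ r : ℝ, 0 < r ∧ ∀ r' ≤ r,
    (G + 1) * ENNReal.ofReal r' ≤ 1 / 2 := by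
  refine ⟨1 / (2 * (G.toReal + 1)), by have := ENNReal.toReal_nonneg (a := G); positivity,
    fun r' hr => ?_⟩
  have h0 := ENNReal.toReal_nonneg (a := G)
  have e : G + 1 = ENNReal.ofReal (G.toReal + 1) := by
    rw [ENNReal.ofReal_add h0 zero_le_one, ENNReal.ofReal_toReal hG, ENNReal.ofReal_one]
  have e2 : (1 / 2 : ℝ≥0∞) = ENNReal.ofReal (1 / 2) := by
    rw [ENNReal.ofReal_div_of_pos (by norm_num)]; norm_num
  rw [e, e2, ← ENNReal.ofReal_mul (by positivity)]
  apply ENNReal.ofReal_le_ofReal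
  calc (G.toReal + 1) * r' ≤ (G.toReal + 1) * (1 / (2 * (G.toReal + 1))) := by gcongr
    _ = _ := by field_simp

section
variable {p : ℕ} {u : ℝ → ℝ → ℂ}

/-- sublevel sets -/
def BB (u : ℝ → ℝ → ℂ) (M n : ℕ) : Set ℝ := {t | nS M (u t) ≤ n}

lemma BB_closed (hu : IsNLS p Set.univ u) {M : ℕ} (hM : 1 ≤ M) (n : ℕ) : IsClosed (BB u M n) := by
  rw [← closure_subset_iff_isClosed]
  intro t ht
  have hQ : (n : ℝ≥0∞) + nS M (u t) ≠ ⊤ :=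
    ENNReal.add_ne_top.2 ⟨by simp, nS_ne_top (uSP hu t) M⟩
  have hc := fun l => c_contOn hu (S := insert t (BB u M n)) hQ (fun s hs => by
    refine (nS_mono hM _).trans ?_
    rcases hs with rfl | hs
    · exact le_add_self
    · exact le_trans hs le_self_add) l
  change nS M (u t) ≤ n
  unfold nS
  rw [ENNReal.tsum_eq_iSup_sum]
  refine iSup_le fun F => ?_
  have e : ∀ t, ∑ l ∈ F, ENNReal.ofReal (jb l ^ M) * ‖cf (u t) l‖ₑ ^ 2 =
      ENNReal.ofReal (∑ l ∈ F, jb l ^ M * ‖cf (u t) l‖ ^ 2) := fun t => by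
    rw [ENNReal.ofReal_sum_of_nonneg (fun l _ => by have hj := jb_pos l; positivity)]
    simp only [nS_term]
  rw [e, ENNReal.ofReal_le_iff_le_toReal (by simp)]
  refine ContinuousWithinAt.closure_le (f := fun t => ∑ l ∈ F, jb l ^ M * ‖cf (u t) l‖ ^ 2)
    (g := fun _ => (n:ℝ≥0∞).toReal) ht ?_ continuousWithinAt_const (fun y hy => ?_)
  · have : ContinuousOn (fun t => ∑ l ∈ F, jb l ^ M * ‖cf (u t) l‖ ^ 2) (insert t (BB u M n)) :=
      continuousOn_finsetSum _ fun l _ => continuousOn_const.mul ((hc l).norm.pow 2)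
    exact (this t (Set.mem_insert _ _)).mono (Set.subset_insert _ _)
  · rw [← ENNReal.ofReal_le_iff_le_toReal (by simp), ← e]
    exact (ENNReal.sum_le_tsum _).trans hy

/-- locally bounded times -/
def Gd (u : ℝ → ℝ → ℂ) (M : ℕ) : Set ℝ := ⋃ n, interior (BB u M n)

lemma Gd_compact {M : ℕ} {K : Set ℝ} (hK : IsCompact K) (h : K ⊆ Gd u M) :
    ∃ Q : ℝ≥0∞, Q ≠ ⊤ ∧ ∀ t ∈ K, nS M (u t) ≤ Q := by
  obtain ⟨n, hn⟩ := hK.elim_directed_cover (fun n => interior (BB u M n))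
    (fun n => isOpen_interior) h (directed_of_isDirected_le fun m n hmn =>
      interior_mono fun t ht => le_trans (a := nS M (u t)) ht (by exact_mod_cast hmn))
  exact ⟨n, by simp, fun t ht => by
    have h1 : t ∈ BB u M n := interior_subset (hn ht)
    exact h1⟩

lemma step_right (hu : IsNLS p Set.univ u) {k : ℕ} (hk : 1 ≤ k) {a t1 : ℝ} {n : ℕ}
    (hat : a ≤ t1) (ha : nS (2 * (k + 1)) (u a) ≤ n)
    (hG : Set.Ioc a t1 ⊆ Gd u (2 * (k + 1)))
    (hr : (GG (2 * (k + 1)) p (LL p n) + 1) * ENNReal.ofReal (t1 - a) ≤ 1 / 2) :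
    nS (2 * (k + 1)) (u t1) ≤ 2 * n := by
  set M := 2 * (k + 1) with hM
  rcases eq_or_lt_of_le hat with rfl | hlt
  · refine ha.trans ?_
    rw [two_mul]; exact le_self_add
  have hcomp : ∀ s, a < s → ∃ Q : ℝ≥0∞, Q ≠ ⊤ ∧ ∀ t ∈ Set.Icc s t1, nS M (u t) ≤ Q :=
    fun s hs => Gd_compact isCompact_Icc (fun t ht => hG ⟨lt_of_lt_of_le hs ht.1, ht.2⟩)
  set L1 := LL p (nS 1 (u t1))
  have hL1 : L1 ≠ ⊤ := LL_ne_top p (nS_ne_top (uSP hu t1) 1)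
  have hL : ∀ τ ∈ Set.Ioc a t1, nS 1 (u τ) ≤ L1 := by
    intro τ hτ
    obtain ⟨Q, hQ, hb⟩ := hcomp τ hτ.1
    exact H1_cons hu hQ hk hb ⟨le_rfl, hτ.2⟩ ⟨hτ.2, le_rfl⟩
  obtain ⟨r, hr0, hrs⟩ := exists_small (GG_ne_top M p hL1)
  set s0 := min t1 (a + r)
  have hs0 : a < s0 := lt_min hlt (by linarith)
  have hs0t : s0 ≤ t1 := min_le_left _ _
  have hs0r : s0 ≤ a + r := min_le_right _ _
  obtain ⟨Q0, hQ0, hb0⟩ := hcomp s0 hs0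
  have hfin := nS_ne_top (uSP hu s0) M
  have hb1 : ∀ s ∈ Set.Ioc a s0, nS M (u s) ≤ 2 * nS M (u s0) := by
    intro s hs
    obtain ⟨Q, hQ, hb⟩ := hcomp s hs.1
    exact growth hu hQ (by omega) le_rfl (fun t ht => hb t ⟨ht.1, ht.2.trans hs0t⟩) hL1
      (fun t ht => hL t ⟨lt_of_lt_of_le hs.1 ht.1, ht.2.trans hs0t⟩)
      (hrs _ (by linarith [hs.1])) ⟨le_rfl, hs.2⟩ ⟨hs.2, le_rfl⟩
  have hQ' : (n : ℝ≥0∞) + 2 * nS M (u s0) + Q0 ≠ ⊤ :=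
    ENNReal.add_ne_top.2 ⟨ENNReal.add_ne_top.2 ⟨by simp, ENNReal.mul_ne_top (by simp) hfin⟩, hQ0⟩
  have hb2 : ∀ t ∈ Set.Icc a t1, nS M (u t) ≤ (n : ℝ≥0∞) + 2 * nS M (u s0) + Q0 := by
    intro t ht
    rcases eq_or_lt_of_le ht.1 with rfl | h1
    · exact ha.trans (le_self_add.trans le_self_add)
    rcases le_total t s0 with h2 | h2
    · exact (hb1 t ⟨h1, h2⟩).trans (le_add_self.trans le_self_add)
    · exact (hb0 t ⟨h2, ht.2⟩).trans le_add_self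
  have hb3 : ∀ t ∈ Set.Icc a t1, nS 1 (u t) ≤ LL p n := fun t ht =>
    (H1_cons hu hQ' hk hb2 ht ⟨le_rfl, hat⟩).trans
      (LL_mono p ((nS_mono (by omega) _).trans ha))
  refine (growth hu hQ' (by omega) le_rfl hb2 (LL_ne_top p (by simp)) hb3 hr
    (t := t1) (t' := a) ⟨hat, le_rfl⟩ ⟨le_rfl, hat⟩).trans ?_
  gcongr

/-- time reversal -/
def rev (u : ℝ → ℝ → ℂ) (t x : ℝ) : ℂ := (starRingEnd ℂ) (u (-t) x)

lemma nS_rev (s : ℕ) (t : ℝ) : nS s (rev u t) = nS s (u (-t)) := nS_conj s (u (-t))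

lemma iter_conj {f : ℝ → ℂ} (hf : SP f) (n : ℕ) (x : ℝ) :
    iteratedDeriv n (fun x => (starRingEnd ℂ) (f x)) x = (starRingEnd ℂ) (iteratedDeriv n f x) := by
  induction n generalizing x with
  | zero => simp
  | succ n ih =>
    rw [iteratedDeriv_succ, iteratedDeriv_succ]
    have : iteratedDeriv n (fun x => (starRingEnd ℂ) (f x)) =
      fun x => (starRingEnd ℂ) (iteratedDeriv n f x) := funext ih
    rw [this]
    exact ((hf.iter n).diff x).star.deriv

lemma rev_NLS (hu : IsNLS p Set.univ u) : IsNLS p Set.univ (rev u) := by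
  have hd : ∀ x t, HasDerivAt (fun s => rev u s x) (-(starRingEnd ℂ) (ut p u (-t) x)) t := by
    intro x t
    have h1 := (u_hasDerivAt hu (-t) x).scomp t (hasDerivAt_neg t)
    have h2 := h1.star
    refine HasDerivAt.congr_deriv h2 ?_
    simp
  refine ⟨fun t _ => (uSP hu (-t)).conj.smooth, fun t _ => (uSP hu (-t)).conj.per,
    fun x t _ => (hd x t).differentiableAt, fun t _ x => ?_⟩
  rw [(hd x t).deriv]
  have e : pD 2 (rev u t) x = (starRingEnd ℂ) (iteratedDeriv 2 (u (-t)) x) :=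
    iter_conj (uSP hu (-t)) 2 x
  rw [e]
  simp only [rev, ut, nl, RCLike.norm_conj, map_add, map_mul, map_neg, Complex.conj_I, map_pow,
    Complex.conj_ofReal]
  linear_combination ((starRingEnd ℂ) (iteratedDeriv 2 (u (-t)) x) -
    (starRingEnd ℂ) (u (-t) x) * (‖u (-t) x‖:ℂ) ^ (2 * p)) * Complex.I_sq

lemma BB_rev (M n : ℕ) : BB (rev u) M n = Neg.neg ⁻¹' (BB u M n) := by
  ext t; simp [BB, nS_rev]

lemma Gd_rev (M : ℕ) : Gd (rev u) M = Neg.neg ⁻¹' (Gd u M) := by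
  unfold Gd
  rw [Set.preimage_iUnion]
  congr 1
  funext n
  rw [BB_rev]
  exact ((Homeomorph.neg ℝ).preimage_interior _).symm

lemma step_left (hu : IsNLS p Set.univ u) {k : ℕ} (hk : 1 ≤ k) {a t1 : ℝ} {n : ℕ}
    (hat : t1 ≤ a) (ha : nS (2 * (k + 1)) (u a) ≤ n)
    (hG : Set.Ico t1 a ⊆ Gd u (2 * (k + 1)))
    (hr : (GG (2 * (k + 1)) p (LL p n) + 1) * ENNReal.ofReal (a - t1) ≤ 1 / 2) :
    nS (2 * (k + 1)) (u t1) ≤ 2 * n := by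
  have := step_right (rev_NLS hu) hk (a := -a) (t1 := -t1) (n := n) (by linarith)
    (by rwa [nS_rev, neg_neg]) (by
      intro t ht
      rw [Gd_rev]
      exact hG ⟨by linarith [ht.2], by linarith [ht.1]⟩)
    (by rwa [show -t1 - -a = a - t1 by ring])
  rwa [nS_rev, neg_neg] at this

set_option maxHeartbeats 1000000 in
lemma Gd_univ (hu : IsNLS p Set.univ u) {k : ℕ} (hk : 1 ≤ k) :
    Gd u (2 * (k + 1)) = Set.univ := by
  set M := 2 * (k + 1) with hM
  by_contra hne
  set K := (Gd u M)ᶜ with hKdef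
  have hKc : IsClosed K := (isOpen_iUnion fun n => isOpen_interior).isClosed_compl
  have hKne : K.Nonempty := Set.nonempty_compl.2 hne
  have : Nonempty K := hKne.to_subtype
  have : CompleteSpace K := hKc.completeSpace_coe
  obtain ⟨n, c, hc⟩ := nonempty_interior_of_iUnion_of_closed
    (f := fun n : ℕ => (Subtype.val ⁻¹' (BB u M n) : Set K))
    (fun n => (BB_closed hu (by omega) n).preimage continuous_subtype_val)
    (by
      ext x
      simp only [Set.mem_iUnion, Set.mem_preimage, Set.mem_univ, iff_true]
      obtain ⟨n, hn⟩ := ENNReal.exists_nat_gt (nS_ne_top (uSP hu x) M)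
      exact ⟨n, hn.le⟩)
  rw [mem_interior_iff_mem_nhds, Metric.mem_nhds_iff] at hc
  obtain ⟨ε, hε, hball⟩ := hc
  obtain ⟨r0, hr0, hrs⟩ := exists_small (GG_ne_top M p (LL_ne_top p (ENNReal.natCast_ne_top n)))
  set r := min ε r0
  have hr : 0 < r := lt_min hε hr0
  have hKn : ∀ y ∈ K, |y - c| < r → nS M (u y) ≤ n := fun y hy hyc => by
    have : (⟨y, hy⟩ : K) ∈ Metric.ball c ε := by
      rw [Metric.mem_ball, Subtype.dist_eq, Real.dist_eq]
      exact lt_of_lt_of_le hyc (min_le_left _ _)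
    have h1 := hball this
    exact h1
  have hcG : (c : ℝ) ∉ Gd u M := c.2
  apply hcG
  refine Set.mem_iUnion.2 ⟨2 * n, ?_⟩
  rw [mem_interior_iff_mem_nhds]
  refine Filter.mem_of_superset (Metric.ball_mem_nhds (c:ℝ) hr) ?_
  intro t ht
  rw [Metric.mem_ball, Real.dist_eq] at ht
  have hrr : r ≤ r0 := min_le_right _ _
  have hgoal : nS M (u t) ≤ 2 * n := by
    rcases le_total (c:ℝ) t with h | h
    · rw [abs_of_nonneg (by linarith)] at ht
      obtain ⟨a, ⟨haK, hac, hat⟩, hmax⟩ := ((isCompact_Icc (a := (c:ℝ)) (b := t)).inter_left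
        hKc).exists_isGreatest ⟨c, c.2, le_rfl, h⟩
      refine step_right hu hk hat (hKn a haK ?_) ?_ (hrs _ (by linarith))
      · rw [abs_of_nonneg (by linarith)]; linarith
      · intro τ hτ
        by_contra hcon
        have := hmax ⟨hcon, hac.trans hτ.1.le, hτ.2⟩
        linarith [hτ.1]
    · rw [abs_of_nonpos (by linarith)] at ht
      obtain ⟨a, ⟨haK, hta, hac⟩, hmin⟩ := ((isCompact_Icc (a := t) (b := (c:ℝ))).inter_left
        hKc).exists_isLeast ⟨c, c.2, h, le_rfl⟩
      refine step_left hu hk hta (hKn a haK ?_) ?_ (hrs _ (by linarith))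
      · rw [abs_of_nonpos (by linarith)]; linarith
      · intro τ hτ
        by_contra hcon
        have := hmin ⟨hcon, hτ.1, hτ.2.le.trans hac⟩
        linarith [hτ.2]
  change nS M (u t) ≤ ((2 * n : ℕ) : ℝ≥0∞)
  push_cast
  exact hgoal

lemma loc_bdd (hu : IsNLS p Set.univ u) {k : ℕ} (hk : 1 ≤ k) (a b : ℝ) :
    ∃ Q : ℝ≥0∞, Q ≠ ⊤ ∧ ∀ t ∈ Set.Icc a b, nS (2 * (k + 1)) (u t) ≤ Q :=
  Gd_compact isCompact_Icc (by rw [Gd_univ hu hk]; exact Set.subset_univ _)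
end

/-! ### The bilinear resonance estimate -/

/-- resonance weight -/
def kap (γ : ℝ) (z : ℤ) : ℝ≥0∞ := ENNReal.ofReal ((1 + |(z:ℝ)|) ^ (-γ))

lemma kap_mul (γ δ : ℝ) (z : ℤ) : kap γ z * kap δ z = kap (γ + δ) z := by
  unfold kap
  rw [← ENNReal.ofReal_mul (by positivity), ← Real.rpow_add (by positivity)]
  congr 2; ring

lemma kap_le_one {γ : ℝ} (hγ : 0 ≤ γ) (z : ℤ) : kap γ z ≤ 1 := by
  unfold kap
  rw [← ENNReal.ofReal_one]
  apply ENNReal.ofReal_le_ofReal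
  exact Real.rpow_le_one_of_one_le_of_nonpos (by linarith [abs_nonneg (z:ℝ)]) (by linarith)

lemma kap_anti {γ δ : ℝ} (h : γ ≤ δ) (z : ℤ) : kap δ z ≤ kap γ z := by
  unfold kap
  apply ENNReal.ofReal_le_ofReal
  exact Real.rpow_le_rpow_of_exponent_le (by linarith [abs_nonneg (z:ℝ)]) (by linarith)

lemma rpow_summable {g : ℝ} (hg : 1 < g) : Summable (fun n : ℤ => (1 + |(n:ℝ)|) ^ (-g)) := by
  have h := Real.summable_abs_int_rpow hg
  have h0 : Summable (fun l : ℤ => if l = 0 then (1:ℝ) else 0) :=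
    (hasSum_ite_eq 0 (1:ℝ)).summable
  refine Summable.of_nonneg_of_le (fun l => by positivity) (fun l => ?_) (h0.add h)
  by_cases hl : l = 0
  · subst hl; simp; positivity
  · simp only [hl, if_false, zero_add]
    have : 0 < |(l:ℝ)| := by positivity
    exact Real.rpow_le_rpow_of_nonpos this (by linarith) (by linarith)

lemma kap_lin : ∃ C : ℝ≥0∞, C ≠ ⊤ ∧ ∑' z : ℤ, kap (5/4) z ≤ C :=
  ⟨_, tsum_ofReal_enorm_ne_top (rpow_summable (g := 5/4) (by norm_num)) (fun _ => by positivity),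
    le_rfl⟩

lemma jb_rpow_summable : Summable (fun n : ℤ => (jb n) ^ (-(3/4:ℝ))) := by
  refine Summable.of_nonneg_of_le (fun l => Real.rpow_nonneg (jb_pos l).le _) (fun l => ?_)
    ((rpow_summable (g := 3/2) (by norm_num)).mul_left (2 ^ (3/4 : ℝ)))
  have h1 : (1 + |(l:ℝ)|) ^ 2 / 2 ≤ jb l := by
    unfold jb; nlinarith [sq_abs (l:ℝ), sq_nonneg (|(l:ℝ)| - 1)]
  calc jb l ^ (-(3/4:ℝ)) ≤ ((1 + |(l:ℝ)|) ^ 2 / 2) ^ (-(3/4:ℝ)) :=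
        Real.rpow_le_rpow_of_nonpos (by positivity) h1 (by norm_num)
    _ = _ := by
        rw [Real.div_rpow (by positivity) (by norm_num), ← Real.rpow_natCast,
          ← Real.rpow_mul (by positivity), Real.rpow_neg (by norm_num : (0:ℝ) ≤ 2)]
        rw [div_inv_eq_mul, mul_comm]
        congr 2; norm_num

/-- constant for shifted quadratic sums -/
def cQ : ℝ≥0∞ := ∑' n : ℤ, ENNReal.ofReal ((jb n / 2) ^ (-(3/4:ℝ)))

lemma cQ_ne_top : cQ ≠ ⊤ := by
  refine tsum_ofReal_enorm_ne_top ?_ (fun n => Real.rpow_nonneg (by have := jb_pos n; positivity) _)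
  refine (jb_rpow_summable.mul_right ((2:ℝ) ^ (-(3/4:ℝ)))⁻¹).congr fun n => ?_
  rw [Real.div_rpow (jb_pos n).le (by norm_num)]
  exact (div_eq_mul_inv _ _).symm

lemma quad_shift (y : ℝ) :
    ∑' j : ℤ, ENNReal.ofReal ((1 + (2 * (j:ℝ) - y) ^ 2 / 2) ^ (-(3/4:ℝ))) ≤ cQ := by
  rw [← (Equiv.addRight (round (y/2))).tsum_eq]
  unfold cQ
  refine ENNReal.tsum_le_tsum fun j => ENNReal.ofReal_le_ofReal ?_
  refine Real.rpow_le_rpow_of_nonpos (by have := jb_pos j; positivity) ?_ (by norm_num)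
  have h := abs_sub_round (y/2)
  simp only [Equiv.coe_addRight]
  push_cast
  unfold jb
  rw [abs_le] at h
  nlinarith [sq_nonneg ((j:ℝ) - 2 * (y/2 - round (y/2))), h.1, h.2]

lemma kap_quad (l m s : ℤ) (hs : s = 1 ∨ s = -1) :
    ∑' j : ℤ, kap (3/4) (s * j ^ 2 + s * (l - j) ^ 2 + m) ≤ 2 * cQ := by
  obtain ⟨δ, hδ⟩ : ∃ δ : ℝ, ∀ z : ℝ, min ((z - δ) ^ 2) ((z + δ) ^ 2) ≤
      |z ^ 2 + ((l:ℝ) ^ 2 + 2 * (s * m))| := by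
    set D : ℝ := (l:ℝ) ^ 2 + 2 * (s * m)
    rcases le_total 0 D with hD | hD
    · refine ⟨0, fun z => (min_le_left _ _).trans ?_⟩
      rw [abs_of_nonneg (by positivity)]; nlinarith
    · refine ⟨Real.sqrt (-D), fun z => ?_⟩
      have e : z ^ 2 + D = (z - Real.sqrt (-D)) * (z + Real.sqrt (-D)) := by
        have := Real.sq_sqrt (by linarith : 0 ≤ -D)
        nlinarith
      rw [e, abs_mul]
      rcases le_total |z - Real.sqrt (-D)| |z + Real.sqrt (-D)| with h | h
      · refine (min_le_left _ _).trans ?_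
        rw [← sq_abs, sq]; gcongr
      · refine (min_le_right _ _).trans ?_
        rw [← sq_abs, sq]; gcongr
  have key : ∀ j : ℤ, kap (3/4) (s * j ^ 2 + s * (l - j) ^ 2 + m) ≤
      ENNReal.ofReal ((1 + (2 * (j:ℝ) - (l + δ)) ^ 2 / 2) ^ (-(3/4:ℝ))) +
      ENNReal.ofReal ((1 + (2 * (j:ℝ) - (l - δ)) ^ 2 / 2) ^ (-(3/4:ℝ))) := by
    intro j
    have h1 := hδ (2 * j - l)
    have e : |((s * j ^ 2 + s * (l - j) ^ 2 + m : ℤ) : ℝ)| =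
        |(2 * (j:ℝ) - l) ^ 2 + ((l:ℝ) ^ 2 + 2 * (s * m))| / 2 := by
      have e1 : (2 * (j:ℝ) - l) ^ 2 + ((l:ℝ) ^ 2 + 2 * (s * m)) =
        2 * s * ((s * j ^ 2 + s * (l - j) ^ 2 + m : ℤ) : ℝ) := by
        rcases hs with rfl | rfl <;> push_cast <;> ring
      rw [e1, abs_mul]
      rcases hs with rfl | rfl <;> norm_num
    unfold kap
    rw [e]
    rcases min_le_iff.1 h1 with h | h
    · refine le_trans (ENNReal.ofReal_le_ofReal ?_) le_self_add
      refine Real.rpow_le_rpow_of_nonpos (by positivity) ?_ (by norm_num)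
      have : (2 * (j:ℝ) - (l + δ)) = (2 * (j:ℝ) - l - δ) := by ring
      rw [this]; linarith
    · refine le_trans (ENNReal.ofReal_le_ofReal ?_) le_add_self
      refine Real.rpow_le_rpow_of_nonpos (by positivity) ?_ (by norm_num)
      have : (2 * (j:ℝ) - (l - δ)) = (2 * (j:ℝ) - l + δ) := by ring
      rw [this]; linarith
  refine (ENNReal.tsum_le_tsum key).trans ?_
  rw [ENNReal.tsum_add, two_mul]
  exact add_le_add (quad_shift _) (quad_shift _)

/-- linear-sum constant -/
def cLn : ℝ≥0∞ := ∑' z : ℤ, kap (5/4) z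

lemma cLn_ne_top : cLn ≠ ⊤ :=
  tsum_ofReal_enorm_ne_top (rpow_summable (g := 5/4) (by norm_num)) (fun _ => by positivity)

lemma kap_pair (l m s s' : ℤ) (hs : s = 1 ∨ s = -1) (hs' : s' = 1 ∨ s' = -1) (hl : l ≠ 0) :
    ∑' j : ℤ, kap (5/4) (s * j ^ 2 + s' * (l - j) ^ 2 + m) ≤ 2 * cQ + cLn := by
  by_cases h : s = s'
  · subst h
    refine le_trans (ENNReal.tsum_le_tsum fun j => kap_anti (γ := 3/4) (δ := 5/4) (by norm_num) _) ?_
    exact (kap_quad l m s hs).trans le_self_add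
  · have h2 : s' = - s := by omega
    subst h2
    refine le_trans ?_ le_add_self
    have hinj : Function.Injective (fun j : ℤ => s * j ^ 2 + -s * (l - j) ^ 2 + m) := by
      intro i j hij
      simp only at hij
      have h1 : s * (2 * l * (i - j)) = 0 := by linear_combination hij
      have hs0 : s ≠ 0 := by omega
      have : i - j = 0 := by
        rcases mul_eq_zero.1 h1 with h | h
        · exact absurd h hs0
        · rcases mul_eq_zero.1 h with h | h
          · omega
          · exact h
      omega
    exact ENNReal.tsum_comp_le_tsum_of_injective hinj (kap (5/4))

lemma schur {P P' : Type*} (F : P → ℝ≥0∞) (G : P' → ℝ≥0∞) (K1 K2 : P → P' → ℝ≥0∞)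
    (C1 C2 : ℝ≥0∞) (h1 : ∀ p, ∑' q, K1 p q ^ 2 ≤ C1) (h2 : ∀ q, ∑' p, K2 p q ^ 2 ≤ C2) :
    (∑' p, ∑' q, F p * G q * (K1 p q * K2 p q)) ^ 2 ≤
      C1 * C2 * ((∑' p, F p ^ 2) * ∑' q, G q ^ 2) := by
  rw [← ENNReal.tsum_prod (f := fun p q => F p * G q * (K1 p q * K2 p q))]
  have e : ∀ x : P × P', F x.1 * G x.2 * (K1 x.1 x.2 * K2 x.1 x.2) =
    (F x.1 * K1 x.1 x.2) * (G x.2 * K2 x.1 x.2) := fun x => by ring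
  simp_rw [e]
  refine (cs_tsum _ _).trans ?_
  rw [ENNReal.tsum_prod (f := fun p q => (F p * K1 p q) ^ 2),
    ENNReal.tsum_prod (f := fun p q => (G q * K2 p q) ^ 2), ENNReal.tsum_comm (f := fun p q => (G q * K2 p q) ^ 2)]
  simp_rw [mul_pow, ENNReal.tsum_mul_left]
  calc _ ≤ (∑' p, F p ^ 2 * C1) * ∑' q, G q ^ 2 * C2 := by
        gcongr with p q
        · exact h1 p
        · exact h2 q
    _ = _ := by rw [ENNReal.tsum_mul_right, ENNReal.tsum_mul_right]; ring

lemma tsum_pair (φ : ℤ → ℤ → ℝ≥0∞) (l : ℤ) :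
    ∑' q : ℤ × ℤ, (if q.1 + q.2 = l then φ q.1 q.2 else 0) = ∑' j, φ j (l - j) := by
  rw [ENNReal.tsum_prod (f := fun a b => if a + b = l then φ a b else 0)]
  congr 1
  funext a
  rw [tsum_eq_single (l - a)]
  · simp
  · intro b hb
    rw [if_neg]; intro h; apply hb; omega

lemma pair_sq (f g : ℤ → ℝ≥0∞) (l : ℤ) :
    (∑' q : ℤ × ℤ, (if q.1 + q.2 = l then f q.1 * g q.2 else 0)) ^ 2 ≤
      (∑' n, f n ^ 2) * ∑' n, g n ^ 2 := by
  rw [tsum_pair (fun a b => f a * g b)]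
  refine (cs_tsum _ _).trans ?_
  rw [tsum_shift (fun n => g n ^ 2)]

lemma tsum_prod_mul (f g : ℤ → ℝ≥0∞) :
    ∑' q : ℤ × ℤ, (f q.1 * g q.2) ^ 2 = (∑' n, f n ^ 2) * ∑' n, g n ^ 2 := by
  rw [ENNReal.tsum_prod (f := fun a b => (f a * g b) ^ 2)]
  simp_rw [mul_pow, ENNReal.tsum_mul_left, ENNReal.tsum_mul_right]

/-- constant in the four-fold estimate -/
def cF : ℝ≥0∞ := 4 * ((2 * cQ + cLn) * (2 * cQ) + 1)

lemma cF_ne_top : cF ≠ ⊤ := by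
  unfold cF
  have h1 := cQ_ne_top
  have h2 := cLn_ne_top
  finiteness

lemma four_base (f0 f1 f2 f3 : ℤ → ℝ≥0∞) (s s2 s3 l m : ℤ) (hs : s = 1 ∨ s = -1)
    (hs2 : s2 = 1 ∨ s2 = -1) (hs3 : s3 = 1 ∨ s3 = -1) :
    (∑' P : ℤ × ℤ, ∑' R : ℤ × ℤ, if P.1 + P.2 + R.1 + R.2 = l then
      f0 P.1 * f1 P.2 * (f2 R.1 * f3 R.2) *
        kap 1 (s * P.1 ^ 2 + s * P.2 ^ 2 + s2 * R.1 ^ 2 + s3 * R.2 ^ 2 + m) else 0) ^ 2 ≤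
      cF * ((∑' n, f0 n ^ 2) * (∑' n, f1 n ^ 2) * ((∑' n, f2 n ^ 2) * ∑' n, f3 n ^ 2)) := by
  let Om : ℤ × ℤ → ℤ × ℤ → ℤ := fun P R =>
    s * P.1 ^ 2 + s * P.2 ^ 2 + s2 * R.1 ^ 2 + s3 * R.2 ^ 2 + m
  let K1 : ℤ × ℤ → ℤ × ℤ → ℝ≥0∞ := fun P R =>
    if P.1 + P.2 + R.1 + R.2 = l ∧ R.1 + R.2 ≠ 0 then kap (5/8) (Om P R) else 0
  let K2 : ℤ × ℤ → ℤ × ℤ → ℝ≥0∞ := fun P R =>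
    if P.1 + P.2 + R.1 + R.2 = l then kap (3/8) (Om P R) else 0
  let F : ℤ × ℤ → ℝ≥0∞ := fun P => f0 P.1 * f1 P.2
  let G : ℤ × ℤ → ℝ≥0∞ := fun R => f2 R.1 * f3 R.2
  have hK1 : ∀ P, ∑' R, K1 P R ^ 2 ≤ 2 * cQ + cLn := by
    intro P
    by_cases hl : l - P.1 - P.2 = 0
    · have : ∀ R, K1 P R ^ 2 = 0 := by
        intro R
        simp only [K1]
        rw [if_neg (by rintro ⟨h1, h2⟩; apply h2; omega)]; simp
      simp [this]
    · have : ∀ R : ℤ × ℤ, K1 P R ^ 2 ≤ if R.1 + R.2 = l - P.1 - P.2 then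
          kap (5/4) (s2 * R.1 ^ 2 + s3 * R.2 ^ 2 + (s * P.1 ^ 2 + s * P.2 ^ 2 + m)) else 0 := by
        intro R
        simp only [K1]
        split_ifs with h1 h2 h2
        · rw [sq, kap_mul]
          apply le_of_eq
          congr 1
          · norm_num
          · simp only [Om]; ring
        · omega
        · simp
        · simp
      refine (ENNReal.tsum_le_tsum this).trans ?_
      rw [tsum_pair (fun a b => kap (5/4) (s2 * a ^ 2 + s3 * b ^ 2 + (s * P.1 ^ 2 + s * P.2 ^ 2 + m)))]
      exact kap_pair _ _ _ _ hs2 hs3 hl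
  have hK2 : ∀ R, ∑' P, K2 P R ^ 2 ≤ 2 * cQ := by
    intro R
    have : ∀ P : ℤ × ℤ, K2 P R ^ 2 = if P.1 + P.2 = l - R.1 - R.2 then
        kap (3/4) (s * P.1 ^ 2 + s * P.2 ^ 2 + (s2 * R.1 ^ 2 + s3 * R.2 ^ 2 + m)) else 0 := by
      intro P
      simp only [K2]
      split_ifs with h1 h2 h2
      · rw [sq, kap_mul]
        congr 1
        · norm_num
        · simp only [Om]; ring
      · omega
      · omega
      · simp
    simp_rw [this]
    rw [tsum_pair (fun a b => kap (3/4) (s * a ^ 2 + s * b ^ 2 + (s2 * R.1 ^ 2 + s3 * R.2 ^ 2 + m)))]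
    exact kap_quad _ _ _ hs
  have hA := schur F G K1 K2 _ _ hK1 hK2
  have hF : ∑' P, F P ^ 2 = (∑' n, f0 n ^ 2) * ∑' n, f1 n ^ 2 := tsum_prod_mul f0 f1
  have hG : ∑' P, G P ^ 2 = (∑' n, f2 n ^ 2) * ∑' n, f3 n ^ 2 := tsum_prod_mul f2 f3
  have hB1 := pair_sq f0 f1 l
  have hB2 := pair_sq f2 f3 0
  set T1 := ∑' P, ∑' R, F P * G R * (K1 P R * K2 P R)
  set U1 := ∑' q : ℤ × ℤ, (if q.1 + q.2 = l then f0 q.1 * f1 q.2 else 0)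
  set U2 := ∑' q : ℤ × ℤ, (if q.1 + q.2 = 0 then f2 q.1 * f3 q.2 else 0)
  have hle : (∑' P : ℤ × ℤ, ∑' R : ℤ × ℤ, if P.1 + P.2 + R.1 + R.2 = l then
      f0 P.1 * f1 P.2 * (f2 R.1 * f3 R.2) *
        kap 1 (s * P.1 ^ 2 + s * P.2 ^ 2 + s2 * R.1 ^ 2 + s3 * R.2 ^ 2 + m) else 0) ≤ T1 + U1 * U2 := by
    have e : U1 * U2 = ∑' P : ℤ × ℤ, ∑' R : ℤ × ℤ, (if P.1 + P.2 = l then f0 P.1 * f1 P.2 else 0) *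
        (if R.1 + R.2 = 0 then f2 R.1 * f3 R.2 else 0) := by
      simp_rw [ENNReal.tsum_mul_left, ENNReal.tsum_mul_right]; rfl
    rw [e, ← ENNReal.tsum_add]
    refine ENNReal.tsum_le_tsum fun P => ?_
    rw [← ENNReal.tsum_add]
    refine ENNReal.tsum_le_tsum fun R => ?_
    by_cases h1 : P.1 + P.2 + R.1 + R.2 = l
    · rw [if_pos h1]
      by_cases h2 : R.1 + R.2 = 0
      · rw [if_pos h2, if_pos (by omega)]
        refine le_trans ?_ le_add_self
        exact mul_le_of_le_one_right' (kap_le_one (by norm_num) _)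
      · refine le_trans (le_of_eq ?_) le_self_add
        simp only [K1, K2, F, G]
        rw [if_pos ⟨h1, h2⟩, if_pos h1, kap_mul]
        norm_num [Om]
    · rw [if_neg h1]; exact zero_le
  refine (pow_le_pow_left' hle 2).trans ((ennreal_add_sq _ _).trans ?_)
  rw [mul_pow U1, cF]
  rw [hF, hG] at hA
  calc _ ≤ 4 * ((2 * cQ + cLn) * (2 * cQ) * ((∑' n, f0 n ^ 2) * (∑' n, f1 n ^ 2) *
        ((∑' n, f2 n ^ 2) * ∑' n, f3 n ^ 2)) + ((∑' n, f0 n ^ 2) * (∑' n, f1 n ^ 2)) *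
        ((∑' n, f2 n ^ 2) * ∑' n, f3 n ^ 2)) := by gcongr
    _ = _ := by ring


lemma res_pair {a b c d m Q x y z e w : ℝ} (hm : 1 ≤ m) (hQ : 1 ≤ Q) (hd : 0 ≤ d) (hc : 0 ≤ c)
    (hbc : c ≤ b) (ha : a ≤ m * b)
    (hdc : 4 * m * Q * d ≤ c) (hz : |z| ≤ a) (hxy : b * c ≤ |x * y|) (he : |e| ≤ Q * d)
    (hsum : x + y + z = e) (hw : |w| ≤ Q * d ^ 2) :
    c ^ 2 ≤ |x ^ 2 + y ^ 2 - z ^ 2 + w| := by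
  have e1 : x ^ 2 + y ^ 2 - z ^ 2 + w = -(2 * (x * y)) + (-(2 * (e * z)) + e ^ 2 + w) := by
    have : z = e - x - y := by linarith
    subst this; ring
  have hQd : 4 * (m * (Q * d)) ≤ c := by linarith
  have hQd0 : 0 ≤ Q * d := by positivity
  have hQd1 : 4 * (Q * d) ≤ c := by nlinarith
  have h1 : |e * z| ≤ b * c / 4 := by
    rw [abs_mul]
    calc |e| * |z| ≤ (Q * d) * (m * b) := by gcongr; exact hz.trans ha
      _ = (m * (Q * d)) * b := by ring
      _ ≤ (c / 4) * b := mul_le_mul_of_nonneg_right (by linarith) (hc.trans hbc)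
      _ = _ := by ring
  have h2 : e ^ 2 ≤ b * c / 16 := by
    rw [← sq_abs]
    calc |e| ^ 2 ≤ (c / 4) ^ 2 := by gcongr; linarith
      _ = c * c / 16 := by ring
      _ ≤ _ := by gcongr
  have h3 : |w| ≤ b * c / 16 := by
    calc |w| ≤ Q * d ^ 2 := hw
      _ ≤ (Q * d) ^ 2 := by nlinarith [sq_nonneg d]
      _ ≤ (c / 4) ^ 2 := by gcongr; linarith
      _ = c * c / 16 := by ring
      _ ≤ _ := by gcongr
  have h4 : |-(2 * (e * z)) + e ^ 2 + w| ≤ b * c := by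
    have := abs_add_three (-(2 * (e * z))) (e ^ 2) w
    rw [abs_neg, abs_mul, abs_two, abs_of_nonneg (sq_nonneg e)] at this
    nlinarith [mul_nonneg (hc.trans hbc) hc]
  have h5 : |-(2 * (x * y))| ≥ 2 * (b * c) := by
    rw [abs_neg, abs_mul, abs_two]; linarith
  have h6 := abs_sub_abs_le_abs_sub (-(2 * (x * y))) (-(-(2 * (e * z)) + e ^ 2 + w))
  rw [sub_neg_eq_add, abs_neg (-(2 * (e * z)) + e ^ 2 + w)] at h6
  rw [e1]
  nlinarith

lemma res_c {z0 z1 z2 z3 s0 s1 s2 s3 ρ ω q : ℝ} (hq : 0 ≤ q)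
    (h01 : |z1| ≤ |z0|) (h12 : |z2| ≤ |z1|) (h23 : |z3| ≤ |z2|)
    (hs0 : s0 = 1 ∨ s0 = -1) (hs1 : s1 = 1 ∨ s1 = -1) (hs2 : s2 = 1 ∨ s2 = -1)
    (hs3 : s3 = 1 ∨ s3 = -1)
    (hρ : |ρ| ≤ q * |z3|) (hω : |ω| ≤ q * |z3| ^ 2) (hsum : z0 + z1 + z2 + z3 + ρ = 0) :
    |z2| ^ 2 ≤ 4 * (3 + q) * (1 + q) *
      (|s0 * z0 ^ 2 + s1 * z1 ^ 2 + s2 * z2 ^ 2 + s3 * z3 ^ 2 + ω| + |z2| * |z3|) := by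
  set Ω := s0 * z0 ^ 2 + s1 * z1 ^ 2 + s2 * z2 ^ 2 + s3 * z3 ^ 2 + ω with hΩ
  have n0 := abs_nonneg z0
  have n1 := abs_nonneg z1
  have n2 := abs_nonneg z2
  have n3 := abs_nonneg z3
  have nΩ := abs_nonneg Ω
  by_cases hd : 4 * (3 + q) * (1 + q) * |z3| ≤ |z2|
  swap
  · push Not at hd
    have hK : 0 ≤ 4 * (3 + q) * (1 + q) := by positivity
    nlinarith [mul_nonneg hK nΩ]
  have hab : |z0| ≤ (3 + q) * |z1| := by
    have e : z0 = -(z1 + z2 + z3 + ρ) := by linarith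
    have h : |z0| ≤ |z1| + |z2| + |z3| + |ρ| := by
      rw [e, abs_neg]
      have := abs_add_three (z1 + z2) z3 ρ
      have := abs_add_le z1 z2
      linarith
    have : q * |z3| ≤ q * |z1| := mul_le_mul_of_nonneg_left (h23.trans h12) hq
    linarith
  suffices h : |z2| ^ 2 ≤ |Ω| by
    have : 1 ≤ 4 * (3 + q) * (1 + q) := by nlinarith
    nlinarith [mul_nonneg n2 n3]
  have hw : |s3 * z3 ^ 2 + ω| ≤ (1 + q) * |z3| ^ 2 := by
    refine (abs_add_le _ _).trans ?_
    have : |s3 * z3 ^ 2| = |z3| ^ 2 := by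
      rcases hs3 with rfl | rfl <;> simp
    rw [this]; linarith
  have he : |-(z3 + ρ)| ≤ (1 + q) * |z3| := by
    rw [abs_neg]; refine (abs_add_le _ _).trans ?_; linarith
  have hw' : |-(s3 * z3 ^ 2 + ω)| ≤ (1 + q) * |z3| ^ 2 := by rwa [abs_neg]
  have p01 : |z1| * |z2| ≤ |z0 * z1| := by rw [abs_mul, mul_comm |z0|]; exact mul_le_mul_of_nonneg_left (h12.trans h01) n1
  have p02 : |z1| * |z2| ≤ |z0 * z2| := by rw [abs_mul]; gcongr
  have p12 : |z1| * |z2| ≤ |z1 * z2| := by rw [abs_mul]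
  have m1 : (1:ℝ) ≤ 3 + q := by linarith
  have m2 : (1:ℝ) ≤ 1 + q := by linarith
  have hQd1 : (1 + q) * |z3| ^ 2 ≤ |z2| ^ 2 := by
    have : (1 + q) * |z3| ≤ |z2| := by nlinarith [mul_nonneg (by linarith : 0 ≤ 1 + q) n3]
    nlinarith
  have hsq : |z2| ^ 2 ≤ |z0| ^ 2 := pow_le_pow_left₀ n2 (h12.trans h01) 2
  have tri : |z2| ^ 2 ≤ |z0 ^ 2 + z1 ^ 2 + z2 ^ 2| - (1 + q) * |z3| ^ 2 := by
    have hh : 0 ≤ z0 ^ 2 + z1 ^ 2 + z2 ^ 2 := by positivity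
    rw [abs_of_nonneg hh, ← sq_abs z0, ← sq_abs z1, ← sq_abs z2]
    nlinarith [sq_nonneg |z1|]
  have P01 := fun w (hw : |w| ≤ (1 + q) * |z3| ^ 2) => res_pair m1 m2 n3 n2 h12 hab hd (h12.trans h01) p01 he
    (by linarith) hw
  have P02 := fun w (hw : |w| ≤ (1 + q) * |z3| ^ 2) => res_pair m1 m2 n3 n2 h12 hab hd h01 p02 he
    (by linarith) hw
  have P12 := fun w (hw : |w| ≤ (1 + q) * |z3| ^ 2) => res_pair m1 m2 n3 n2 h12 hab hd le_rfl p12 he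
    (by linarith) hw
  rcases hs0 with rfl | rfl <;> rcases hs1 with rfl | rfl <;> rcases hs2 with rfl | rfl
  · refine tri.trans ?_
    have := abs_sub_abs_le_abs_sub (z0 ^ 2 + z1 ^ 2 + z2 ^ 2) (-(s3 * z3 ^ 2 + ω))
    rw [hΩ, show (1 * z0 ^ 2 + 1 * z1 ^ 2 + 1 * z2 ^ 2 + s3 * z3 ^ 2 + ω) = z0 ^ 2 + z1 ^ 2 + z2 ^ 2 - (-(s3 * z3 ^ 2 + ω)) by ring]
    linarith
  · convert P01 _ hw using 2; rw [hΩ]; ring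
  · convert P02 _ hw using 2; rw [hΩ]; ring
  · rw [← abs_neg Ω]; convert P12 _ hw' using 2; rw [hΩ]; ring
  · convert P12 _ hw using 2; rw [hΩ]; ring
  · rw [← abs_neg Ω]; convert P02 _ hw' using 2; rw [hΩ]; ring
  · rw [← abs_neg Ω]; convert P01 _ hw' using 2; rw [hΩ]; ring
  · refine tri.trans ?_
    have := abs_sub_abs_le_abs_sub (z0 ^ 2 + z1 ^ 2 + z2 ^ 2) ((s3 * z3 ^ 2 + ω))
    rw [← abs_neg Ω, hΩ, show -(-1 * z0 ^ 2 + -1 * z1 ^ 2 + -1 * z2 ^ 2 + s3 * z3 ^ 2 + ω) = z0 ^ 2 + z1 ^ 2 + z2 ^ 2 - (s3 * z3 ^ 2 + ω) by ring]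
    linarith

lemma pow_diff_le {A B : ℝ} (κ : ℕ) (hB : 0 ≤ B) (hAB : B ≤ A) :
    A ^ (κ + 1) - B ^ (κ + 1) ≤ (κ + 1) * A ^ κ * (A - B) := by
  have hA := hB.trans hAB
  induction κ with
  | zero => simp
  | succ κ ih =>
    have h1 : B ^ (κ + 1) ≤ A ^ (κ + 1) := by gcongr
    have e : A ^ (κ + 1 + 1) - B ^ (κ + 1 + 1) =
      A * (A ^ (κ + 1) - B ^ (κ + 1)) + (A - B) * B ^ (κ + 1) := by ring
    rw [e]
    push_cast
    calc _ ≤ A * ((κ + 1) * A ^ κ * (A - B)) + (A - B) * A ^ (κ + 1) := by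
          have : 0 ≤ A - B := by linarith
          gcongr
      _ = _ := by ring

lemma sgn_pow_le {A B s0 s1 : ℝ} (κ : ℕ) (hB : 0 ≤ B) (hAB : B ≤ A)
    (hs0 : s0 = 1 ∨ s0 = -1) (hs1 : s1 = 1 ∨ s1 = -1) :
    |s0 * A ^ (κ + 1) + s1 * B ^ (κ + 1)| ≤ (κ + 1) * A ^ κ * |s0 * A + s1 * B| := by
  have hA := hB.trans hAB
  have d := pow_diff_le κ hB hAB
  have h1 : B ^ (κ + 1) ≤ A ^ (κ + 1) := by gcongr
  have h2 : B ^ κ ≤ A ^ κ := by gcongr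
  have hp : A ^ (κ + 1) + B ^ (κ + 1) ≤ (κ + 1) * A ^ κ * (A + B) := by
    have : A ^ (κ + 1) + B ^ (κ + 1) ≤ A ^ κ * (A + B) := by
      rw [pow_succ, pow_succ]; nlinarith
    have h3 : 0 ≤ (κ:ℝ) * (A ^ κ * (A + B)) := by positivity
    linarith
  have hp0 : 0 ≤ A ^ (κ + 1) + B ^ (κ + 1) := by positivity
  have E1 : |1 * A ^ (κ + 1) + 1 * B ^ (κ + 1)| ≤ (κ + 1) * A ^ κ * |1 * A + 1 * B| := by
    rw [one_mul, one_mul, one_mul, one_mul, abs_of_nonneg hp0, abs_of_nonneg (by positivity)]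
    exact hp
  have E2 : |1 * A ^ (κ + 1) + -1 * B ^ (κ + 1)| ≤ (κ + 1) * A ^ κ * |1 * A + -1 * B| := by
    rw [abs_of_nonneg (by linarith), abs_of_nonneg (by linarith)]
    calc _ = _ := by ring
      _ ≤ _ := d
      _ = _ := by ring
  rcases hs0 with rfl | rfl <;> rcases hs1 with rfl | rfl
  · exact E1
  · exact E2
  · rw [← abs_neg, ← abs_neg (-1 * A + 1 * B)]
    rw [show -(-1 * A ^ (κ + 1) + 1 * B ^ (κ + 1)) = 1 * A ^ (κ + 1) + -1 * B ^ (κ + 1) by ring,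
      show -(-1 * A + 1 * B) = 1 * A + -1 * B by ring]
    exact E2
  · rw [← abs_neg, ← abs_neg (-1 * A + -1 * B)]
    rw [show -(-1 * A ^ (κ + 1) + -1 * B ^ (κ + 1)) = 1 * A ^ (κ + 1) + 1 * B ^ (κ + 1) by ring,
      show -(-1 * A + -1 * B) = 1 * A + 1 * B by ring]
    exact E1

/-- constant of the pointwise symbol bound -/
def cP (κ : ℕ) (q : ℝ) : ℝ :=
  (κ + 2) * (2 + q) * (1 + 4 * (3 + q) * (1 + q)) * (3 + q) ^ κ

lemma pw {z0 z1 z2 z3 s0 s1 s2 s3 ρ ω ω' q : ℝ} (κ : ℕ) (hq : 0 ≤ q)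
    (h01 : |z1| ≤ |z0|) (h12 : |z2| ≤ |z1|) (h23 : |z3| ≤ |z2|)
    (hs0 : s0 = 1 ∨ s0 = -1) (hs1 : s1 = 1 ∨ s1 = -1) (hs2 : s2 = 1 ∨ s2 = -1)
    (hs3 : s3 = 1 ∨ s3 = -1)
    (hρ : |ρ| ≤ q * |z3|) (hω : |ω| ≤ q * |z3| ^ 2) (hω' : |ω'| ≤ q * |z3| ^ (2 * (κ + 1)))
    (hsum : z0 + z1 + z2 + z3 + ρ = 0) :
    |s0 * z0 ^ (2 * (κ + 1)) + s1 * z1 ^ (2 * (κ + 1)) + s2 * z2 ^ (2 * (κ + 1)) +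
      s3 * z3 ^ (2 * (κ + 1)) + ω'| ≤ cP κ q * (|z0| ^ κ * |z1| ^ κ) *
      (|s0 * z0 ^ 2 + s1 * z1 ^ 2 + s2 * z2 ^ 2 + s3 * z3 ^ 2 + ω| + |z2| * |z3|) := by
  have hc := res_c hq h01 h12 h23 hs0 hs1 hs2 hs3 hρ hω hsum
  set Ω := s0 * z0 ^ 2 + s1 * z1 ^ 2 + s2 * z2 ^ 2 + s3 * z3 ^ 2 + ω with hΩ
  have n0 := abs_nonneg z0
  have n1 := abs_nonneg z1
  have n2 := abs_nonneg z2
  have n3 := abs_nonneg z3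
  have nΩ := abs_nonneg Ω
  have hab : |z0| ≤ (3 + q) * |z1| := by
    have e : z0 = -(z1 + z2 + z3 + ρ) := by linarith
    have h : |z0| ≤ |z1| + |z2| + |z3| + |ρ| := by
      rw [e, abs_neg]
      have := abs_add_three (z1 + z2) z3 ρ
      have := abs_add_le z1 z2
      linarith
    have : q * |z3| ≤ q * |z1| := mul_le_mul_of_nonneg_left (h23.trans h12) hq
    linarith
  have hsg : ∀ {s : ℝ} (x : ℝ), (s = 1 ∨ s = -1) → |s * x| = |x| := by
    rintro s x (rfl | rfl) <;> simp
  have hA := sgn_pow_le κ (sq_nonneg z1) (sq_le_sq.2 h01) hs0 hs1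
  rw [← pow_mul, ← pow_mul, ← pow_mul] at hA
  have h2 : |s0 * z0 ^ 2 + s1 * z1 ^ 2| ≤ |Ω| + (2 + q) * |z2| ^ 2 := by
    have e : s0 * z0 ^ 2 + s1 * z1 ^ 2 = Ω - (s2 * z2 ^ 2 + s3 * z3 ^ 2 + ω) := by rw [hΩ]; ring
    rw [e]
    refine (abs_sub _ _).trans ?_
    have t := abs_add_three (s2 * z2 ^ 2) (s3 * z3 ^ 2) ω
    rw [hsg _ hs2, hsg _ hs3, abs_pow, abs_pow] at t
    have : |z3| ^ 2 ≤ |z2| ^ 2 := by gcongr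
    have : q * |z3| ^ 2 ≤ q * |z2| ^ 2 := by gcongr
    linarith
  have hev : z0 ^ (2 * κ) = |z0| ^ (2 * κ) := by rw [pow_mul, pow_mul, sq_abs]
  rw [hev] at hA
  have h3 : ∀ y : ℝ, 0 ≤ y → y ≤ |z2| → y ^ (2 * (κ + 1)) ≤ |z0| ^ (2 * κ) * |z2| ^ 2 := by
    intro y hy hyz
    rw [mul_add, pow_add, mul_one]
    gcongr
    linarith
  have hψ : |s0 * z0 ^ (2 * (κ + 1)) + s1 * z1 ^ (2 * (κ + 1)) + s2 * z2 ^ (2 * (κ + 1)) +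
      s3 * z3 ^ (2 * (κ + 1)) + ω'| ≤ (κ + 1) * |z0| ^ (2 * κ) * (|Ω| + (2 + q) * |z2| ^ 2) +
        (2 + q) * (|z0| ^ (2 * κ) * |z2| ^ 2) := by
    have t1 := abs_add_le (s0 * z0 ^ (2 * (κ + 1)) + s1 * z1 ^ (2 * (κ + 1)) + s2 * z2 ^ (2 * (κ + 1)) +
      s3 * z3 ^ (2 * (κ + 1))) ω'
    have t2 := abs_add_three (s0 * z0 ^ (2 * (κ + 1)) + s1 * z1 ^ (2 * (κ + 1)))
      (s2 * z2 ^ (2 * (κ + 1))) (s3 * z3 ^ (2 * (κ + 1)))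
    rw [hsg (z2 ^ _) hs2, hsg (z3 ^ _) hs3, abs_pow z2, abs_pow z3] at t2
    have t3 := h3 |z2| n2 le_rfl
    have t4 := h3 |z3| n3 h23
    have t5 : q * |z3| ^ (2 * (κ + 1)) ≤ q * (|z0| ^ (2 * κ) * |z2| ^ 2) := by gcongr
    have t6 : (κ + 1) * |z0| ^ (2 * κ) * |s0 * z0 ^ 2 + s1 * z1 ^ 2| ≤
      (κ + 1) * |z0| ^ (2 * κ) * (|Ω| + (2 + q) * |z2| ^ 2) := by gcongr
    linarith
  refine hψ.trans ?_
  have hX : (0:ℝ) ≤ |z0| ^ (2 * κ) := by positivity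
  have hXle : |z0| ^ (2 * κ) ≤ (3 + q) ^ κ * (|z0| ^ κ * |z1| ^ κ) := by
    rw [two_mul, pow_add]
    calc |z0| ^ κ * |z0| ^ κ ≤ |z0| ^ κ * ((3 + q) * |z1|) ^ κ := by gcongr
      _ = _ := by rw [mul_pow]; ring
  set S := |Ω| + |z2| * |z3|
  have hS : 0 ≤ S := by positivity
  have hΩS : |Ω| ≤ S := by simp only [S]; nlinarith [mul_nonneg n2 n3]
  calc _ = |z0| ^ (2 * κ) * ((κ + 1) * |Ω| + (κ + 2) * (2 + q) * |z2| ^ 2) := by ring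
    _ ≤ |z0| ^ (2 * κ) * ((κ + 2) * (2 + q) * S + (κ + 2) * (2 + q) * (4 * (3 + q) * (1 + q) * S)) := by
        gcongr
        · have h0 : (0:ℝ) ≤ κ := by positivity
          nlinarith [mul_nonneg h0 hq]
    _ = ((κ + 2) * (2 + q) * (1 + 4 * (3 + q) * (1 + q))) * S * |z0| ^ (2 * κ) := by ring
    _ ≤ ((κ + 2) * (2 + q) * (1 + 4 * (3 + q) * (1 + q))) * S * ((3 + q) ^ κ * (|z0| ^ κ * |z1| ^ κ)) := by
        gcongr
    _ = _ := by unfold cP; ring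


lemma ennreal_sq_le {a b : ℝ≥0∞} (h : a ^ 2 ≤ b ^ 2) : a ≤ b := by
  by_contra hc
  push Not at hc
  exact absurd ((ENNReal.pow_lt_pow_left_iff two_ne_zero).2 hc) (not_lt.2 h)

lemma tsum_pi_pow (q : ℕ) (B : ℤ → ℝ≥0∞) :
    ∑' r : Fin q → ℤ, ∏ j, B (r j) = (∑' n, B n) ^ q := by
  induction q with
  | zero => simp
  | succ q ih =>
    rw [← (Fin.consEquiv (fun _ => ℤ)).tsum_eq, ENNReal.tsum_prod']
    simp only [Fin.consEquiv_apply, Fin.prod_univ_succ, Fin.cons_zero, Fin.cons_succ]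
    simp_rw [ENNReal.tsum_mul_left, ENNReal.tsum_mul_right, ih]
    rw [pow_succ, mul_comm]

/-- assemble a tuple -/
def mk {ι : Type*} {q : ℕ} (e : Fin 4 ⊕ Fin q ≃ ι) (P R : ℤ × ℤ) (r : Fin q → ℤ) : ι → ℤ :=
  fun i => Sum.elim ![P.1, P.2, R.1, R.2] r (e.symm i)

lemma mk_inl {ι : Type*} {q : ℕ} (e : Fin 4 ⊕ Fin q ≃ ι) (P R : ℤ × ℤ) (r : Fin q → ℤ) (i : Fin 4) :
    mk e P R r (e (Sum.inl i)) = ![P.1, P.2, R.1, R.2] i := by simp [mk]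

lemma mk_inr {ι : Type*} {q : ℕ} (e : Fin 4 ⊕ Fin q ≃ ι) (P R : ℤ × ℤ) (r : Fin q → ℤ) (j : Fin q) :
    mk e P R r (e (Sum.inr j)) = r j := by simp [mk]

/-- four coordinates as pairs -/
def fourEquiv : (Fin 4 → ℤ) ≃ (ℤ × ℤ) × (ℤ × ℤ) where
  toFun x := ((x 0, x 1), (x 2, x 3))
  invFun y := ![y.1.1, y.1.2, y.2.1, y.2.2]
  left_inv x := by funext i; fin_cases i <;> rfl
  right_inv y := rfl

lemma reparam {ι : Type*} {q : ℕ} (e : Fin 4 ⊕ Fin q ≃ ι) (Φ : (ι → ℤ) → ℝ≥0∞) :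
    ∑' n, Φ n = ∑' r : Fin q → ℤ, ∑' P : ℤ × ℤ, ∑' R : ℤ × ℤ, Φ (mk e P R r) := by
  let E : ((ℤ × ℤ) × (ℤ × ℤ)) × (Fin q → ℤ) ≃ (ι → ℤ) :=
    (Equiv.prodCongr fourEquiv.symm (Equiv.refl _)).trans
      ((Equiv.sumArrowEquivProdArrow (Fin 4) (Fin q) ℤ).symm.trans (Equiv.arrowCongr e (Equiv.refl ℤ)))
  rw [← E.tsum_eq, ENNReal.tsum_prod', ENNReal.tsum_comm]
  refine tsum_congr fun r => ?_
  rw [ENNReal.tsum_prod']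
  rfl

lemma sum_e {ι M : Type*} [Fintype ι] [AddCommMonoid M] {q : ℕ} (e : Fin 4 ⊕ Fin q ≃ ι) (h : ι → M) :
    ∑ i, h i = h (e (Sum.inl 0)) + h (e (Sum.inl 1)) + h (e (Sum.inl 2)) + h (e (Sum.inl 3)) +
      ∑ j, h (e (Sum.inr j)) := by
  rw [← e.sum_comp, Fintype.sum_sum_type, Fin.sum_univ_four]

lemma prod_e {ι M : Type*} [Fintype ι] [CommMonoid M] {q : ℕ} (e : Fin 4 ⊕ Fin q ≃ ι) (h : ι → M) :
    ∏ i, h i = (∏ i, h (e (Sum.inl i))) * ∏ j, h (e (Sum.inr j)) := by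
  rw [← e.prod_comp, Fintype.prod_sum_type]

lemma mk_sum {ι : Type*} [Fintype ι] {q : ℕ} (e : Fin 4 ⊕ Fin q ≃ ι) (P R : ℤ × ℤ) (r : Fin q → ℤ) :
    ∑ i, mk e P R r i = P.1 + P.2 + R.1 + R.2 + ∑ j, r j := by
  rw [sum_e e]
  simp only [mk_inl, mk_inr]
  simp only [Matrix.cons_val_zero, Matrix.cons_val_one, Matrix.cons_val]

/-- resonance function -/
def Om {ι : Type*} [Fintype ι] (σ : ι → ℤ) (n : ι → ℤ) : ℤ := ∑ i, σ i * n i ^ 2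

lemma four_sum0 {ι : Type*} [Fintype ι] {q : ℕ} (e : Fin 4 ⊕ Fin q ≃ ι) (σ : ι → ℤ)
    (hσ : ∀ i, σ i = 1 ∨ σ i = -1) (f : Fin 4 → ℤ → ℝ≥0∞) (B : ℤ → ℝ≥0∞) (K : ℝ≥0∞)
    (hK : cF * ∏ i, ∑' n, f i n ^ 2 ≤ K ^ 2)
    (h01 : σ (e (Sum.inl 0)) = σ (e (Sum.inl 1))) :
    ∑' n : ι → ℤ, (if ∑ i, n i = 0 then (∏ i, f i (n (e (Sum.inl i)))) *
      (∏ j, B (n (e (Sum.inr j)))) * kap 1 (Om σ n) else 0) ≤ K * (∑' n, B n) ^ q := by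
  rw [reparam e, ← tsum_pi_pow, ← ENNReal.tsum_mul_left]
  refine ENNReal.tsum_le_tsum fun r => ?_
  have hb := four_base (f 0) (f 1) (f 2) (f 3) (σ (e (Sum.inl 0))) (σ (e (Sum.inl 2)))
    (σ (e (Sum.inl 3))) (-∑ j, r j) (∑ j, σ (e (Sum.inr j)) * r j ^ 2) (hσ _) (hσ _) (hσ _)
  have hK' : cF * ((∑' n, f 0 n ^ 2) * (∑' n, f 1 n ^ 2) * ((∑' n, f 2 n ^ 2) * ∑' n, f 3 n ^ 2)) ≤
      K ^ 2 := by
    refine le_trans (le_of_eq ?_) hK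
    rw [Fin.prod_univ_four]; ring
  have hb2 := ennreal_sq_le (hb.trans hK')
  rw [mul_comm K]
  refine le_trans (le_of_eq ?_) (mul_le_mul_right hb2 (∏ j, B (r j)))
  simp_rw [← ENNReal.tsum_mul_left]
  refine tsum_congr fun P => tsum_congr fun R => ?_
  have hsum := mk_sum e P R r
  by_cases hc : P.1 + P.2 + R.1 + R.2 = -∑ j, r j
  · rw [if_pos hc, if_pos (by omega)]
    simp only [mk_inl, mk_inr, Om]
    rw [sum_e e]
    simp only [mk_inl, mk_inr, Fin.prod_univ_four]
    simp only [Matrix.cons_val_zero, Matrix.cons_val_one, Matrix.cons_val]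
    rw [← h01]
    ring
  · rw [if_neg hc, if_neg (by intro h; apply hc; omega), mul_zero]

lemma four_sum {ι : Type*} [Fintype ι] {q : ℕ} (e : Fin 4 ⊕ Fin q ≃ ι) (σ : ι → ℤ)
    (hσ : ∀ i, σ i = 1 ∨ σ i = -1) (f : Fin 4 → ℤ → ℝ≥0∞) (B : ℤ → ℝ≥0∞) (K : ℝ≥0∞)
    (hK : cF * ∏ i, ∑' n, f i n ^ 2 ≤ K ^ 2) :
    ∑' n : ι → ℤ, (if ∑ i, n i = 0 then (∏ i, f i (n (e (Sum.inl i)))) *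
      (∏ j, B (n (e (Sum.inr j)))) * kap 1 (Om σ n) else 0) ≤ K * (∑' n, B n) ^ q := by
  have main : ∀ τ : Equiv.Perm (Fin 4), σ (e (Sum.inl (τ 0))) = σ (e (Sum.inl (τ 1))) →
      ∑' n : ι → ℤ, (if ∑ i, n i = 0 then (∏ i, f i (n (e (Sum.inl i)))) *
      (∏ j, B (n (e (Sum.inr j)))) * kap 1 (Om σ n) else 0) ≤ K * (∑' n, B n) ^ q := by
    intro τ h
    have := four_sum0 ((Equiv.sumCongr τ (Equiv.refl _)).trans e) σ hσ (fun i => f (τ i)) B K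
      (by rw [Equiv.prod_comp τ (fun i => ∑' n, f i n ^ 2)]; exact hK) (by simpa using h)
    refine le_trans (le_of_eq ?_) this
    refine tsum_congr fun n => ?_
    simp only [Equiv.trans_apply, Equiv.sumCongr_apply, Sum.map_inl, Sum.map_inr, Equiv.refl_apply]
    rw [Equiv.prod_comp τ (fun i => f i (n (e (Sum.inl i))))]
  by_cases h01 : σ (e (Sum.inl 0)) = σ (e (Sum.inl 1))
  · exact main (Equiv.refl _) h01
  by_cases h02 : σ (e (Sum.inl 0)) = σ (e (Sum.inl 2))
  · refine main (Equiv.swap 1 2) ?_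
    rw [Equiv.swap_apply_left, Equiv.swap_apply_of_ne_of_ne (by decide) (by decide)]
    exact h02
  · refine main (Equiv.swap 0 2) ?_
    rw [Equiv.swap_apply_left, Equiv.swap_apply_of_ne_of_ne (by decide) (by decide)]
    rcases hσ (e (Sum.inl 0)) with h | h <;> rcases hσ (e (Sum.inl 1)) with h' | h' <;>
      rcases hσ (e (Sum.inl 2)) with h'' | h'' <;> simp_all

lemma two_sum {ι : Type*} [Fintype ι] {q : ℕ} (e : Fin 4 ⊕ Fin q ≃ ι)
    (f B : ℤ → ℝ≥0∞) :
    ∑' n : ι → ℤ, (if ∑ i, n i = 0 then (f (n (e (Sum.inl 0))) * f (n (e (Sum.inl 1))) *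
      (B (n (e (Sum.inl 2))) * B (n (e (Sum.inl 3))))) *
      (∏ j, B (n (e (Sum.inr j)))) else 0) ≤ (∑' n, f n ^ 2) * (∑' n, B n) ^ (2 + q) := by
  rw [reparam e]
  have e1 : (∑' n, f n ^ 2) * (∑' n, B n) ^ (2 + q) = ∑' r : Fin q → ℤ, ∑' R : ℤ × ℤ,
      (∑' n, f n ^ 2) * ((B R.1 * B R.2) * ∏ j, B (r j)) := by
    simp_rw [ENNReal.tsum_mul_left, ENNReal.tsum_mul_right, ENNReal.tsum_mul_left, tsum_pi_pow]
    rw [ENNReal.tsum_prod (f := fun a b => B a * B b)]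
    simp_rw [ENNReal.tsum_mul_left, ENNReal.tsum_mul_right]
    rw [pow_add, sq]
  rw [e1]
  refine ENNReal.tsum_le_tsum fun r => ?_
  rw [ENNReal.tsum_comm]
  refine ENNReal.tsum_le_tsum fun R => ?_
  have hp := pair_sq f f (-(R.1 + R.2 + ∑ j, r j))
  rw [← sq] at hp
  have hp2 := ennreal_sq_le hp
  refine le_trans (le_of_eq ?_) (mul_le_mul_left hp2 ((B R.1 * B R.2) * ∏ j, B (r j)))
  rw [← ENNReal.tsum_mul_right]
  refine tsum_congr fun P => ?_
  have hsum := mk_sum e P R r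
  by_cases hc : P.1 + P.2 = -(R.1 + R.2 + ∑ j, r j)
  · rw [if_pos hc, if_pos (by omega)]
    simp only [mk_inl, mk_inr]
    simp only [Matrix.cons_val_zero, Matrix.cons_val_one, Matrix.cons_val]
    ring
  · rw [if_neg hc, if_neg (by intro h; apply hc; omega), zero_mul]

lemma exists_sort {ι : Type*} [Fintype ι] {q : ℕ} (hcard : Fintype.card ι = 4 + q) (n : ι → ℤ) :
    ∃ e : Fin 4 ⊕ Fin q ≃ ι, (n (e (Sum.inl 1))).natAbs ≤ (n (e (Sum.inl 0))).natAbs ∧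
      (n (e (Sum.inl 2))).natAbs ≤ (n (e (Sum.inl 1))).natAbs ∧
      (n (e (Sum.inl 3))).natAbs ≤ (n (e (Sum.inl 2))).natAbs ∧
      ∀ j, (n (e (Sum.inr j))).natAbs ≤ (n (e (Sum.inl 3))).natAbs := by
  let e0 : Fin (4 + q) ≃ ι := (Fintype.equivFinOfCardEq hcard).symm
  let g : Fin (4 + q) → ℕᵒᵈ := fun i => OrderDual.toDual (n (e0 i)).natAbs
  have hm := Tuple.monotone_sort g
  have hm' : ∀ i j : Fin (4 + q), i ≤ j → (n (e0 (Tuple.sort g j))).natAbs ≤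
      (n (e0 (Tuple.sort g i))).natAbs := fun i j hij => hm hij
  refine ⟨finSumFinEquiv.trans ((Tuple.sort g).trans e0), ?_, ?_, ?_, ?_⟩
  · apply hm'; simp [Fin.le_def]
  · apply hm'; simp [Fin.le_def]
  · apply hm'; simp [Fin.le_def]
  · intro j; apply hm'; simp [Fin.le_def]; omega


/-- energy symbol -/
def Psi {ι : Type*} [Fintype ι] (κ : ℕ) (σ : ι → ℤ) (n : ι → ℤ) : ℤ :=
  ∑ i, σ i * n i ^ (2 * (κ + 1))

/-- frequency weight -/
def wt (n : ℤ) : ℝ≥0∞ := ENNReal.ofReal |(n:ℝ)|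

lemma kap_one_eq (z : ℤ) : kap 1 z = ENNReal.ofReal ((1 + |(z:ℝ)|)⁻¹) := by
  unfold kap
  rw [Real.rpow_neg (by positivity), Real.rpow_one]

lemma abs_sgn_sum_le {q : ℕ} (σ : Fin q → ℤ) (hσ : ∀ i, σ i = 1 ∨ σ i = -1) (r : Fin q → ℤ) (d : ℝ)
    (hr : ∀ j, |(r j : ℝ)| ≤ d) (N : ℕ) :
    |∑ j, (σ j : ℝ) * (r j : ℝ) ^ N| ≤ q * d ^ N := by
  refine (Finset.abs_sum_le_sum_abs _ _).trans ?_
  have : ∀ j ∈ Finset.univ, |(σ j : ℝ) * (r j : ℝ) ^ N| ≤ d ^ N := by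
    intro j _
    rw [abs_mul, abs_pow]
    have : |(σ j : ℝ)| = 1 := by rcases hσ j with h | h <;> simp [h]
    rw [this, one_mul]
    exact pow_le_pow_left₀ (abs_nonneg _) (hr j) N
  refine (Finset.sum_le_sum this).trans ?_
  simp

lemma cP_nonneg (κ q : ℕ) : 0 ≤ cP κ q := by unfold cP; positivity

lemma sgn_real {s : ℤ} (h : s = 1 ∨ s = -1) : (s:ℝ) = 1 ∨ (s:ℝ) = -1 := by
  rcases h with rfl | rfl <;> simp

lemma natAbs_real {a b : ℤ} (h : a.natAbs ≤ b.natAbs) : |(a:ℝ)| ≤ |(b:ℝ)| := by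
  rw [← Int.cast_abs, ← Int.cast_abs, Int.abs_eq_natAbs, Int.abs_eq_natAbs]
  exact_mod_cast h

lemma symbol_bound {ι : Type*} [Fintype ι] [DecidableEq ι] {q : ℕ} (κ : ℕ) (hcard : Fintype.card ι = 4 + q)
    (σ : ι → ℤ) (hσ : ∀ i, σ i = 1 ∨ σ i = -1) (n : ι → ℤ) (hn : ∑ i, n i = 0) :
    ENNReal.ofReal |(Psi κ σ n : ℝ)| * kap 1 (Om σ n) ≤
      ∑ e : Fin 4 ⊕ Fin q ≃ ι, ENNReal.ofReal (cP κ q) *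
        (wt (n (e (Sum.inl 0))) ^ κ * wt (n (e (Sum.inl 1))) ^ κ *
          (1 + wt (n (e (Sum.inl 2))) * wt (n (e (Sum.inl 3))) * kap 1 (Om σ n))) := by
  obtain ⟨e, h1, h2, h3, h4⟩ := exists_sort hcard n
  refine le_trans ?_ (Finset.single_le_sum (f := fun e : Fin 4 ⊕ Fin q ≃ ι => ENNReal.ofReal (cP κ q) *
        (wt (n (e (Sum.inl 0))) ^ κ * wt (n (e (Sum.inl 1))) ^ κ *
          (1 + wt (n (e (Sum.inl 2))) * wt (n (e (Sum.inl 3))) * kap 1 (Om σ n))))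
      (fun _ _ => zero_le) (Finset.mem_univ e))
  have hd : ∀ j, |(n (e (Sum.inr j)) : ℝ)| ≤ |(n (e (Sum.inl 3)) : ℝ)| := fun j => natAbs_real (h4 j)
  have b1 := abs_sgn_sum_le (fun _ : Fin q => 1) (fun _ => Or.inl rfl) (fun j => n (e (Sum.inr j))) _ hd 1
  have b2 := abs_sgn_sum_le (fun j => σ (e (Sum.inr j))) (fun _ => hσ _) (fun j => n (e (Sum.inr j))) _ hd 2
  have b3 := abs_sgn_sum_le (fun j => σ (e (Sum.inr j))) (fun _ => hσ _) (fun j => n (e (Sum.inr j))) _ hd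
    (2 * (κ + 1))
  simp only [Int.cast_one, one_mul, pow_one] at b1
  have hsum : (n (e (Sum.inl 0)) : ℝ) + n (e (Sum.inl 1)) + n (e (Sum.inl 2)) + n (e (Sum.inl 3)) +
      ∑ j, (n (e (Sum.inr j)) : ℝ) = 0 := by
    have := hn
    rw [sum_e e] at this
    exact_mod_cast this
  have key := pw κ (Nat.cast_nonneg q) (natAbs_real h1) (natAbs_real h2) (natAbs_real h3)
    (sgn_real (hσ (e (Sum.inl 0)))) (sgn_real (hσ (e (Sum.inl 1)))) (sgn_real (hσ (e (Sum.inl 2))))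
    (sgn_real (hσ (e (Sum.inl 3)))) b1 b2 b3 hsum
  have eP : (Psi κ σ n : ℝ) = (σ (e (Sum.inl 0)) : ℝ) * (n (e (Sum.inl 0)) : ℝ) ^ (2 * (κ + 1)) +
     (σ (e (Sum.inl 1)) : ℝ) * (n (e (Sum.inl 1)) : ℝ) ^ (2 * (κ + 1)) +
     (σ (e (Sum.inl 2)) : ℝ) * (n (e (Sum.inl 2)) : ℝ) ^ (2 * (κ + 1)) +
     (σ (e (Sum.inl 3)) : ℝ) * (n (e (Sum.inl 3)) : ℝ) ^ (2 * (κ + 1)) +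
     ∑ j, (σ (e (Sum.inr j)) : ℝ) * (n (e (Sum.inr j)) : ℝ) ^ (2 * (κ + 1)) := by
    unfold Psi; rw [sum_e e]; push_cast; rfl
  have eO : (Om σ n : ℝ) = (σ (e (Sum.inl 0)) : ℝ) * (n (e (Sum.inl 0)) : ℝ) ^ 2 +
     (σ (e (Sum.inl 1)) : ℝ) * (n (e (Sum.inl 1)) : ℝ) ^ 2 +
     (σ (e (Sum.inl 2)) : ℝ) * (n (e (Sum.inl 2)) : ℝ) ^ 2 +
     (σ (e (Sum.inl 3)) : ℝ) * (n (e (Sum.inl 3)) : ℝ) ^ 2 +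
     ∑ j, (σ (e (Sum.inr j)) : ℝ) * (n (e (Sum.inr j)) : ℝ) ^ 2 := by
    unfold Om; rw [sum_e e]; push_cast; rfl
  rw [← eP, ← eO] at key
  have hcP := cP_nonneg κ q
  rw [kap_one_eq]
  unfold wt
  rw [← ENNReal.ofReal_mul (abs_nonneg _), ← ENNReal.ofReal_one, ← ENNReal.ofReal_mul (abs_nonneg _),
    ← ENNReal.ofReal_mul (by positivity), ← ENNReal.ofReal_add (by norm_num) (by positivity),
    ← ENNReal.ofReal_pow (abs_nonneg _), ← ENNReal.ofReal_pow (abs_nonneg _),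
    ← ENNReal.ofReal_mul (by positivity), ← ENNReal.ofReal_mul (by positivity),
    ← ENNReal.ofReal_mul hcP]
  refine ENNReal.ofReal_le_ofReal ?_
  set O := |(Om σ n : ℝ)|
  have hO : 0 ≤ O := abs_nonneg _
  have hO1 : 0 < 1 + O := by positivity
  set a := |(n (e (Sum.inl 0)) : ℝ)|
  set b := |(n (e (Sum.inl 1)) : ℝ)|
  set c := |(n (e (Sum.inl 2)) : ℝ)|
  set d := |(n (e (Sum.inl 3)) : ℝ)|
  calc _ ≤ cP κ q * (a ^ κ * b ^ κ) * (O + c * d) * (1 + O)⁻¹ := by gcongr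
    _ = cP κ q * (a ^ κ * b ^ κ) * (O * (1 + O)⁻¹ + c * d * (1 + O)⁻¹) := by ring
    _ ≤ cP κ q * (a ^ κ * b ^ κ) * (1 + c * d * (1 + O)⁻¹) := by
        gcongr
        rw [← div_eq_mul_inv, div_le_one hO1]; linarith
    _ = _ := by ring

/-- constant of the multilinear estimate -/
def cM (κ q : ℕ) : ℝ≥0∞ :=
  (Nat.factorial (4 + q)) * (ENNReal.ofReal (cP κ q) * (cF + 1))

lemma cM_ne_top (κ q : ℕ) : cM κ q ≠ ⊤ := by
  unfold cM
  have := cF_ne_top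
  finiteness

lemma multi {ι : Type*} [Fintype ι] [DecidableEq ι] {q : ℕ} (κ : ℕ) (hcard : Fintype.card ι = 4 + q)
    (σ : ι → ℤ) (hσ : ∀ i, σ i = 1 ∨ σ i = -1) (A : ℤ → ℝ≥0∞) :
    ∑' n : ι → ℤ, (if ∑ i, n i = 0 then ENNReal.ofReal |(Psi κ σ n : ℝ)| * kap 1 (Om σ n) *
      ∏ i, A (n i) else 0) ≤
      cM κ q * ((∑' n, (wt n ^ κ * A n) ^ 2) * (∑' n, A n) ^ (2 + q) +
        (∑' n, (wt n ^ κ * A n) ^ 2) * (∑' n, (wt n * A n) ^ 2) * (∑' n, A n) ^ q) := by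
  set X := ∑' n, (wt n ^ κ * A n) ^ 2
  set Y := ∑' n, (wt n * A n) ^ 2
  set L := ∑' n, A n
  have hpt : ∀ n : ι → ℤ, (if ∑ i, n i = 0 then ENNReal.ofReal |(Psi κ σ n : ℝ)| * kap 1 (Om σ n) *
      ∏ i, A (n i) else 0) ≤ ∑ e : Fin 4 ⊕ Fin q ≃ ι, ENNReal.ofReal (cP κ q) *
      ((if ∑ i, n i = 0 then ((wt (n (e (Sum.inl 0))) ^ κ * A (n (e (Sum.inl 0)))) *
        (wt (n (e (Sum.inl 1))) ^ κ * A (n (e (Sum.inl 1)))) *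
      (A (n (e (Sum.inl 2))) * A (n (e (Sum.inl 3))))) *
      (∏ j, A (n (e (Sum.inr j)))) else 0) +
      (if ∑ i, n i = 0 then (∏ i, (![fun n => wt n ^ κ * A n, fun n => wt n ^ κ * A n,
        fun n => wt n * A n, fun n => wt n * A n] : Fin 4 → ℤ → ℝ≥0∞) i (n (e (Sum.inl i)))) *
      (∏ j, A (n (e (Sum.inr j)))) * kap 1 (Om σ n) else 0)) := by
    intro n
    by_cases hn : ∑ i, n i = 0
    · simp only [if_pos hn]
      refine (mul_le_mul_left (symbol_bound κ hcard σ hσ n hn) _).trans (le_of_eq ?_)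
      rw [Finset.sum_mul]
      refine Finset.sum_congr rfl fun e _ => ?_
      rw [prod_e e]
      simp only [Fin.prod_univ_four]
      simp only [Matrix.cons_val_zero, Matrix.cons_val_one, Matrix.cons_val]
      ring
    · simp [if_neg hn]
  refine (ENNReal.tsum_le_tsum hpt).trans ?_
  rw [Summable.tsum_finsetSum (fun _ _ => ENNReal.summable)]
  have hE : ∀ e ∈ (Finset.univ : Finset (Fin 4 ⊕ Fin q ≃ ι)), (∑' n : ι → ℤ, ENNReal.ofReal (cP κ q) *
      ((if ∑ i, n i = 0 then ((wt (n (e (Sum.inl 0))) ^ κ * A (n (e (Sum.inl 0)))) *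
        (wt (n (e (Sum.inl 1))) ^ κ * A (n (e (Sum.inl 1)))) *
      (A (n (e (Sum.inl 2))) * A (n (e (Sum.inl 3))))) *
      (∏ j, A (n (e (Sum.inr j)))) else 0) +
      (if ∑ i, n i = 0 then (∏ i, (![fun n => wt n ^ κ * A n, fun n => wt n ^ κ * A n,
        fun n => wt n * A n, fun n => wt n * A n] : Fin 4 → ℤ → ℝ≥0∞) i (n (e (Sum.inl i)))) *
      (∏ j, A (n (e (Sum.inr j)))) * kap 1 (Om σ n) else 0))) ≤
      ENNReal.ofReal (cP κ q) * ((cF + 1) * (X * L ^ (2 + q) + X * Y * L ^ q)) := by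
    intro e _
    rw [ENNReal.tsum_mul_left, ENNReal.tsum_add]
    refine mul_le_mul_right ?_ _
    have t1 := two_sum e (fun n => wt n ^ κ * A n) A
    have t2 := four_sum e σ hσ (![fun n => wt n ^ κ * A n, fun n => wt n ^ κ * A n,
        fun n => wt n * A n, fun n => wt n * A n] : Fin 4 → ℤ → ℝ≥0∞) A ((cF + 1) * (X * Y)) (by
      rw [Fin.prod_univ_four]
      simp only [Matrix.cons_val_zero, Matrix.cons_val_one, Matrix.cons_val]
      calc cF * (X * X * Y * Y) ≤ (cF + 1) ^ 2 * (X * X * Y * Y) := by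
            refine mul_le_mul_left ?_ _
            calc cF ≤ cF + 1 := le_self_add
              _ ≤ (cF + 1) ^ 2 := by
                  rw [sq]; exact le_mul_of_one_le_right' le_add_self
        _ = _ := by ring)
    refine (add_le_add t1 t2).trans ?_
    rw [mul_add]
    refine add_le_add ?_ (le_of_eq (by ring))
    exact le_mul_of_one_le_left' le_add_self
  refine (Finset.sum_le_sum hE).trans (le_of_eq ?_)
  rw [Finset.sum_const, Finset.card_univ, nsmul_eq_mul, Fintype.card_equiv (by
    exact finSumFinEquiv.trans (Fintype.equivFinOfCardEq hcard).symm)]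
  unfold cM
  simp only [Fintype.card_sum, Fintype.card_fin]
  ring


/-- index set of the symmetrised nonlinearity -/
abbrev Ix (p : ℕ) := Fin (p + 1) ⊕ Fin (p + 1)

/-- signs -/
def sg (p : ℕ) : Ix p → ℤ := Sum.elim (fun _ => 1) (fun _ => -1)

lemma sg_pm (p : ℕ) (i : Ix p) : sg p i = 1 ∨ sg p i = -1 := by
  rcases i with i | i <;> simp [sg]

/-- the function or its conjugate according to the sign -/
def vv {p : ℕ} (i : Ix p) (f : ℝ → ℂ) : ℝ → ℂ :=
  Sum.elim (fun _ => f) (fun _ x => (starRingEnd ℂ) (f x)) i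

lemma vv_SP {p : ℕ} (i : Ix p) {f : ℝ → ℂ} (hf : SP f) : SP (vv i f) := by
  rcases i with i | i
  · exact hf
  · exact hf.conj

/-- signed coefficients -/
def cc {p : ℕ} (i : Ix p) (f : ℝ → ℂ) (l : ℤ) : ℂ := cf (vv i f) l

lemma cc_inl {p : ℕ} (i : Fin (p + 1)) (f : ℝ → ℂ) (l : ℤ) : cc (p := p) (Sum.inl i) f l = cf f l := rfl

lemma cc_inr {p : ℕ} (i : Fin (p + 1)) (f : ℝ → ℂ) (l : ℤ) :
    cc (p := p) (Sum.inr i) f l = (starRingEnd ℂ) (cf f (-l)) := cf_conj f l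

lemma cc_Ds {p : ℕ} (i : Ix p) {f : ℝ → ℂ} (hf : SP f) (s : ℕ) (l : ℤ) :
    cc i (Ds s f) l = ((l:ℝ) ^ (2 * s) : ℝ) * cc i f l := by
  rcases i with i | i
  · rw [cc_inl, cc_inl, Ds_cf hf]
  · rw [cc_inr, cc_inr, Ds_cf hf, map_mul, Complex.conj_ofReal]
    push_cast
    rw [pow_mul, pow_mul, neg_sq]

lemma slot_prod (p : ℕ) (f g : ℝ → ℂ) (j : Ix p) (x : ℝ) :
    ∏ i, vv i (if i = j then g else f) x =
      Sum.elim (fun _ => (starRingEnd ℂ) (nl p f x * (starRingEnd ℂ) (g x)))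
        (fun _ => nl p f x * (starRingEnd ℂ) (g x)) j := by
  have hone : ∀ (j : Fin (p + 1)) (a b : ℂ), (∏ i : Fin (p + 1), if i = j then a else b) = a * b ^ p := by
    intro j a b
    rw [Finset.prod_ite, Finset.prod_const, Finset.prod_const]
    have h1 : (Finset.univ.filter (fun i => i = j)).card = 1 := by
      rw [Finset.filter_eq']; simp
    have h2 : (Finset.univ.filter (fun i => ¬ i = j)).card = p := by
      have := Finset.card_filter_add_card_filter_not (s := (Finset.univ : Finset (Fin (p+1)))) (fun i => i = j)
      rw [h1] at this; simp at this; omega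
    rw [h1, h2, pow_one]
  rw [Fintype.prod_sum_type, nl_eq]
  rcases j with j | j
  · have e1 : ∀ i : Fin (p + 1), vv (p := p) (Sum.inl i) (if (Sum.inl i : Ix p) = Sum.inl j then g else f) x =
      if i = j then g x else f x := by
      intro i; simp only [vv, Sum.elim_inl, Sum.inl.injEq]; split_ifs <;> rfl
    have e2 : ∀ i : Fin (p + 1), vv (p := p) (Sum.inr i) (if (Sum.inr i : Ix p) = Sum.inl j then g else f) x =
      (starRingEnd ℂ) (f x) := by
      intro i; simp [vv]
    simp_rw [e1, e2]
    rw [hone, Finset.prod_const, Finset.card_univ, Fintype.card_fin]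
    simp only [Sum.elim_inl, map_mul, map_pow, Complex.conj_conj]
    ring
  · have e1 : ∀ i : Fin (p + 1), vv (p := p) (Sum.inr i) (if (Sum.inr i : Ix p) = Sum.inr j then g else f) x =
      if i = j then (starRingEnd ℂ) (g x) else (starRingEnd ℂ) (f x) := by
      intro i; simp only [vv, Sum.elim_inr, Sum.inr.injEq]; split_ifs <;> rfl
    have e2 : ∀ i : Fin (p + 1), vv (p := p) (Sum.inl i) (if (Sum.inl i : Ix p) = Sum.inr j then g else f) x =
      f x := by
      intro i; simp [vv]
    simp_rw [e1, e2]
    rw [hone, Finset.prod_const, Finset.card_univ, Fintype.card_fin]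
    simp only [Sum.elim_inr]
    ring

lemma sym_hasSum (p κ : ℕ) {f : ℝ → ℂ} (hf : SP f) :
    HasSum (fun n : Ix p → ℤ => if ∑ i, n i = 0 then (Psi κ (sg p) n : ℂ) * ∏ i, cc i f (n i) else 0)
      (-(2 * (p + 1) * Complex.I) *
        ((cf (fun x => nl p f x * (starRingEnd ℂ) (Ds (κ + 1) f x)) 0).im : ℂ)) := by
  set B := cf (fun x => nl p f x * (starRingEnd ℂ) (Ds (κ + 1) f x)) 0 with hB
  have hj : ∀ j : Ix p, HasSum (fun n : Ix p → ℤ => (sg p j : ℂ) * (if ∑ i, n i = 0 then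
      ∏ i, cf (vv i (if i = j then Ds (κ + 1) f else f)) (n i) else 0))
      ((sg p j : ℂ) * cf (fun x => ∏ i, vv i (if i = j then Ds (κ + 1) f else f) x) 0) := by
    intro j
    refine (cf_prod _ (fun i => vv_SP i ?_) 0).mul_left _
    split_ifs
    · exact Ds_SP hf _
    · exact hf
  have hs := hasSum_sum (s := Finset.univ) (fun j _ => hj j)
  have e1 : (∑ j : Ix p, (sg p j : ℂ) * cf (fun x => ∏ i, vv i (if i = j then Ds (κ + 1) f else f) x) 0) =
      -(2 * (p + 1) * Complex.I) * (B.im : ℂ) := by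
    simp_rw [slot_prod]
    rw [Fintype.sum_sum_type]
    simp only [sg, Sum.elim_inl, Sum.elim_inr]
    rw [cf_conj (fun x => nl p f x * (starRingEnd ℂ) (Ds (κ + 1) f x)) 0, neg_zero, ← hB]
    simp only [Finset.sum_const, Finset.card_univ, Fintype.card_fin, nsmul_eq_mul]
    apply Complex.ext <;> simp <;> ring
  rw [e1] at hs
  refine hs.congr_fun ?_
  intro n
  by_cases h0 : ∑ i, n i = 0
  · simp only [if_pos h0]
    have e2 : ∀ j : Ix p, ∏ i, cf (vv i (if i = j then Ds (κ + 1) f else f)) (n i) =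
        ((n j : ℂ) ^ (2 * (κ + 1))) * ∏ i, cc i f (n i) := by
      intro j
      have e3 : ∀ i : Ix p, cf (vv i (if i = j then Ds (κ + 1) f else f)) (n i) =
          (if i = j then ((n i : ℂ) ^ (2 * (κ + 1))) else 1) * cc i f (n i) := by
        intro i
        by_cases hij : i = j
        · rw [if_pos hij, if_pos hij]
          have := cc_Ds i hf (κ + 1) (n i)
          unfold cc at this ⊢
          rw [this]; push_cast; rfl
        · rw [if_neg hij, if_neg hij, one_mul]; rfl
      simp_rw [e3]
      rw [Finset.prod_mul_distrib, Finset.prod_ite_eq' Finset.univ j]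
      simp
    simp_rw [e2]
    unfold Psi
    push_cast
    rw [Finset.sum_mul]
    refine Finset.sum_congr rfl fun j _ => ?_
    ring
  · simp only [if_neg h0, mul_zero, Finset.sum_const_zero]

section
variable {p : ℕ} {u : ℝ → ℝ → ℂ}

lemma c_hasDerivAt' (hu : IsNLS p Set.univ u) (t : ℝ) (l : ℤ) :
    HasDerivAt (fun t => cf (u t) l)
      (-Complex.I * ((l:ℂ) ^ 2 * cf (u t) l + cf (nl p (u t)) l)) t := by
  obtain ⟨Q, hQ, h⟩ := loc_bdd hu (le_refl 1) (t - 1) (t + 1)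
  exact c_hasDerivAt hu hQ (fun s hs => (nS_mono (by norm_num) _).trans (h s hs))
    (Icc_mem_nhds (by linarith) (by linarith)) l

lemma c_cont (hu : IsNLS p Set.univ u) (l : ℤ) : Continuous (fun t => cf (u t) l) :=
  continuous_iff_continuousAt.2 fun t => (c_hasDerivAt' hu t l).continuousAt

lemma g_cont (hu : IsNLS p Set.univ u) (l : ℤ) : Continuous (fun t => cf (nl p (u t)) l) := by
  refine continuous_iff_continuousAt.2 fun t => ?_
  obtain ⟨Q, hQ, h⟩ := loc_bdd hu (le_refl 1) (t - 1) (t + 1)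
  exact (g_contOn hu hQ (fun s hs => (nS_mono (by norm_num) _).trans (h s hs)) l).continuousAt
    (Icc_mem_nhds (by linarith) (by linarith))

lemma cc_cont (hu : IsNLS p Set.univ u) (i : Ix p) (l : ℤ) : Continuous (fun t => cc i (u t) l) := by
  rcases i with i | i
  · exact c_cont hu l
  · simp_rw [cc_inr]; exact Complex.continuous_conj.comp (c_cont hu (-l))

lemma gg_cont (hu : IsNLS p Set.univ u) (i : Ix p) (l : ℤ) :
    Continuous (fun t => cc i (nl p (u t)) l) := by
  rcases i with i | i
  · exact g_cont hu l
  · simp_rw [cc_inr]; exact Complex.continuous_conj.comp (g_cont hu (-l))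

lemma cc_hasDerivAt (hu : IsNLS p Set.univ u) (i : Ix p) (t : ℝ) (l : ℤ) :
    HasDerivAt (fun t => cc i (u t) l)
      (-(Complex.I * (sg p i : ℂ)) * ((l:ℂ) ^ 2 * cc i (u t) l + cc i (nl p (u t)) l)) t := by
  rcases i with i | i
  · refine (c_hasDerivAt' hu t l).congr_deriv ?_
    simp [cc_inl, sg]
  · simp_rw [cc_inr]
    refine ((c_hasDerivAt' hu t (-l)).star).congr_deriv ?_
    rw [← starRingEnd_apply]
    simp [sg]

/-- one-mode envelope -/
def env1 (p : ℕ) (u : ℝ → ℝ → ℂ) (t1 t2 : ℝ) (l : ℤ) : ℝ :=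
  ‖cf (u t1) l‖ + ∫ s in t1..t2, ‖cf (nl p (u s)) l‖

lemma gint_nonneg {t1 t2 : ℝ} (h12 : t1 ≤ t2) (l : ℤ) : 0 ≤ ∫ s in t1..t2, ‖cf (nl p (u s)) l‖ :=
  intervalIntegral.integral_nonneg h12 (fun _ _ => norm_nonneg _)

lemma env1_nonneg {t1 t2 : ℝ} (h12 : t1 ≤ t2) (l : ℤ) : 0 ≤ env1 p u t1 t2 l :=
  add_nonneg (norm_nonneg _) (gint_nonneg h12 l)

/-- symmetric envelope -/
def env (p : ℕ) (u : ℝ → ℝ → ℂ) (t1 t2 : ℝ) (l : ℤ) : ℝ :=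
  env1 p u t1 t2 l + env1 p u t1 t2 (-l)

lemma env_nonneg {t1 t2 : ℝ} (h12 : t1 ≤ t2) (l : ℤ) : 0 ≤ env p u t1 t2 l :=
  add_nonneg (env1_nonneg h12 l) (env1_nonneg h12 _)

lemma c_le_env1 (hu : IsNLS p Set.univ u) {t1 t2 t : ℝ} (ht : t ∈ Set.Icc t1 t2) (l : ℤ) :
    ‖cf (u t) l‖ ≤ env1 p u t1 t2 l := by
  have he : ∀ s : ℝ, HasDerivAt (fun s : ℝ => Complex.exp (Complex.I * (l:ℂ) ^ 2 * s))
      (Complex.exp (Complex.I * (l:ℂ) ^ 2 * s) * (Complex.I * (l:ℂ) ^ 2)) s := by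
    intro s
    have h1 : HasDerivAt (fun s : ℝ => Complex.I * (l:ℂ) ^ 2 * (s:ℂ)) (Complex.I * (l:ℂ) ^ 2) s := by
      have := (Complex.ofRealCLM.hasDerivAt (x := s)).const_mul (Complex.I * (l:ℂ) ^ 2)
      simpa using this
    exact h1.cexp
  have hen : ∀ s : ℝ, ‖Complex.exp (Complex.I * (l:ℂ) ^ 2 * s)‖ = 1 := by
    intro s
    have : Complex.I * (l:ℂ) ^ 2 * s = (((l:ℝ) ^ 2 * s : ℝ) : ℂ) * Complex.I := by push_cast; ring
    rw [this, Complex.norm_exp_ofReal_mul_I]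
  have hw : ∀ s : ℝ, HasDerivAt (fun s : ℝ => Complex.exp (Complex.I * (l:ℂ) ^ 2 * s) * cf (u s) l)
      (Complex.exp (Complex.I * (l:ℂ) ^ 2 * s) * (-Complex.I * cf (nl p (u s)) l)) s := by
    intro s
    refine ((he s).mul (c_hasDerivAt' hu s l)).congr_deriv ?_
    ring
  have hec : Continuous (fun s : ℝ => Complex.exp (Complex.I * (l:ℂ) ^ 2 * s)) := by fun_prop
  have hgc := g_cont hu l
  have hFTC := intervalIntegral.integral_eq_sub_of_hasDerivAt (a := t1) (b := t) (fun s _ => hw s)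
    ((hec.mul (continuous_const.mul hgc)).intervalIntegrable _ _)
  have hn := intervalIntegral.norm_integral_le_integral_norm (f := fun s : ℝ =>
    Complex.exp (Complex.I * (l:ℂ) ^ 2 * s) * (-Complex.I * cf (nl p (u s)) l)) (μ := volume) ht.1
  rw [hFTC] at hn
  have e : ∀ s : ℝ, ‖Complex.exp (Complex.I * (l:ℂ) ^ 2 * s) * (-Complex.I * cf (nl p (u s)) l)‖ =
      ‖cf (nl p (u s)) l‖ := by
    intro s; rw [norm_mul, hen, norm_mul, norm_neg, Complex.norm_I, one_mul, one_mul]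
  simp_rw [e] at hn
  have hmono : ∫ s in t1..t, ‖cf (nl p (u s)) l‖ ≤ ∫ s in t1..t2, ‖cf (nl p (u s)) l‖ :=
    intervalIntegral.integral_mono_interval le_rfl ht.1 ht.2
      (Filter.Eventually.of_forall fun s => norm_nonneg _) (hgc.norm.intervalIntegrable _ _)
  have h3 := norm_sub_norm_le (Complex.exp (Complex.I * (l:ℂ) ^ 2 * t) * cf (u t) l)
    (Complex.exp (Complex.I * (l:ℂ) ^ 2 * t1) * cf (u t1) l)
  rw [norm_mul, norm_mul, hen, hen, one_mul, one_mul] at h3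
  unfold env1
  linarith

lemma cc_le_env (hu : IsNLS p Set.univ u) {t1 t2 t : ℝ} (ht : t ∈ Set.Icc t1 t2) (i : Ix p) (l : ℤ) :
    ‖cc i (u t) l‖ ≤ env p u t1 t2 l := by
  have h12 := ht.1.trans ht.2
  rcases i with i | i
  · rw [cc_inl]
    exact (c_le_env1 hu ht l).trans (le_add_of_nonneg_right (env1_nonneg h12 _))
  · rw [cc_inr, Complex.norm_conj]
    exact (c_le_env1 hu ht _).trans (le_add_of_nonneg_left (env1_nonneg h12 _))

lemma gg_le_env {t1 t2 : ℝ} (h12 : t1 ≤ t2) (i : Ix p) (l : ℤ) :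
    ∫ s in t1..t2, ‖cc i (nl p (u s)) l‖ ≤ env p u t1 t2 l := by
  rcases i with i | i
  · simp_rw [cc_inl]
    exact (le_add_of_nonneg_left (norm_nonneg _)).trans (le_add_of_nonneg_right (env1_nonneg h12 _))
  · simp_rw [cc_inr, Complex.norm_conj]
    exact (le_add_of_nonneg_left (norm_nonneg _)).trans (le_add_of_nonneg_left (env1_nonneg h12 _))

lemma prod_hasDerivAt (hu : IsNLS p Set.univ u) (n : Ix p → ℤ) (t : ℝ) :
    HasDerivAt (fun t => ∏ i, cc i (u t) (n i))
      (-(Complex.I * (Om (sg p) n : ℂ)) * ∏ i, cc i (u t) (n i) - Complex.I * ∑ j, (sg p j : ℂ) *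
        (cc j (nl p (u t)) (n j) * ∏ i ∈ Finset.univ.erase j, cc i (u t) (n i))) t := by
  refine (HasDerivAt.fun_finsetProd (u := Finset.univ)
    (fun i _ => cc_hasDerivAt hu i t (n i))).congr_deriv ?_
  unfold Om
  push_cast
  rw [Finset.mul_sum, Finset.mul_sum, ← Finset.sum_neg_distrib, Finset.sum_mul, ← Finset.sum_sub_distrib]
  refine Finset.sum_congr rfl fun j _ => ?_
  rw [smul_eq_mul, ← Finset.mul_prod_erase Finset.univ (fun i => cc i (u t) (n i)) (Finset.mem_univ j)]
  ring

lemma prod_int_bound (hu : IsNLS p Set.univ u) {t1 t2 : ℝ} (h12 : t1 ≤ t2) (h1 : t2 - t1 ≤ 1)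
    (n : Ix p → ℤ) :
    ‖∫ s in t1..t2, ∏ i, cc i (u s) (n i)‖ ≤
      (2 * p + 5) * ((1 + |(Om (sg p) n : ℝ)|)⁻¹ * ∏ i, env p u t1 t2 (n i)) := by
  have hcc := fun i => cc_cont hu i (n i)
  have hgg := fun i => gg_cont hu i (n i)
  set PA := ∏ i, env p u t1 t2 (n i) with hPA
  have hP : ∀ t ∈ Set.Icc t1 t2, ‖∏ i, cc i (u t) (n i)‖ ≤ PA := by
    intro t ht
    rw [norm_prod]
    exact Finset.prod_le_prod (fun i _ => norm_nonneg _) (fun i _ => cc_le_env hu ht i _)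
  have hPA0 : 0 ≤ PA := Finset.prod_nonneg fun i _ => env_nonneg h12 _
  have hPc : Continuous (fun t => ∏ i, cc i (u t) (n i)) := continuous_finsetProd _ fun i _ => hcc i
  have hEc : ∀ j, Continuous (fun t => cc j (nl p (u t)) (n j) *
      ∏ i ∈ Finset.univ.erase j, cc i (u t) (n i)) :=
    fun j => (hgg j).mul (continuous_finsetProd _ fun i _ => hcc i)
  have hA : ‖∫ s in t1..t2, ∏ i, cc i (u s) (n i)‖ ≤ PA := by
    have := intervalIntegral.norm_integral_le_of_norm_le_const (a := t1) (b := t2) (C := PA)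
      (f := fun s => ∏ i, cc i (u s) (n i)) (fun s hs => by
        rw [Set.uIoc_of_le h12] at hs
        exact hP s ⟨hs.1.le, hs.2⟩)
    refine this.trans ?_
    rw [abs_of_nonneg (by linarith)]
    calc PA * (t2 - t1) ≤ PA * 1 := mul_le_mul_of_nonneg_left h1 hPA0
      _ = PA := mul_one _
  have hj : ∀ j, ‖∫ s in t1..t2, (cc j (nl p (u s)) (n j) *
      ∏ i ∈ Finset.univ.erase j, cc i (u s) (n i))‖ ≤ PA := by
    intro j
    refine (intervalIntegral.norm_integral_le_integral_norm h12).trans ?_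
    have h2 : ∫ s in t1..t2, ‖cc j (nl p (u s)) (n j) *
        ∏ i ∈ Finset.univ.erase j, cc i (u s) (n i)‖ ≤
        ∫ s in t1..t2, ‖cc j (nl p (u s)) (n j)‖ * ∏ i ∈ Finset.univ.erase j, env p u t1 t2 (n i) := by
      refine intervalIntegral.integral_mono_on h12 ((hEc j).norm.intervalIntegrable _ _)
        (((hgg j).norm.mul continuous_const).intervalIntegrable _ _) fun s hs => ?_
      rw [norm_mul, norm_prod]
      exact mul_le_mul_of_nonneg_left (Finset.prod_le_prod (fun i _ => norm_nonneg _)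
        (fun i _ => cc_le_env hu hs i _)) (norm_nonneg _)
    refine h2.trans ?_
    rw [intervalIntegral.integral_mul_const, hPA,
      ← Finset.mul_prod_erase Finset.univ (fun i => env p u t1 t2 (n i)) (Finset.mem_univ j)]
    exact mul_le_mul_of_nonneg_right (gg_le_env h12 j _)
      (Finset.prod_nonneg fun i _ => env_nonneg h12 _)
  have hSc : Continuous (fun t => ∑ j, (sg p j : ℂ) *
        (cc j (nl p (u t)) (n j) * ∏ i ∈ Finset.univ.erase j, cc i (u t) (n i))) :=
    continuous_finsetSum _ fun j _ => continuous_const.mul (hEc j)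
  have hFTC := intervalIntegral.integral_eq_sub_of_hasDerivAt (a := t1) (b := t2)
    (fun s _ => prod_hasDerivAt hu n s)
    (((continuous_const.mul hPc).sub (continuous_const.mul hSc)).intervalIntegrable _ _)
  have i1 : IntervalIntegrable (fun t => -(Complex.I * (Om (sg p) n : ℂ)) * ∏ i, cc i (u t) (n i))
    volume t1 t2 := (continuous_const.mul hPc).intervalIntegrable _ _
  have i2 : IntervalIntegrable (fun t => Complex.I * ∑ j, (sg p j : ℂ) *
        (cc j (nl p (u t)) (n j) * ∏ i ∈ Finset.univ.erase j, cc i (u t) (n i)))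
    volume t1 t2 := (continuous_const.mul hSc).intervalIntegrable _ _
  have i3 : ∀ j ∈ (Finset.univ : Finset (Ix p)), IntervalIntegrable (fun t => (sg p j : ℂ) *
        (cc j (nl p (u t)) (n j) * ∏ i ∈ Finset.univ.erase j, cc i (u t) (n i)))
    volume t1 t2 := fun j _ => (continuous_const.mul (hEc j)).intervalIntegrable _ _
  rw [intervalIntegral.integral_sub i1 i2, intervalIntegral.integral_const_mul,
    intervalIntegral.integral_const_mul, intervalIntegral.integral_finsetSum i3] at hFTC
  simp_rw [intervalIntegral.integral_const_mul] at hFTC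
  have hB : |(Om (sg p) n : ℝ)| * ‖∫ s in t1..t2, ∏ i, cc i (u s) (n i)‖ ≤ (2 * p + 4) * PA := by
    have e1 : |(Om (sg p) n : ℝ)| * ‖∫ s in t1..t2, ∏ i, cc i (u s) (n i)‖ =
        ‖-(Complex.I * (Om (sg p) n : ℂ)) * ∫ s in t1..t2, ∏ i, cc i (u s) (n i)‖ := by
      rw [norm_mul, norm_neg, norm_mul, Complex.norm_I, one_mul, Complex.norm_intCast]
    rw [e1, eq_add_of_sub_eq hFTC]
    refine (norm_add_le _ _).trans ?_
    have n1 := (norm_sub_le (∏ i, cc i (u t2) (n i)) (∏ i, cc i (u t1) (n i))).trans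
      (add_le_add (hP t2 ⟨h12, le_rfl⟩) (hP t1 ⟨le_rfl, h12⟩))
    have n2 : ‖Complex.I * ∑ j, (sg p j : ℂ) * ∫ s in t1..t2, (cc j (nl p (u s)) (n j) *
      ∏ i ∈ Finset.univ.erase j, cc i (u s) (n i))‖ ≤ (2 * p + 2) * PA := by
      rw [norm_mul, Complex.norm_I, one_mul]
      refine (norm_sum_le _ _).trans ?_
      calc _ ≤ ∑ _j : Ix p, PA := by
            refine Finset.sum_le_sum fun j _ => ?_
            rw [norm_mul]
            have : ‖(sg p j : ℂ)‖ = 1 := by rcases sg_pm p j with h | h <;> simp [h]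
            rw [this, one_mul]; exact hj j
        _ = _ := by
            rw [Finset.sum_const, Finset.card_univ, nsmul_eq_mul]
            simp; left; ring
    linarith
  have hpos : (0:ℝ) < 1 + |(Om (sg p) n : ℝ)| := by positivity
  rw [← mul_assoc, mul_comm (2 * (p:ℝ) + 5), mul_assoc, inv_mul_eq_div, le_div_iff₀ hpos]
  linarith
end

section
variable {p : ℕ} {u : ℝ → ℝ → ℂ}

lemma cc_norm_jb {f : ℝ → ℂ} {Q : ℝ≥0∞} (hQ : Q ≠ ⊤) {k : ℕ}
    (h : nS (2 * (k + 1)) f ≤ Q) (i : Ix p) (l : ℤ) :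
    jb l ^ k * ‖cc i f l‖ ≤ Real.sqrt Q.toReal * (jb l)⁻¹ := by
  rcases i with i | i
  · exact jb_c_bound hQ le_rfl h l
  · rw [cc_inr, Complex.norm_conj, ← jb_neg l]
    exact jb_c_bound hQ le_rfl h (-l)

lemma Psi_le (κ : ℕ) (n : Ix p → ℤ) :
    |(Psi κ (sg p) n : ℝ)| ≤ (2 * p + 2) * ∏ i, jb (n i) ^ (κ + 1) := by
  unfold Psi
  push_cast
  refine (Finset.abs_sum_le_sum_abs _ _).trans ?_
  calc _ ≤ ∑ _j : Ix p, ∏ i, jb (n i) ^ (κ + 1) := by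
        refine Finset.sum_le_sum fun j _ => ?_
        rw [abs_mul]
        have h1 : |(sg p j : ℝ)| = 1 := by rcases sg_pm p j with h | h <;> simp [h]
        rw [h1, one_mul, abs_of_nonneg (lpow_nonneg (n j) (κ + 1))]
        refine (lpow_le_jb (n j) (κ + 1)).trans ?_
        rw [← Finset.mul_prod_erase Finset.univ (fun i => jb (n i) ^ (κ + 1)) (Finset.mem_univ j)]
        refine le_mul_of_one_le_right (pow_nonneg (jb_pos _).le _) ?_
        calc (1:ℝ) = ∏ i ∈ Finset.univ.erase j, (1:ℝ) := by simp
          _ ≤ _ := Finset.prod_le_prod (fun _ _ => zero_le_one) fun i _ => one_le_pow₀ (jb_one_le _)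
    _ = _ := by
        rw [Finset.sum_const, Finset.card_univ, nsmul_eq_mul]
        congr 1
        simp; ring

lemma Hs_diff (hu : IsNLS p Set.univ u) (κ : ℕ) {t1 t2 : ℝ} (h12 : t1 ≤ t2) (h1 : t2 - t1 ≤ 1) :
    ENNReal.ofReal |Hs (κ + 1) (u t2) - Hs (κ + 1) (u t1)| ≤ ENNReal.ofReal (2 * p + 5) *
      ∑' n : Ix p → ℤ, (if ∑ i, n i = 0 then ENNReal.ofReal |(Psi κ (sg p) n : ℝ)| *
        kap 1 (Om (sg p) n) * ∏ i, ENNReal.ofReal (env p u t1 t2 (n i)) else 0) := by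
  obtain ⟨Q, hQ, hQb⟩ := loc_bdd hu (k := κ + 1) (by omega) (t1 - 1) (t2 + 1)
  set F : (Ix p → ℤ) → ℝ → ℂ := fun n t =>
    if ∑ i, n i = 0 then (Psi κ (sg p) n : ℂ) * ∏ i, cc i (u t) (n i) else 0 with hF
  have hFc : ∀ n, Continuous (F n) := by
    intro n
    by_cases h0 : ∑ i, n i = 0
    · simp only [hF, if_pos h0]
      exact continuous_const.mul (continuous_finsetProd _ fun i _ => cc_cont hu i _)
    · simp only [hF, if_neg h0]; exact continuous_const
  set bd : (Ix p → ℤ) → ℝ := fun n => (2 * p + 2) * ∏ i, (Real.sqrt Q.toReal * (jb (n i))⁻¹) with hbd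
  have hbs : Summable bd := (summable_pi_prod' (fun (_ : Ix p) l => Real.sqrt Q.toReal * (jb l)⁻¹)
    (fun _ l => mul_nonneg (Real.sqrt_nonneg _) (inv_nonneg.2 (jb_pos l).le))
    (fun _ => jb_summable.mul_left _)).mul_left _
  have hFb : ∀ n, ∀ t ∈ Set.Icc t1 t2, ‖F n t‖ ≤ bd n := by
    intro n t ht
    have hb0 : 0 ≤ bd n := mul_nonneg (by positivity) (Finset.prod_nonneg fun i _ =>
      mul_nonneg (Real.sqrt_nonneg _) (inv_nonneg.2 (jb_pos _).le))
    by_cases h0 : ∑ i, n i = 0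
    · simp only [hF, if_pos h0]
      rw [norm_mul, norm_prod, Complex.norm_intCast]
      refine (mul_le_mul_of_nonneg_right (Psi_le κ n) (Finset.prod_nonneg fun i _ => norm_nonneg _)).trans ?_
      rw [mul_assoc, ← Finset.prod_mul_distrib]
      refine mul_le_mul_of_nonneg_left ?_ (by positivity)
      refine Finset.prod_le_prod (fun i _ => mul_nonneg (pow_nonneg (jb_pos _).le _) (norm_nonneg _))
        fun i _ => ?_
      exact cc_norm_jb hQ (hQb t ⟨by linarith [ht.1], by linarith [ht.2]⟩) i (n i)
    · simp only [hF, if_neg h0, norm_zero]; exact hb0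
  set S : ℝ → ℂ := fun t => ∑' n, F n t with hS
  have hFS : ∀ t, HasSum (fun n => F n t) (S t) := fun t => (sym_hasSum p κ (uSP hu t)).summable.hasSum
  have hSc : ContinuousOn S (Set.Icc t1 t2) :=
    continuousOn_tsum (fun n => (hFc n).continuousOn) hbs hFb
  have hSD : ∀ t, ((2 * (cf (fun x => nl p (u t) x * (starRingEnd ℂ) (Ds (κ + 1) (u t) x)) 0).im : ℝ) : ℂ)
      = Complex.I / (p + 1) * S t := by
    intro t
    rw [hS, show (fun t => ∑' n, F n t) t = _ from (sym_hasSum p κ (uSP hu t)).tsum_eq]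
    have hp : ((p:ℂ) + 1) ≠ 0 := by exact_mod_cast Nat.succ_ne_zero p
    field_simp
    push_cast
    linear_combination (2 * ((cf (fun x => nl p (u t) x * (starRingEnd ℂ) (Ds (κ + 1) (u t) x)) 0).im : ℂ)) * Complex.I_sq
  have hd : ∀ t ∈ Set.uIcc t1 t2, HasDerivAt (fun t => ((Hs (κ + 1) (u t) : ℝ) : ℂ))
      (Complex.I / (p + 1) * S t) t := by
    intro t ht
    rw [Set.uIcc_of_le h12] at ht
    have := (Hs_hasDerivAt hu hQ (k := κ + 1) (s := κ + 1) (by omega) le_rfl hQb (t := t)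
      ⟨by linarith [ht.1], by linarith [ht.2]⟩).ofReal_comp
    exact this.congr_deriv (hSD t)
  have hFTC := intervalIntegral.integral_eq_sub_of_hasDerivAt hd
    (ContinuousOn.intervalIntegrable (by rw [Set.uIcc_of_le h12]; exact continuousOn_const.mul hSc))
  rw [intervalIntegral.integral_const_mul] at hFTC
  have hsum := intervalIntegral.hasSum_integral_of_dominated_convergence (a := t1) (b := t2)
    (μ := volume) (F := F) (f := S) (fun n _ => bd n) (fun n => (hFc n).aestronglyMeasurable)
    (fun n => Filter.Eventually.of_forall fun t ht => hFb n t (by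
      rw [Set.uIoc_of_le h12] at ht; exact ⟨ht.1.le, ht.2⟩))
    (Filter.Eventually.of_forall fun t _ => hbs) intervalIntegrable_const
    (Filter.Eventually.of_forall fun t _ => hFS t)
  rw [← hsum.tsum_eq] at hFTC
  have e1 : ENNReal.ofReal |Hs (κ + 1) (u t2) - Hs (κ + 1) (u t1)| =
      ‖((Hs (κ + 1) (u t2) : ℝ) : ℂ) - ((Hs (κ + 1) (u t1) : ℝ) : ℂ)‖ₑ := by
    rw [← Complex.ofReal_sub, ← ofReal_norm, Complex.norm_real, Real.norm_eq_abs]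
  rw [e1, ← hFTC, enorm_mul]
  have hc : ‖Complex.I / ((p:ℂ) + 1)‖ₑ ≤ 1 := by
    rw [← ofReal_norm, norm_div, Complex.norm_I]
    have : ‖(p:ℂ) + 1‖ = (p:ℝ) + 1 := by
      have := Complex.norm_natCast (p + 1); push_cast at this; exact this
    rw [this, ← ENNReal.ofReal_one]
    apply ENNReal.ofReal_le_ofReal
    rw [div_le_one (by positivity)]
    linarith [Nat.cast_nonneg (α := ℝ) p]
  refine (mul_le_mul' hc enorm_tsum_le_tsum_enorm).trans ?_
  rw [one_mul, ← ENNReal.tsum_mul_left]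
  refine ENNReal.tsum_le_tsum fun n => ?_
  by_cases h0 : ∑ i, n i = 0
  · simp only [hF, if_pos h0]
    rw [intervalIntegral.integral_const_mul, ← ofReal_norm, norm_mul, Complex.norm_intCast, kap_one_eq,
      ← ENNReal.ofReal_prod_of_nonneg (fun i _ => env_nonneg h12 _),
      ← ENNReal.ofReal_mul (abs_nonneg _), ← ENNReal.ofReal_mul (by positivity),
      ← ENNReal.ofReal_mul (by positivity)]
    apply ENNReal.ofReal_le_ofReal
    refine (mul_le_mul_of_nonneg_left (prod_int_bound hu h12 h1 n) (abs_nonneg _)).trans (le_of_eq ?_)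
    ring
  · simp only [hF, if_neg h0]; simp
end

lemma wsum_sq_le (A : ℤ → ℝ≥0∞) :
    (∑' l, A l) ^ 2 ≤ cJ * ∑' l, ENNReal.ofReal (jb l ^ 1) * A l ^ 2 := by
  have h := cs_tsum (fun l : ℤ => ENNReal.ofReal (Real.sqrt (jb l)⁻¹))
    (fun l => ENNReal.ofReal (Real.sqrt (jb l)) * A l)
  have e1 : ∀ l : ℤ, ENNReal.ofReal (Real.sqrt (jb l)⁻¹) *
      (ENNReal.ofReal (Real.sqrt (jb l)) * A l) = A l := by
    intro l
    have := jb_pos l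
    rw [← mul_assoc, ← ENNReal.ofReal_mul (Real.sqrt_nonneg _), ← Real.sqrt_mul (by positivity),
      inv_mul_cancel₀ this.ne']
    simp
  have e2 : ∀ l : ℤ, ENNReal.ofReal (Real.sqrt (jb l)⁻¹) ^ 2 = ENNReal.ofReal (jb l)⁻¹ := by
    intro l
    have := jb_pos l
    rw [← ENNReal.ofReal_pow (Real.sqrt_nonneg _), Real.sq_sqrt (by positivity)]
  have e3 : ∀ l : ℤ, (ENNReal.ofReal (Real.sqrt (jb l)) * A l) ^ 2
      = ENNReal.ofReal (jb l ^ 1) * A l ^ 2 := by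
    intro l
    have := jb_pos l
    rw [mul_pow, ← ENNReal.ofReal_pow (Real.sqrt_nonneg _), Real.sq_sqrt (by positivity), pow_one]
  simp only [e1, e2, e3] at h
  exact h

lemma wt_pow_sq (n : ℤ) (κ : ℕ) (a : ℝ≥0∞) :
    (wt n ^ κ * a) ^ 2 = ENNReal.ofReal ((n:ℝ) ^ (2 * κ)) * a ^ 2 := by
  unfold wt
  rw [mul_pow, ← ENNReal.ofReal_pow (abs_nonneg _), ← ENNReal.ofReal_pow (by positivity), ← pow_mul,
    mul_comm κ 2, pow_mul, sq_abs, pow_mul]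

lemma interp_pt (n : ℤ) (κ : ℕ) {ρ : ℝ} (hρ : 0 < ρ) :
    (n:ℝ) ^ (2 * (κ + 1)) ≤ ρ ^ κ * jb n ^ 1 + ρ⁻¹ * jb n ^ (κ + 2) := by
  have h0 : (0:ℝ) ≤ (n:ℝ) ^ 2 := sq_nonneg _
  have hj : (n:ℝ) ^ 2 ≤ jb n := by unfold jb; linarith
  have hjp := jb_pos n
  rw [pow_mul]
  generalize (n:ℝ) ^ 2 = m at *
  rcases le_total m ρ with h | h
  · have : m ^ (κ + 1) ≤ ρ ^ κ * jb n ^ 1 := by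
      rw [pow_succ, pow_one]
      exact mul_le_mul (pow_le_pow_left₀ h0 h κ) hj h0 (by positivity)
    have h2 : 0 ≤ ρ⁻¹ * jb n ^ (κ + 2) := by positivity
    linarith
  · have : m ^ (κ + 1) ≤ ρ⁻¹ * jb n ^ (κ + 2) := by
      rw [inv_mul_eq_div, le_div_iff₀ hρ]
      calc m ^ (κ + 1) * ρ ≤ m ^ (κ + 1) * m := mul_le_mul_of_nonneg_left h (by positivity)
        _ = m ^ (κ + 2) := by ring
        _ ≤ _ := pow_le_pow_left₀ h0 hj _
    have h2 : 0 ≤ ρ ^ κ * jb n ^ 1 := by positivity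
    linarith

lemma interp_sum (A : ℤ → ℝ≥0∞) (κ : ℕ) {ρ : ℝ} (hρ : 0 < ρ) :
    ∑' n, (wt n ^ (κ + 1) * A n) ^ 2 ≤
      ENNReal.ofReal (ρ ^ κ) * (∑' n, ENNReal.ofReal (jb n ^ 1) * A n ^ 2) +
      ENNReal.ofReal ρ⁻¹ * ∑' n, ENNReal.ofReal (jb n ^ (κ + 2)) * A n ^ 2 := by
  rw [← ENNReal.tsum_mul_left, ← ENNReal.tsum_mul_left, ← ENNReal.tsum_add]
  refine ENNReal.tsum_le_tsum fun n => ?_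
  have hjp := jb_pos n
  rw [wt_pow_sq, ← mul_assoc, ← mul_assoc, ← ENNReal.ofReal_mul (by positivity),
    ← ENNReal.ofReal_mul (by positivity), ← add_mul, ← ENNReal.ofReal_add (by positivity) (by positivity)]
  exact mul_le_mul' (ENNReal.ofReal_le_ofReal (interp_pt n κ hρ)) le_rfl

lemma wt_one_sum (A : ℤ → ℝ≥0∞) :
    ∑' n, (wt n * A n) ^ 2 ≤ ∑' n, ENNReal.ofReal (jb n ^ 1) * A n ^ 2 := by
  refine ENNReal.tsum_le_tsum fun n => ?_
  have := wt_pow_sq n 1 (A n)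
  rw [pow_one] at this
  rw [this]
  exact mul_le_mul' (ENNReal.ofReal_le_ofReal (lpow_le_jb n 1)) le_rfl

section
variable {p : ℕ} {u : ℝ → ℝ → ℂ}

lemma gint_sq (hu : IsNLS p Set.univ u) {t1 t2 : ℝ} (h12 : t1 ≤ t2) (h1 : t2 - t1 ≤ 1) (l : ℤ) :
    ENNReal.ofReal (∫ s in t1..t2, ‖cf (nl p (u s)) l‖) ^ 2 ≤
      ∫⁻ s in Set.Ioc t1 t2, ‖cf (nl p (u s)) l‖ₑ ^ 2 := by
  have hg := g_cont hu l
  have e : ENNReal.ofReal (∫ s in t1..t2, ‖cf (nl p (u s)) l‖) =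
      ∫⁻ s in Set.Ioc t1 t2, ‖cf (nl p (u s)) l‖ₑ := by
    rw [intervalIntegral.integral_of_le h12]
    exact ofReal_integral_norm_eq_lintegral_enorm
      ((hg.intervalIntegrable t1 t2).1)
  rw [e]
  have h := ENNReal.lintegral_mul_le_Lp_mul_Lq (volume.restrict (Set.Ioc t1 t2))
    (Real.HolderConjugate.two_two) (f := fun _ => 1) (g := fun s => ‖cf (nl p (u s)) l‖ₑ)
    (measurable_const.aemeasurable) (hg.enorm.measurable.aemeasurable)
  simp only [Pi.mul_apply, one_mul] at h
  have h2 : ∀ x : ℝ≥0∞, x ^ (2:ℝ) = x ^ 2 := fun x => by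
    rw [← ENNReal.rpow_natCast]; norm_num
  simp only [h2, one_pow, lintegral_const, Measure.restrict_apply MeasurableSet.univ, Set.univ_inter,
    Real.volume_Ioc, one_mul] at h
  refine (pow_le_pow_left' h 2).trans ?_
  rw [mul_pow, ← h2, ← h2, ← ENNReal.rpow_mul, ← ENNReal.rpow_mul]
  norm_num
  calc _ ≤ 1 * ∫⁻ s in Set.Ioc t1 t2, ‖cf (nl p (u s)) l‖ₑ ^ 2 := by
        refine mul_le_mul' ?_ le_rfl
        rw [← ENNReal.ofReal_one]; exact ENNReal.ofReal_le_ofReal h1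
    _ = _ := one_mul _

lemma env_bound (hu : IsNLS p Set.univ u) (s : ℕ) {t1 t2 : ℝ} (h12 : t1 ≤ t2) (h1 : t2 - t1 ≤ 1)
    {V : ℝ≥0∞} (hV : ∀ τ ∈ Set.Icc t1 t2, nS s (nl p (u τ)) ≤ V) :
    ∑' l, ENNReal.ofReal (jb l ^ s) * ENNReal.ofReal (env p u t1 t2 l) ^ 2 ≤
      32 * (nS s (u t1) + V) := by
  have hone : ∑' l, ENNReal.ofReal (jb l ^ s) * ENNReal.ofReal (env1 p u t1 t2 l) ^ 2 ≤
      4 * (nS s (u t1) + V) := by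
    have hpt : ∀ l : ℤ, ENNReal.ofReal (jb l ^ s) * ENNReal.ofReal (env1 p u t1 t2 l) ^ 2 ≤
        4 * (ENNReal.ofReal (jb l ^ s) * ‖cf (u t1) l‖ₑ ^ 2 +
          ∫⁻ τ in Set.Ioc t1 t2, ENNReal.ofReal (jb l ^ s) * ‖cf (nl p (u τ)) l‖ₑ ^ 2) := by
      intro l
      unfold env1
      rw [ENNReal.ofReal_add (norm_nonneg _) (gint_nonneg h12 l), ofReal_norm,
        lintegral_const_mul _ ((g_cont hu l).enorm.measurable.pow_const 2), ← mul_add, mul_left_comm]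
      refine mul_le_mul' le_rfl ((ennreal_add_sq _ _).trans ?_)
      exact mul_le_mul' le_rfl (add_le_add le_rfl (gint_sq hu h12 h1 l))
    refine (ENNReal.tsum_le_tsum hpt).trans ?_
    rw [ENNReal.tsum_mul_left, ENNReal.tsum_add]
    refine mul_le_mul' le_rfl (add_le_add le_rfl ?_)
    rw [← lintegral_tsum (fun l => ((g_cont hu l).enorm.measurable.pow_const 2).const_mul _ |>.aemeasurable)]
    calc _ ≤ ∫⁻ _ in Set.Ioc t1 t2, V :=
          setLIntegral_mono measurable_const fun τ hτ => hV τ ⟨hτ.1.le, hτ.2⟩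
      _ ≤ V := by
          rw [setLIntegral_const, Real.volume_Ioc]
          calc _ ≤ V * 1 := mul_le_mul' le_rfl (by
                rw [← ENNReal.ofReal_one]; exact ENNReal.ofReal_le_ofReal h1)
            _ = V := mul_one _
  have hneg : ∑' l, ENNReal.ofReal (jb l ^ s) * ENNReal.ofReal (env1 p u t1 t2 (-l)) ^ 2 =
      ∑' l, ENNReal.ofReal (jb l ^ s) * ENNReal.ofReal (env1 p u t1 t2 l) ^ 2 := by
    rw [← (Equiv.neg ℤ).tsum_eq (fun l => ENNReal.ofReal (jb l ^ s) * ENNReal.ofReal (env1 p u t1 t2 l) ^ 2)]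
    refine tsum_congr fun l => ?_
    simp only [Equiv.neg_apply, jb_neg]
  calc _ ≤ ∑' l, 4 * (ENNReal.ofReal (jb l ^ s) * ENNReal.ofReal (env1 p u t1 t2 l) ^ 2 +
        ENNReal.ofReal (jb l ^ s) * ENNReal.ofReal (env1 p u t1 t2 (-l)) ^ 2) := by
        refine ENNReal.tsum_le_tsum fun l => ?_
        unfold env
        rw [ENNReal.ofReal_add (env1_nonneg h12 l) (env1_nonneg h12 _), ← mul_add, mul_left_comm]
        exact mul_le_mul' le_rfl (ennreal_add_sq _ _)
    _ ≤ 4 * (4 * (nS s (u t1) + V) + 4 * (nS s (u t1) + V)) := by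
        rw [ENNReal.tsum_mul_left, ENNReal.tsum_add, hneg]
        exact mul_le_mul' le_rfl (add_le_add hone hone)
    _ = _ := by ring
end

lemma diff_bd (p κ : ℕ) (hp : 2 ≤ p) {L D : ℝ≥0∞} (hL : L ≠ ⊤) (hD : D ≠ ⊤) :
    ∃ K : ℝ≥0∞, K ≠ ⊤ ∧ ∀ u : ℝ → ℝ → ℂ, IsNLS p Set.univ u → ∀ t1 t2 N : ℝ, t1 ≤ t2 → t2 - t1 ≤ 1 →
      0 < N → (∀ τ ∈ Set.Icc t1 t2, nS 1 (u τ) ≤ L) →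
      (∀ τ ∈ Set.Icc t1 t2, nS (κ + 2) (u τ) ≤ D * ENNReal.ofReal (N ^ 2)) →
      ENNReal.ofReal |Hs (κ + 2) (u t2) - Hs (κ + 2) (u t1)| ≤
        K * ENNReal.ofReal (N ^ (2 * (κ:ℝ) / ((κ:ℝ) + 1))) := by
  set W : ℝ≥0∞ := 32 * (L + GG 1 p L * L) with hW
  set Wk : ℝ≥0∞ := 32 * (D + GG (κ + 2) p L * D) with hWk
  have hG1 := GG_ne_top 1 p hL
  have hGk := GG_ne_top (κ + 2) p hL
  have hWt : W ≠ ⊤ := by finiteness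
  have hWkt : Wk ≠ ⊤ := by finiteness
  have hcJ := cJ_ne_top
  have hcM := cM_ne_top (κ + 1) (2 * (p - 1))
  refine ⟨ENNReal.ofReal (2 * p + 5) * (cM (κ + 1) (2 * (p - 1)) *
    ((W + Wk) * (cJ * W) ^ p + (W + Wk) * W * (cJ * W) ^ (p - 1))), by finiteness, ?_⟩
  intro u hu t1 t2 N h12 h1 hN hL1 hLk
  set α : ℝ := 2 * (κ:ℝ) / ((κ:ℝ) + 1) with hα
  refine (Hs_diff hu (κ + 1) h12 h1).trans ?_
  rw [mul_assoc]
  refine mul_le_mul' le_rfl ?_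
  have hcard : Fintype.card (Ix p) = 4 + 2 * (p - 1) := by simp; omega
  have hm := multi (κ + 1) hcard (sg p) (sg_pm p) (fun l => ENNReal.ofReal (env p u t1 t2 l))
  refine hm.trans (le_trans ?_ (le_of_eq (mul_assoc _ _ _).symm))
  refine mul_le_mul' le_rfl ?_
  set A : ℤ → ℝ≥0∞ := fun l => ENNReal.ofReal (env p u t1 t2 l) with hA
  have t1m : t1 ∈ Set.Icc t1 t2 := ⟨le_rfl, h12⟩
  have hE1 : ∑' l, ENNReal.ofReal (jb l ^ 1) * A l ^ 2 ≤ W := by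
    refine (env_bound hu 1 h12 h1 (V := GG 1 p L * L) fun τ hτ =>
      (nl_GG 1 p (uSP hu τ) (hL1 τ hτ)).trans (mul_le_mul' le_rfl (hL1 τ hτ))).trans ?_
    exact mul_le_mul' le_rfl (add_le_add (hL1 t1 t1m) le_rfl)
  have hEk : ∑' l, ENNReal.ofReal (jb l ^ (κ + 2)) * A l ^ 2 ≤ Wk * ENNReal.ofReal (N ^ 2) := by
    refine (env_bound hu (κ + 2) h12 h1 (V := GG (κ + 2) p L * (D * ENNReal.ofReal (N ^ 2))) fun τ hτ =>
      (nl_GG (κ + 2) p (uSP hu τ) (hL1 τ hτ)).trans (mul_le_mul' le_rfl (hLk τ hτ))).trans ?_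
    refine (mul_le_mul' le_rfl (add_le_add (hLk t1 t1m) le_rfl)).trans (le_of_eq ?_)
    rw [hWk]; ring
  have hκ : (0:ℝ) < (κ:ℝ) + 1 := by positivity
  set ρ : ℝ := N ^ (2 / ((κ:ℝ) + 1)) with hρ
  have hρ0 : 0 < ρ := Real.rpow_pos_of_pos hN _
  have r1 : ρ ^ κ = N ^ α := by
    rw [hρ, ← Real.rpow_natCast, ← Real.rpow_mul hN.le, hα]
    congr 1; ring
  have r2 : ρ⁻¹ * N ^ 2 = N ^ α := by
    rw [hρ, ← Real.rpow_natCast N 2, ← Real.rpow_neg hN.le, ← Real.rpow_add hN, hα]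
    congr 1; push_cast; field_simp; ring
  have hX : ∑' n, (wt n ^ (κ + 1) * A n) ^ 2 ≤ (W + Wk) * ENNReal.ofReal (N ^ α) := by
    refine (interp_sum A κ hρ0).trans ?_
    calc _ ≤ ENNReal.ofReal (ρ ^ κ) * W + ENNReal.ofReal ρ⁻¹ * (Wk * ENNReal.ofReal (N ^ 2)) :=
          add_le_add (mul_le_mul' le_rfl hE1) (mul_le_mul' le_rfl hEk)
      _ = ENNReal.ofReal (ρ ^ κ) * W + Wk * (ENNReal.ofReal ρ⁻¹ * ENNReal.ofReal (N ^ 2)) := by ring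
      _ = _ := by
          rw [← ENNReal.ofReal_mul (by positivity), r1, r2]; ring
  have hA2 : (∑' l, A l) ^ 2 ≤ cJ * W := (wsum_sq_le A).trans (mul_le_mul' le_rfl hE1)
  have ha : (∑' l, A l) ^ (2 + 2 * (p - 1)) ≤ (cJ * W) ^ p := by
    have : 2 + 2 * (p - 1) = 2 * p := by omega
    rw [this, pow_mul]; exact pow_le_pow_left' hA2 p
  have hb : (∑' l, A l) ^ (2 * (p - 1)) ≤ (cJ * W) ^ (p - 1) := by
    rw [pow_mul]; exact pow_le_pow_left' hA2 _
  have hw1 := (wt_one_sum A).trans hE1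
  refine (add_le_add (mul_le_mul' hX ha) (mul_le_mul' (mul_le_mul' hX hw1) hb)).trans (le_of_eq ?_)
  ring

lemma HkSq_nonneg (k : ℕ) (f : ℝ → ℂ) : 0 ≤ HkSq k f := by
  unfold HkSq L2sq
  have h2 : (0:ℝ) ≤ 2 * Real.pi := by positivity
  exact add_nonneg (intervalIntegral.integral_nonneg h2 fun _ _ => by positivity)
    (intervalIntegral.integral_nonneg h2 fun _ _ => by positivity)

lemma HkNorm_sq (k : ℕ) (f : ℝ → ℂ) : HkNorm k f ^ 2 = HkSq k f := Real.sq_sqrt (HkSq_nonneg k f)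

lemma HkSq_eq_Hs {f : ℝ → ℂ} (hf : SP f) (k : ℕ) : HkSq k f = 2 * Real.pi * (Hs 0 f + Hs k f) := by
  rw [← (HkSq_hasSum hf k).tsum_eq, tsum_mul_left]
  congr 1
  unfold Hs
  rw [← (Hs_summable hf 0).tsum_add (Hs_summable hf k)]
  refine tsum_congr fun l => ?_
  ring

lemma HkSq_le_nS {f : ℝ → ℂ} (hf : SP f) (k : ℕ) : HkSq k f ≤ 4 * Real.pi * (nS k f).toReal := by
  rw [← (HkSq_hasSum hf k).tsum_eq, nS_toReal hf, ← tsum_mul_left]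
  refine Summable.tsum_le_tsum (fun l => ?_) (HkSq_hasSum hf k).summable ((nS_summable hf k).mul_left _)
  have h1 := lpow_le_jb l k
  have h2 : 1 ≤ jb l ^ k := one_le_pow₀ (jb_one_le l)
  have h3 : 0 ≤ 2 * Real.pi * ‖cf f l‖ ^ 2 := by positivity
  have h4 : 1 + (l:ℝ) ^ (2 * k) ≤ 2 * jb l ^ k := by linarith
  calc _ = (1 + (l:ℝ) ^ (2 * k)) * (2 * Real.pi * ‖cf f l‖ ^ 2) := by ring
    _ ≤ (2 * jb l ^ k) * (2 * Real.pi * ‖cf f l‖ ^ 2) := mul_le_mul_of_nonneg_right h4 h3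
    _ = _ := by ring

lemma nS_le_HkSq {f : ℝ → ℂ} (hf : SP f) (k : ℕ) : nS k f ≤ 2 ^ k * ENNReal.ofReal (HkSq k f) := by
  have e : (2:ℝ≥0∞) ^ k * ENNReal.ofReal (HkSq k f) = ENNReal.ofReal (2 ^ k * HkSq k f) := by
    rw [ENNReal.ofReal_mul (by positivity), ENNReal.ofReal_pow (by norm_num)]; norm_num
  rw [e, nS_eq hf]
  apply ENNReal.ofReal_le_ofReal
  rw [← (HkSq_hasSum hf k).tsum_eq, ← tsum_mul_left]
  refine Summable.tsum_le_tsum (fun l => ?_) (nS_summable hf k) ((HkSq_hasSum hf k).summable.mul_left _)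
  have hl : (0:ℝ) ≤ (l:ℝ) ^ (2 * k) := lpow_nonneg l k
  have h1 : jb l ^ k ≤ 2 ^ k * (1 + (l:ℝ) ^ (2 * k)) := by
    have := add_pow_le (zero_le_one (α := ℝ)) (sq_nonneg (l:ℝ)) k
    rw [one_pow, ← pow_mul] at this
    refine (show jb l ^ k = (1 + (l:ℝ) ^ 2) ^ k from rfl).le.trans (this.trans ?_)
    exact mul_le_mul_of_nonneg_right (pow_le_pow_right₀ (by norm_num) (by omega)) (by positivity)
  have h2 : 1 ≤ 2 * Real.pi := by have := Real.pi_gt_three; linarith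
  calc jb l ^ k * ‖cf f l‖ ^ 2 ≤ 2 ^ k * (1 + (l:ℝ) ^ (2 * k)) * ‖cf f l‖ ^ 2 :=
        mul_le_mul_of_nonneg_right h1 (by positivity)
    _ = 1 * (2 ^ k * ((1 + (l:ℝ) ^ (2 * k)) * ‖cf f l‖ ^ 2)) := by ring
    _ ≤ 2 * Real.pi * (2 ^ k * ((1 + (l:ℝ) ^ (2 * k)) * ‖cf f l‖ ^ 2)) :=
        mul_le_mul_of_nonneg_right h2 (by positivity)
    _ = _ := by ring

lemma main_bd (t₀ : ℝ) (κ p : ℕ) (hp : 2 ≤ p) (R : ℝ) :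
    ∃ C T : ℝ, 1 ≤ C ∧ 0 < T ∧ ∀ u : ℝ → ℝ → ℂ, IsNLS p Set.univ u → HkNorm 1 (u t₀) ≤ R →
      ∀ t ∈ Set.Ioo (t₀ - T) (t₀ + T),
        HkNorm (κ + 2) (u t) ≤ C * HkNorm (κ + 2) (u t₀) ∧
        |HkSq (κ + 2) (u t) - HkSq (κ + 2) (u t₀)| ≤
          C * HkNorm (κ + 2) (u t₀) ^ (2 * (κ:ℝ) / ((κ:ℝ) + 1)) := by
  set L : ℝ≥0∞ := LL p (2 ^ 1 * ENNReal.ofReal (R ^ 2)) with hLdef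
  have hL : L ≠ ⊤ := LL_ne_top p (by finiteness)
  set D : ℝ≥0∞ := 2 * 2 ^ (κ + 2) with hD
  have hDt : D ≠ ⊤ := by finiteness
  obtain ⟨K, hK, hKb⟩ := diff_bd p κ hp hL hDt
  obtain ⟨r, hr, hrs⟩ := exists_small (GG_ne_top (κ + 2) p hL)
  set T := min (1 / 2) (r / 2) with hT
  have hT1 : T ≤ 1 / 2 := min_le_left _ _
  have hT2 : T ≤ r / 2 := min_le_right _ _
  have hT0 : 0 < T := lt_min (by norm_num) (by positivity)
  set C1 : ℝ := Real.sqrt (4 * Real.pi * D.toReal) with hC1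
  have hC10 : 0 ≤ C1 := Real.sqrt_nonneg _
  have hK0 := ENNReal.toReal_nonneg (a := K)
  have hpi := Real.pi_pos
  refine ⟨1 + C1 + 2 * Real.pi * K.toReal, T, ?_, hT0, ?_⟩
  · have : 0 ≤ 2 * Real.pi * K.toReal := by positivity
    linarith
  intro u hu hR t ht
  set N := HkNorm (κ + 2) (u t₀) with hN
  have hN0 : 0 ≤ N := Real.sqrt_nonneg _
  set α : ℝ := 2 * (κ:ℝ) / ((κ:ℝ) + 1) with hα
  obtain ⟨Q, hQ, hQb⟩ := loc_bdd hu (k := κ + 2) (by omega) (t₀ - T) (t₀ + T)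
  have h0m : t₀ ∈ Set.Icc (t₀ - T) (t₀ + T) := ⟨by linarith, by linarith⟩
  have hn1 : nS 1 (u t₀) ≤ 2 ^ 1 * ENNReal.ofReal (R ^ 2) := by
    refine (nS_le_HkSq (uSP hu t₀) 1).trans (mul_le_mul' le_rfl (ENNReal.ofReal_le_ofReal ?_))
    rw [← HkNorm_sq]
    exact pow_le_pow_left₀ (Real.sqrt_nonneg _) hR 2
  have hL1 : ∀ τ ∈ Set.Icc (t₀ - T) (t₀ + T), nS 1 (u τ) ≤ L := fun τ hτ =>
    (H1_cons hu hQ (by omega) hQb hτ h0m).trans (LL_mono p hn1)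
  have hLk : ∀ τ ∈ Set.Icc (t₀ - T) (t₀ + T), nS (κ + 2) (u τ) ≤ D * ENNReal.ofReal (N ^ 2) := by
    intro τ hτ
    refine (growth hu hQ (by omega) (s := κ + 2) (by omega) hQb hL hL1 (hrs _ (by linarith)) hτ h0m).trans ?_
    rw [hD, mul_assoc, HkNorm_sq]
    exact mul_le_mul' le_rfl (nS_le_HkSq (uSP hu t₀) _)
  have htm : t ∈ Set.Icc (t₀ - T) (t₀ + T) := ⟨ht.1.le, ht.2.le⟩
  have hNt : HkNorm (κ + 2) (u t) ≤ C1 * N := by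
    unfold HkNorm
    have h1 := HkSq_le_nS (uSP hu t) (κ + 2)
    have h2 : (nS (κ + 2) (u t)).toReal ≤ D.toReal * N ^ 2 := by
      have := ENNReal.toReal_mono (by finiteness) (hLk t htm)
      rwa [ENNReal.toReal_mul, ENNReal.toReal_ofReal (by positivity)] at this
    apply Real.sqrt_le_iff.2
    refine ⟨by positivity, ?_⟩
    rw [mul_pow, hC1, Real.sq_sqrt (by positivity)]
    refine h1.trans ?_
    rw [mul_assoc (4 * Real.pi)]
    exact mul_le_mul_of_nonneg_left h2 (by positivity)
  have hC2 : 0 ≤ 2 * Real.pi * K.toReal := by positivity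
  refine ⟨hNt.trans (mul_le_mul_of_nonneg_right (by linarith) hN0), ?_⟩
  have hNα : 0 ≤ N ^ α := Real.rpow_nonneg hN0 _
  rcases hN0.eq_or_lt with hz | hpos
  · have e0 : HkNorm (κ + 2) (u t) = 0 := by
      have : 0 ≤ HkNorm (κ + 2) (u t) := Real.sqrt_nonneg _
      rw [← hz, mul_zero] at hNt; linarith
    rw [← HkNorm_sq, ← HkNorm_sq, e0, ← hN, ← hz]
    rw [← hz] at hNα
    simp only [ne_eq, OfNat.ofNat_ne_zero, not_false_eq_true, zero_pow, sub_self, abs_zero]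
    exact mul_nonneg (by linarith) hNα
  · have hm := mass_cons hu hQ (by omega) hQb htm h0m
    rw [HkSq_eq_Hs (uSP hu t), HkSq_eq_Hs (uSP hu t₀), hm]
    have hdiff : ENNReal.ofReal |Hs (κ + 2) (u t) - Hs (κ + 2) (u t₀)| ≤ K * ENNReal.ofReal (N ^ α) := by
      rcases le_total t t₀ with h | h
      · have sub : ∀ τ ∈ Set.Icc t t₀, τ ∈ Set.Icc (t₀ - T) (t₀ + T) := fun τ hτ =>
          ⟨htm.1.trans hτ.1, hτ.2.trans h0m.2⟩
        rw [abs_sub_comm]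
        exact hKb u hu t t₀ N h (by linarith [htm.1]) hpos (fun τ hτ => hL1 τ (sub τ hτ))
          (fun τ hτ => hLk τ (sub τ hτ))
      · have sub : ∀ τ ∈ Set.Icc t₀ t, τ ∈ Set.Icc (t₀ - T) (t₀ + T) := fun τ hτ =>
          ⟨h0m.1.trans hτ.1, hτ.2.trans htm.2⟩
        exact hKb u hu t₀ t N h (by linarith [htm.2]) hpos (fun τ hτ => hL1 τ (sub τ hτ))
          (fun τ hτ => hLk τ (sub τ hτ))
    have hd2 : |Hs (κ + 2) (u t) - Hs (κ + 2) (u t₀)| ≤ K.toReal * N ^ α := by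
      have := ENNReal.toReal_mono (by finiteness) hdiff
      rwa [ENNReal.toReal_mul, ENNReal.toReal_ofReal (by positivity), ENNReal.toReal_ofReal hNα] at this
    rw [← mul_sub, add_sub_add_left_eq_sub, abs_mul, abs_of_pos (by positivity : 0 < 2 * Real.pi)]
    calc _ ≤ 2 * Real.pi * (K.toReal * N ^ α) := mul_le_mul_of_nonneg_left hd2 (by positivity)
      _ = (2 * Real.pi * K.toReal) * N ^ α := by ring
      _ ≤ _ := mul_le_mul_of_nonneg_right (by linarith) hNα

/-- Theorem 1.1: modified energies and their almost-conservation bounds. -/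
theorem nls_modified_energy_bounds
    (t₀ : ℝ) (k p : ℕ) (hk : 2 ≤ k) (hp : 2 ≤ p) (R ε : ℝ) (hR : 0 < R) (hε : 0 < ε) :
    ∃ C T : ℝ, 0 < C ∧ 0 < T ∧ ∃ F : (ℝ → ℂ) → ℝ,
      (∀ u : ℝ → ℝ → ℂ, IsNLS p Set.univ u → HkNorm 1 (u t₀) ≤ R →
        (∀ t ∈ Set.Ioo (t₀ - T) (t₀ + T),
            |F (u t)| ≤ C * HkNorm k (u t₀) ^ ((2 * (k : ℝ) - 4) / ((k : ℝ) - 1))) ∧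
        (∀ t ∈ Set.Ioo (t₀ - T) (t₀ + T),
            HkSq k (u t) + F (u t) ≤ HkSq k (u t₀) + F (u t₀)
              + C * HkNorm k (u t₀) ^ ((2 * (k : ℝ) - 4) / ((k : ℝ) - 1) + ε))) ∧
      (¬ (3 ∣ k) → ∀ u : ℝ → ℝ → ℂ, IsNLS p Set.univ u → HkNorm 1 (u t₀) ≤ R →
        ∀ t ∈ Set.Ioo (t₀ - T) (t₀ + T),
          HkSq k (u t) + F (u t) ≤ HkSq k (u t₀) + F (u t₀)
            + C * HkNorm k (u t₀) ^ ((2 * (k : ℝ) - 4) / ((k : ℝ) - 1))) := by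
  obtain ⟨κ, rfl⟩ : ∃ κ, k = κ + 2 := ⟨k - 2, by omega⟩
  obtain ⟨C₁, T, hC₁, hT, hmain⟩ := main_bd t₀ κ p hp R
  have hexp : (2 * ((κ + 2 : ℕ) : ℝ) - 4) / (((κ + 2 : ℕ) : ℝ) - 1) = 2 * (κ:ℝ) / ((κ:ℝ) + 1) := by
    push_cast; congr 1 <;> ring
  rw [hexp]
  set α : ℝ := 2 * (κ:ℝ) / ((κ:ℝ) + 1) with hα
  have hκ : (0:ℝ) < (κ:ℝ) + 1 := by positivity
  have hα0 : 0 ≤ α := by positivity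
  have hα2 : α ≤ 2 := by
    rw [hα, div_le_iff₀ hκ]; linarith
  have hC0 : 0 < C₁ := by linarith
  set F : (ℝ → ℂ) → ℝ := fun v => if HkNorm (κ + 2) v ≤ 1 then -HkSq (κ + 2) v else 0 with hF
  have hFabs : ∀ v, |F v| ≤ HkNorm (κ + 2) v ^ α := by
    intro v
    have hv : 0 ≤ HkNorm (κ + 2) v := Real.sqrt_nonneg _
    by_cases h : HkNorm (κ + 2) v ≤ 1
    · simp only [hF, if_pos h]
      rw [abs_neg, abs_of_nonneg (HkSq_nonneg _ _), ← HkNorm_sq]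
      rcases hv.eq_or_lt with h0 | h0
      · rw [← h0]
        have := Real.rpow_nonneg (le_refl (0:ℝ)) α
        simpa using this
      · rw [← Real.rpow_natCast]
        exact Real.rpow_le_rpow_of_exponent_ge h0 h (by push_cast; exact hα2)
    · simp only [hF, if_neg h, abs_zero]
      exact Real.rpow_nonneg hv _
  have hCα : 0 < C₁ ^ α := Real.rpow_pos_of_pos hC0 _
  have hCε : 1 ≤ C₁ ^ ε := Real.one_le_rpow hC₁ hε.le
  have hFt : ∀ u : ℝ → ℝ → ℂ, IsNLS p Set.univ u → HkNorm 1 (u t₀) ≤ R →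
      ∀ t ∈ Set.Ioo (t₀ - T) (t₀ + T), |F (u t)| ≤ C₁ ^ α * HkNorm (κ + 2) (u t₀) ^ α := by
    intro u hu hR t ht
    have hN : 0 ≤ HkNorm (κ + 2) (u t₀) := Real.sqrt_nonneg _
    refine (hFabs _).trans ?_
    rw [← Real.mul_rpow hC0.le hN]
    exact Real.rpow_le_rpow (Real.sqrt_nonneg _) (hmain u hu hR t ht).1 hα0
  have hsharp : ∀ u : ℝ → ℝ → ℂ, IsNLS p Set.univ u → HkNorm 1 (u t₀) ≤ R →
      ∀ t ∈ Set.Ioo (t₀ - T) (t₀ + T),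
        HkSq (κ + 2) (u t) + F (u t) ≤ HkSq (κ + 2) (u t₀) + F (u t₀)
          + (C₁ + C₁ ^ α + 1) * HkNorm (κ + 2) (u t₀) ^ α := by
    intro u hu hR t ht
    have h1 := (abs_le.1 (hmain u hu hR t ht).2).2
    have h2 := (abs_le.1 (hFt u hu hR t ht)).2
    have h3 := (abs_le.1 (hFabs (u t₀))).1
    linarith
  have hCC : 0 < C₁ + C₁ ^ α + 1 := by linarith
  have hbig : C₁ + C₁ ^ α + 1 ≤ (C₁ + C₁ ^ α + 1) * C₁ ^ ε := le_mul_of_one_le_right hCC.le hCε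
  refine ⟨(C₁ + C₁ ^ α + 1) * C₁ ^ ε, T, by positivity, hT, F, ?_, ?_⟩
  · intro u hu hR
    have hN : 0 ≤ HkNorm (κ + 2) (u t₀) := Real.sqrt_nonneg _
    refine ⟨fun t ht => (hFt u hu hR t ht).trans
      (mul_le_mul_of_nonneg_right (by linarith) (Real.rpow_nonneg hN _)), fun t ht => ?_⟩
    by_cases hsmall : C₁ * HkNorm (κ + 2) (u t₀) ≤ 1
    · have hn0 : HkNorm (κ + 2) (u t₀) ≤ 1 := by
        have : HkNorm (κ + 2) (u t₀) ≤ C₁ * HkNorm (κ + 2) (u t₀) := le_mul_of_one_le_left hN hC₁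
        linarith
      have hnt : HkNorm (κ + 2) (u t) ≤ 1 := (hmain u hu hR t ht).1.trans hsmall
      simp only [hF, if_pos hn0, if_pos hnt, add_neg_cancel, zero_add]
      exact mul_nonneg (by positivity) (Real.rpow_nonneg hN _)
    · push Not at hsmall
      refine (hsharp u hu hR t ht).trans ?_
      have hNpos : 0 < HkNorm (κ + 2) (u t₀) := by
        rcases hN.eq_or_lt with h | h
        · rw [← h, mul_zero] at hsmall; linarith
        · exact h
      have h1 : 1 ≤ (C₁ * HkNorm (κ + 2) (u t₀)) ^ ε := Real.one_le_rpow hsmall.le hε.le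
      rw [Real.mul_rpow hC0.le hN] at h1
      have h2 : HkNorm (κ + 2) (u t₀) ^ α ≤ HkNorm (κ + 2) (u t₀) ^ α *
          (C₁ ^ ε * HkNorm (κ + 2) (u t₀) ^ ε) :=
        le_mul_of_one_le_right (Real.rpow_nonneg hN _) h1
      rw [Real.rpow_add hNpos]
      have h3 := mul_le_mul_of_nonneg_left h2 hCC.le
      have e : (C₁ + C₁ ^ α + 1) * C₁ ^ ε * (HkNorm (κ + 2) (u t₀) ^ α * HkNorm (κ + 2) (u t₀) ^ ε) =
        (C₁ + C₁ ^ α + 1) * (HkNorm (κ + 2) (u t₀) ^ α * (C₁ ^ ε * HkNorm (κ + 2) (u t₀) ^ ε)) := by ring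
      rw [e]
      linarith
  · intro _ u hu hR t ht
    have hN : 0 ≤ HkNorm (κ + 2) (u t₀) := Real.sqrt_nonneg _
    have h1 := hsharp u hu hR t ht
    have h2 := mul_le_mul_of_nonneg_right hbig (Real.rpow_nonneg hN α)
    linarith
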